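/- arXiv:2104.13222 — 8 statements merged into one kernel-verified Lean document; each statement's English description precedes it below -/
import Mathlib

section
/- Let F be a family of finite simple graphs and let K(F) denote the class of all finite F-free graphs. If there exists a countable F-free graph U such that every countable F-free graph admits a graph embedding into U, then K(F) has the weak amalgamation property. -/
open SimpleGraph

/-- `A` is contained in `G`: there is an injective graph homomorphism from `A` to `G`. -/
def Contains {V W : Type} (A : SimpleGraph V) (G : SimpleGraph W) : Prop :=
  ∃ f : A →g G, Function.Injective f

/-- The class of finite graphs satisfying `P` has the weak amalgamation property (WAP):
for every finite `A` with `P A` there are a finite `A'` with `P A'` and a graph embedding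
`i : A ↪g A'` such that any two finite extensions `B`, `C` of `A'` in the class
amalgamate over (the image of) `A`. -/
def GraphWAP (P : ∀ α : Type, SimpleGraph α → Prop) : Prop :=
  ∀ (α : Type) [Fintype α], ∀ A : SimpleGraph α, P α A →
    ∃ (β : Type) (_ : Fintype β) (A' : SimpleGraph β) (i : A ↪g A'), P β A' ∧
      ∀ (γ : Type) [Fintype γ], ∀ B : SimpleGraph γ, P γ B →
        ∀ (δ : Type) [Fintype δ], ∀ C : SimpleGraph δ, P δ C →
          ∀ (f : A' ↪g B) (g : A' ↪g C),
            ∃ (ε : Type) (_ : Fintype ε) (D : SimpleGraph ε), P ε D ∧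
              ∃ (f' : B ↪g D) (g' : C ↪g D),
                ∀ a : α, f' (f (i a)) = g' (g (i a))

namespace WapAux

/-- a finite graph coded on a finite set of natural numbers -/
abbrev St := Finset ℕ × SimpleGraph ℕ

def St.gr (p : St) : SimpleGraph {x : ℕ // x ∈ p.1} := p.2.comap Subtype.val

def Ext (p q : St) : Prop :=
  p.1 ⊆ q.1 ∧ ∀ a ∈ p.1, ∀ b ∈ p.1, (q.2.Adj a b ↔ p.2.Adj a b)

theorem Ext.refl (p : St) : Ext p p := ⟨fun _ h => h, fun _ _ _ _ => Iff.rfl⟩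

theorem Ext.trans {p q r : St} (h : Ext p q) (h' : Ext q r) : Ext p r :=
  ⟨h.1.trans h'.1, fun a ha b hb =>
    (h'.2 a (h.1 ha) b (h.1 hb)).trans (h.2 a ha b hb)⟩

theorem contains_of_emb {V X Y : Type} {A : SimpleGraph V} {G : SimpleGraph X}
    {H : SimpleGraph Y} (e : G ↪g H) (h : Contains A G) : Contains A H := by
  obtain ⟨f, hf⟩ := h
  exact ⟨e.toHom.comp f, e.injective.comp hf⟩

theorem code {γ : Type} [Fintype γ] (B : SimpleGraph γ) (φ : γ → ℕ)
    (hφ : Function.Injective φ) :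
    ∃ q : St, (∀ x, x ∈ q.1 ↔ ∃ c, φ c = x) ∧ (∀ c d, q.2.Adj (φ c) (φ d) ↔ B.Adj c d) ∧
      Nonempty (q.gr ↪g B) := by
  classical
  have hadj : ∀ c d, (B.map φ).Adj (φ c) (φ d) ↔ B.Adj c d := fun c d =>
    SimpleGraph.map_adj_apply (f := ⟨φ, hφ⟩)
  refine ⟨(Finset.univ.image φ, B.map φ), by simp, hadj, ?_⟩
  have hx : ∀ x : {x : ℕ // x ∈ Finset.univ.image φ}, ∃ c, φ c = x := by
    rintro ⟨x, hx⟩; simpa using hx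
  choose ψ hψ using hx
  refine ⟨⟨⟨ψ, ?_⟩, ?_⟩⟩
  · intro x y h
    apply Subtype.ext
    rw [← hψ x, ← hψ y, h]
  · intro x y
    change B.Adj (ψ x) (ψ y) ↔ (B.map φ).Adj x.1 y.1
    rw [← hadj, hψ, hψ]

/-- extension lemma -/
theorem extend (p : St) {γ : Type} [Fintype γ] (B : SimpleGraph γ) (f : p.gr ↪g B) :
    ∃ q : St, Ext p q ∧ Nonempty (q.gr ↪g B) ∧
      ∃ k : B ↪g q.gr, ∀ x, ((k (f x)).1 = x.1) := by
  classical
  obtain ⟨ε, hε⟩ := exists_injective_nat γ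
  obtain ⟨N, hN⟩ : ∃ N, ∀ x ∈ p.1, x < N :=
    ⟨p.1.sup id + 1, fun x hx => Nat.lt_succ_of_le (Finset.le_sup (f := id) hx)⟩
  let φ : γ → ℕ := fun c => if h : ∃ x, f x = c then (h.choose).1 else N + ε c
  have h1 : ∀ x, φ (f x) = x.1 := by
    intro x
    have h : ∃ y, f y = f x := ⟨x, rfl⟩
    have : φ (f x) = h.choose.1 := dif_pos h
    rw [this, f.injective h.choose_spec]
  have h2 : ∀ c, (¬ ∃ x, f x = c) → φ c = N + ε c := fun c h => dif_neg h
  have hφ : Function.Injective φ := by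
    intro c d h
    by_cases hc : ∃ x, f x = c <;> by_cases hd : ∃ x, f x = d
    · obtain ⟨x, rfl⟩ := hc
      obtain ⟨y, rfl⟩ := hd
      rw [h1, h1] at h
      rw [Subtype.ext h]
    · obtain ⟨x, rfl⟩ := hc
      rw [h1, h2 d hd] at h
      have := hN x.1 x.2
      omega
    · obtain ⟨x, rfl⟩ := hd
      rw [h1, h2 c hc] at h
      have := hN x.1 x.2
      omega
    · rw [h2 c hc, h2 d hd] at h
      exact hε (by omega)
  obtain ⟨q, hq1, hq2, hq3⟩ := code B φ hφ
  refine ⟨q, ⟨fun x hx => (hq1 x).2 ⟨f ⟨x, hx⟩, h1 _⟩, ?_⟩, hq3,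
    ⟨⟨fun c => ⟨φ c, (hq1 _).2 ⟨c, rfl⟩⟩, fun c d h => hφ (congrArg Subtype.val h)⟩, ?_⟩, h1⟩
  · intro a ha b hb
    have := hq2 (f ⟨a, ha⟩) (f ⟨b, hb⟩)
    rw [h1, h1] at this
    exact this.trans f.map_adj_iff
  · intro c d
    exact hq2 c d

end WapAux

open WapAux in
/-- If there is a countable `F`-free graph `U` into which every countable `F`-free graph
embeds, then the class of all finite `F`-free graphs has the weak amalgamation property. -/
theorem graph_wap_of_universal (ι : Type) (V : ι → Type) (hVfin : ∀ i, Finite (V i))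
    (F : ∀ i, SimpleGraph (V i))
    (W : Type) (hW : Countable W) (U : SimpleGraph W)
    (hUfree : ∀ i, ¬ Contains (F i) U)
    (hUniv : ∀ (X : Type) (N : SimpleGraph X), Countable X →
      (∀ i, ¬ Contains (F i) N) → Nonempty (N ↪g U)) :
    GraphWAP (fun _ G => ∀ i, ¬ Contains (F i) G) := by
  classical
  intro α _ A hA
  by_contra hcon
  push Not at hcon
  -- initial state
  obtain ⟨j, hj⟩ := exists_injective_nat α
  obtain ⟨p0, hp1, hp2, ⟨k0⟩⟩ := code A j hj
  have hjp : ∀ a, j a ∈ p0.1 := fun a => (hp1 _).2 ⟨a, rfl⟩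
  -- one step
  have step : ∀ (p : St) (h : α → W), Ext p0 p → (∀ i, ¬ Contains (F i) p.gr) →
      ∃ q : St, Ext p q ∧ (∀ i, ¬ Contains (F i) q.gr) ∧
        ¬ ∃ e : q.gr ↪g U, ∀ a (ha : j a ∈ q.1), e ⟨j a, ha⟩ = h a := by
    intro p h hp hfree
    let i : A ↪g p.gr := ⟨⟨fun a => ⟨j a, hp.1 (hjp a)⟩,
      fun a b hab => hj (congrArg Subtype.val hab)⟩, by
        intro a b
        exact (hp.2 _ (hjp a) _ (hjp b)).trans (hp2 a b)⟩
    obtain ⟨γ, _, B, hB, δ, _, C, hC, f, g, hfg⟩ := hcon _ inferInstance p.gr i hfree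
    have key : ∀ (γ : Type) [Fintype γ] (B : SimpleGraph γ), (∀ i, ¬ Contains (F i) B) →
        ∀ f : p.gr ↪g B, (¬ ∃ e : B ↪g U, ∀ a, e (f (i a)) = h a) →
        ∃ q : St, Ext p q ∧ (∀ i, ¬ Contains (F i) q.gr) ∧
        ¬ ∃ e : q.gr ↪g U, ∀ a (ha : j a ∈ q.1), e ⟨j a, ha⟩ = h a := by
      intro γ _ B hB f hno
      obtain ⟨q, hpq, ⟨r⟩, k, hk⟩ := extend p B f
      refine ⟨q, hpq, fun i hi => hB i (contains_of_emb r hi), ?_⟩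
      rintro ⟨e, he⟩
      refine hno ⟨e.comp k, fun a => ?_⟩
      rw [← he a (hpq.1 (hp.1 (hjp a)))]
      exact congrArg e (Subtype.ext (hk (i a)))
    by_cases hb : ∃ e : B ↪g U, ∀ a, e (f (i a)) = h a
    · by_cases hc : ∃ e : C ↪g U, ∀ a, e (g (i a)) = h a
      · exfalso
        obtain ⟨eB, heB⟩ := hb
        obtain ⟨eC, heC⟩ := hc
        let S : Set W := Set.range eB ∪ Set.range eC
        have hS : S.Finite := (Set.finite_range eB).union (Set.finite_range eC)
        let D : SimpleGraph S := U.comap Subtype.val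
        have dU : D ↪g U := ⟨⟨Subtype.val, Subtype.val_injective⟩, Iff.rfl⟩
        let f' : B ↪g D := ⟨⟨fun c => ⟨eB c, Or.inl ⟨c, rfl⟩⟩,
          fun c d hcd => eB.injective (congrArg Subtype.val hcd)⟩, eB.map_adj_iff⟩
        let g' : C ↪g D := ⟨⟨fun c => ⟨eC c, Or.inr ⟨c, rfl⟩⟩,
          fun c d hcd => eC.injective (congrArg Subtype.val hcd)⟩, eC.map_adj_iff⟩
        obtain ⟨a, ha⟩ := hfg S hS.fintype D
          (fun i hi => hUfree i (contains_of_emb dU hi)) f' g'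
        exact ha (Subtype.ext ((heB a).trans (heC a).symm))
      · exact key δ C hC g hc
    · exact key γ B hB f hb
  -- enumerate the maps
  obtain ⟨eA⟩ := hUniv α A inferInstance hA
  haveI : Nonempty (α → W) := ⟨eA⟩
  obtain ⟨en, hen⟩ := exists_surjective_nat (α → W)
  let Good := {p : St // Ext p0 p ∧ ∀ i, ¬ Contains (F i) p.gr}
  have step' : ∀ (n : ℕ) (p : Good), ∃ q : Good, Ext p.1 q.1 ∧
      ¬ ∃ e : q.1.gr ↪g U, ∀ a (ha : j a ∈ q.1.1), e ⟨j a, ha⟩ = en n a := by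
    intro n p
    obtain ⟨q, h1, h2, h3⟩ := step p.1 (en n) p.2.1 p.2.2
    exact ⟨⟨q, p.2.1.trans h1, h2⟩, h1, h3⟩
  choose nxt hn1 hn2 using step'
  let c : ℕ → Good := fun n => Nat.rec
    ⟨p0, Ext.refl p0, fun i hi => hA i (contains_of_emb k0 hi)⟩ (fun n p => nxt n p) n
  have hc : ∀ n, c (n + 1) = nxt n (c n) := fun n => rfl
  have mono : ∀ m n, m ≤ n → Ext (c m).1 (c n).1 := by
    intro m n hmn
    induction n, hmn using Nat.le_induction with
    | base => exact Ext.refl _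
    | succ n _ ih => rw [hc]; exact ih.trans (hn1 n (c n))
  -- the limit
  let X := {x : ℕ // ∃ n, x ∈ (c n).1.1}
  let N : SimpleGraph X :=
    { Adj := fun a b => ∃ n, a.1 ∈ (c n).1.1 ∧ b.1 ∈ (c n).1.1 ∧ (c n).1.2.Adj a.1 b.1
      symm := ⟨fun a b ⟨n, h1, h2, h3⟩ => ⟨n, h2, h1, h3.symm⟩⟩
      loopless := ⟨fun a ⟨n, _, _, h3⟩ => h3.ne rfl⟩ }
  have hN : ∀ n (a b : X), a.1 ∈ (c n).1.1 → b.1 ∈ (c n).1.1 →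
      (N.Adj a b ↔ (c n).1.2.Adj a.1 b.1) := by
    intro n a b ha hb
    constructor
    · rintro ⟨m, h1, h2, h3⟩
      rcases le_total m n with h | h
      · exact ((mono m n h).2 _ h1 _ h2).2 h3
      · exact ((mono n m h).2 _ ha _ hb).1 h3
    · exact fun h => ⟨n, ha, hb, h⟩
  have hNfree : ∀ i, ¬ Contains (F i) N := by
    rintro i ⟨f, hf⟩
    haveI := hVfin i
    haveI := Fintype.ofFinite (V i)
    choose lv hlv using fun v => (f v).2
    let M := Finset.univ.sup lv
    have hM : ∀ v, (f v).1 ∈ (c M).1.1 := fun v =>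
      (mono (lv v) M (Finset.le_sup (Finset.mem_univ v))).1 (hlv v)
    refine (c M).2.2 i ⟨⟨fun v => ⟨(f v).1, hM v⟩, ?_⟩, ?_⟩
    · intro a b hab
      exact (hN M _ _ (hM a) (hM b)).1 (f.map_adj hab)
    · intro a b hab
      exact hf (Subtype.ext (congrArg (fun z => z.1) hab))
  obtain ⟨e⟩ := hUniv X N inferInstance hNfree
  obtain ⟨n, hn⟩ := hen (fun a => e ⟨j a, 0, hjp a⟩)
  let r : (c (n + 1)).1.gr ↪g N := ⟨⟨fun x => ⟨x.1, n + 1, x.2⟩,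
    fun x y hxy => Subtype.ext (congrArg (fun z => z.1) hxy)⟩, by
      intro x y
      exact hN (n + 1) _ _ x.2 y.2⟩
  refine hn2 n (c n) ⟨e.comp r, fun a ha => ?_⟩
  rw [hn]
  rfl
end

section
/- Let H be the windmill graph Wd(3,3), the graph on 7 vertices consisting of three triangles all sharing exactly one common vertex. Then the class K(H) of all finite H-free graphs has the weak amalgamation property. -/
open SimpleGraph

/-- The windmill graph `Wd(3,3)`: three triangles sharing the common vertex `0`,
with triangles `{0,1,2}`, `{0,3,4}`, `{0,5,6}`. -/
def windmill : SimpleGraph (Fin 7) :=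
  SimpleGraph.fromRel fun a b =>
    a = 0 ∨ (a = 1 ∧ b = 2) ∨ (a = 3 ∧ b = 4) ∨ (a = 5 ∧ b = 6)

namespace WindmillAux

/-- `n` triangles at `c`, otherwise disjoint. -/
def IsFan {V : Type} (G : SimpleGraph V) (c : V) (n : ℕ) (x y : Fin n → V) : Prop :=
  (∀ i, G.Adj c (x i) ∧ G.Adj c (y i) ∧ G.Adj (x i) (y i)) ∧
    ∀ i j, i ≠ j → x i ≠ x j ∧ x i ≠ y j ∧ y i ≠ y j

theorem contains_of_fan {V : Type} {G : SimpleGraph V} {c : V} {x y : Fin 3 → V}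
    (h : IsFan G c 3 x y) : Contains windmill G := by
  obtain ⟨h1, h2⟩ := h
  have a0 := h1 0
  have a1 := h1 1
  have a2 := h1 2
  have b01 := h2 0 1 (by decide)
  have b02 := h2 0 2 (by decide)
  have b12 := h2 1 2 (by decide)
  have b10 := h2 1 0 (by decide)
  have b20 := h2 2 0 (by decide)
  have b21 := h2 2 1 (by decide)
  have key : ∀ a b : Fin 7, windmill.Adj a b →
      G.Adj (![c, x 0, y 0, x 1, y 1, x 2, y 2] a) (![c, x 0, y 0, x 1, y 1, x 2, y 2] b) := by
    intro a b hab
    simp only [windmill, SimpleGraph.fromRel_adj] at hab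
    fin_cases a <;> fin_cases b <;> simp at hab ⊢ <;>
      simp [a0, a1, a2, G.adj_comm]
  refine ⟨⟨![c, x 0, y 0, x 1, y 1, x 2, y 2], fun {a b} => key a b⟩, ?_⟩
  intro a b hab
  change (![c, x 0, y 0, x 1, y 1, x 2, y 2] a) = (![c, x 0, y 0, x 1, y 1, x 2, y 2] b) at hab
  have := a0.1.ne
  have := a0.2.1.ne
  have := a0.2.2.ne
  have := a1.1.ne
  have := a1.2.1.ne
  have := a1.2.2.ne
  have := a2.1.ne
  have := a2.2.1.ne
  have := a2.2.2.ne
  fin_cases a <;> fin_cases b <;> simp at hab ⊢ <;> grind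

theorem fan_of_contains {V : Type} {G : SimpleGraph V} (h : Contains windmill G) :
    ∃ c x y, IsFan G c 3 x y := by
  obtain ⟨f, hf⟩ := h
  refine ⟨f 0, ![f 1, f 3, f 5], ![f 2, f 4, f 6], ?_, ?_⟩
  · intro i
    fin_cases i <;> refine ⟨f.map_rel ?_, f.map_rel ?_, f.map_rel ?_⟩ <;>
      simp [windmill, SimpleGraph.fromRel_adj]
  · intro i j hij
    fin_cases i <;> fin_cases j <;> simp [hf.eq_iff] at hij ⊢

/-- A triangle at `c` inside the core, or a heavy edge at `c`. -/
def Item {W : Type} (E F : SimpleGraph W) (c s : W) : Option W → Prop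
  | none => F.Adj c s
  | some t => E.Adj c s ∧ E.Adj c t ∧ E.Adj s t

def IsPFan {W : Type} (E F : SimpleGraph W) (c : W) (n : ℕ) (x : Fin n → W)
    (y : Fin n → Option W) : Prop :=
  (∀ i, Item E F c (x i) (y i)) ∧
    ∀ i j, i ≠ j → x i ≠ x j ∧ some (x i) ≠ y j ∧ ∀ t, y i = some t → y j ≠ some t

def PFan {W : Type} (E F : SimpleGraph W) (c : W) (n : ℕ) : Prop :=
  ∃ x y, IsPFan E F c n x y

def Valid {W : Type} (E F : SimpleGraph W) : Prop := ∀ c, ¬ PFan E F c 3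

theorem PFan.mono {W : Type} {E F F' : SimpleGraph W} (h : F ≤ F') {c : W} {n : ℕ}
    (hp : PFan E F c n) : PFan E F' c n := by
  obtain ⟨x, y, h1, h2⟩ := hp
  refine ⟨x, y, fun i => ?_, h2⟩
  have := h1 i
  cases hy : y i with
  | none => rw [hy] at this; exact h this
  | some t => rw [hy] at this; exact this

theorem PFan.drop {W : Type} {E F : SimpleGraph W} {c : W} {n m : ℕ} (hm : m ≤ n)
    (hp : PFan E F c n) : PFan E F c m := by
  obtain ⟨x, y, h1, h2⟩ := hp
  refine ⟨fun i => x (Fin.castLE hm i), fun i => y (Fin.castLE hm i), fun i => h1 _,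
    fun i j hij => h2 _ _ ?_⟩
  intro h
  exact hij (Fin.castLE_injective hm h)

theorem PFan.zero {W : Type} (E F : SimpleGraph W) (c : W) : PFan E F c 0 :=
  ⟨Fin.elim0, Fin.elim0, fun i => i.elim0, fun i => i.elim0⟩

/-- From real fans to abstract ones. -/
theorem pfan_of_fan {W V : Type} {E F : SimpleGraph W} {G : SimpleGraph V} (j : W → V)
    {c : W} {n : ℕ} {x y : Fin n → V} (h : IsFan G (j c) n x y)
    (hi : ∀ i, ∃ s o, Item E F c s o ∧ (j s = x i ∨ j s = y i) ∧
      ∀ t, o = some t → (j t = x i ∨ j t = y i)) : PFan E F c n := by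
  choose s o h1 h2 h3 using hi
  refine ⟨s, o, h1, fun i k hik => ?_⟩
  have a1 := h.2 i k hik
  have a2 := h.2 k i hik.symm
  have b1 := h2 i
  have b2 := h2 k
  have c1 := h3 i
  have c2 := h3 k
  refine ⟨?_, ?_, ?_⟩
  · intro e
    grind
  · intro e
    have := c2 _ e.symm
    grind
  · intro t e e'
    have := c1 _ e
    have := c2 _ e'
    grind

/-- From abstract fans to real ones. -/
theorem fan_of_pfan {W V : Type} {E F : SimpleGraph W} {G : SimpleGraph V} (hFE : F ≤ E)
    (j : W → V) (hj : Function.Injective j)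
    (hE : ∀ u v, E.Adj u v → G.Adj (j u) (j v)) {c : W} (z : W → V)
    (hz : ∀ s, F.Adj c s → (∀ w, j w ≠ z s) ∧ G.Adj (j c) (z s) ∧ G.Adj (j s) (z s))
    (hzi : ∀ s s', F.Adj c s → F.Adj c s' → z s = z s' → s = s')
    {n : ℕ} (h : PFan E F c n) : ∃ x y, IsFan G (j c) n x y ∧
      (∀ i, ∃ w, j w = x i) ∧ (∀ i, (∃ w, j w = y i) ∨ ∃ s, F.Adj c s ∧ z s = y i) := by
  obtain ⟨x, y, h1, h2⟩ := h
  refine ⟨fun i => j (x i), fun i => (y i).elim (z (x i)) j, ⟨?_, ?_⟩, fun i => ⟨_, rfl⟩, ?_⟩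
  · intro i
    have := h1 i
    dsimp only
    cases hy : y i with
    | none =>
      rw [hy] at this
      exact ⟨hE _ _ (hFE this), (hz _ this).2.1, (hz _ this).2.2⟩
    | some t =>
      rw [hy] at this
      exact ⟨hE _ _ this.1, hE _ _ this.2.1, hE _ _ this.2.2⟩
  · intro i k hik
    have a := h2 i k hik
    have i1 := h1 i
    have i2 := h1 k
    dsimp only
    refine ⟨fun e => a.1 (hj e), ?_, ?_⟩
    · cases hk : y k with
      | none =>
        rw [hk] at i2
        exact (hz _ i2).1 _
      | some t =>
        intro e
        have := hj e
        exact a.2.1 (by rw [hk, this])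
    · cases hk : y k with
      | none =>
        rw [hk] at i2
        cases hi : y i with
        | none =>
          rw [hi] at i1
          intro e
          exact a.1 (hzi _ _ i1 i2 e)
        | some t =>
          exact (hz _ i2).1 _
      | some t =>
        cases hi : y i with
        | none =>
          rw [hi] at i1
          exact fun e => (hz _ i1).1 _ e.symm
        | some t' =>
          intro e
          have := hj e
          exact a.2.2 t' hi (by rw [hk, this])
  · intro i
    have := h1 i
    dsimp only
    cases hy : y i with
    | none =>
      rw [hy] at this
      exact Or.inr ⟨_, this, rfl⟩
    | some t => exact Or.inl ⟨_, rfl⟩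

/-! ### Doubling -/

def dblE {W : Type} (E : SimpleGraph W) : SimpleGraph (W × Bool) where
  Adj p q := (p.2 = q.2 ∧ E.Adj p.1 q.1) ∨ (p.1 = q.1 ∧ p.2 ≠ q.2)
  symm := ⟨by
    rintro p q (⟨h, h'⟩ | ⟨h, h'⟩)
    · exact Or.inl ⟨h.symm, h'.symm⟩
    · exact Or.inr ⟨h.symm, h'.symm⟩⟩
  loopless := ⟨by
    rintro p (⟨-, h⟩ | ⟨-, h⟩)
    · exact E.loopless.irrefl _ h
    · exact h rfl⟩

def dblF {W : Type} (E F : SimpleGraph W) : SimpleGraph (W × Bool) where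
  Adj p q := (p.2 = q.2 ∧ F.Adj p.1 q.1) ∨ (p.1 = q.1 ∧ p.2 ≠ q.2 ∧ ¬ PFan E F p.1 2)
  symm := ⟨by
    rintro p q (⟨h, h'⟩ | ⟨h, h', h''⟩)
    · exact Or.inl ⟨h.symm, h'.symm⟩
    · exact Or.inr ⟨h.symm, h'.symm, h ▸ h''⟩⟩
  loopless := ⟨by
    rintro p (⟨-, h⟩ | ⟨-, h, -⟩)
    · exact F.loopless.irrefl _ h
    · exact h rfl⟩

theorem dbl_le {W : Type} {E F : SimpleGraph W} (h : F ≤ E) : dblF E F ≤ dblE E := by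
  rintro p q (⟨h1, h'⟩ | ⟨h1, h', h''⟩)
  · exact Or.inl ⟨h1, h h'⟩
  · exact Or.inr ⟨h1, h'⟩

def dblEmb {W : Type} (E : SimpleGraph W) : E ↪g dblE E where
  toFun w := (w, false)
  inj' := fun a b h => (Prod.mk.inj h).1
  map_rel_iff' := by
    intro a b
    change (dblE E).Adj (a, false) (b, false) ↔ _
    simp [dblE]

theorem dbl_keep {W : Type} {E F : SimpleGraph W} {c : W} {n : ℕ} (b : Bool)
    (h : PFan E F c n) : PFan (dblE E) (dblF E F) (c, b) n := by
  obtain ⟨x, y, h1, h2⟩ := h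
  refine ⟨fun i => (x i, b), fun i => (y i).map (fun t => (t, b)), ?_, ?_⟩
  · intro i
    have := h1 i
    dsimp only
    cases hy : y i with
    | none =>
      rw [hy] at this
      exact Or.inl ⟨rfl, this⟩
    | some t =>
      rw [hy] at this
      exact ⟨Or.inl ⟨rfl, this.1⟩, Or.inl ⟨rfl, this.2.1⟩, Or.inl ⟨rfl, this.2.2⟩⟩
  · intro i j hij
    have := h2 i j hij
    refine ⟨fun e => this.1 (Prod.mk.inj e).1, ?_, ?_⟩
    · cases hy : y j <;> simp_all
    · intro t hi hj
      cases hy : y j <;> cases hy' : y i <;> simp_all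
      grind

theorem dbl_add {W : Type} {E F : SimpleGraph W} {c : W} {n : ℕ} (b : Bool)
    (h : PFan E F c n) (h2' : ¬ PFan E F c 2) : PFan (dblE E) (dblF E F) (c, b) (n + 1) := by
  obtain ⟨x, y, h1, h2⟩ := h
  have hE : ∀ i, x i ≠ c := by
    intro i e
    have := h1 i
    cases hy : y i with
    | none =>
      rw [hy] at this
      exact this.ne e.symm
    | some t =>
      rw [hy] at this
      exact this.1.ne e.symm
  refine ⟨Fin.cons (c, !b) (fun i => (x i, b)),
    Fin.cons none (fun i => (y i).map (fun t => (t, b))), ?_, ?_⟩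
  · intro i
    refine Fin.cases ?_ (fun i => ?_) i
    · exact Or.inr ⟨rfl, by simp, h2'⟩
    have := h1 i
    simp only [Fin.cons_succ]
    cases hy : y i with
    | none =>
      rw [hy] at this
      exact Or.inl ⟨rfl, this⟩
    | some t =>
      rw [hy] at this
      exact ⟨Or.inl ⟨rfl, this.1⟩, Or.inl ⟨rfl, this.2.1⟩, Or.inl ⟨rfl, this.2.2⟩⟩
  · intro i j
    refine Fin.cases ?_ (fun i => ?_) i <;> refine Fin.cases ?_ (fun j => ?_) j
    · simp
    · intro _
      simp only [Fin.cons_succ, Fin.cons_zero]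
      refine ⟨by simp, ?_, by simp⟩
      cases hy : y j <;> simp
    · intro _
      simp
    · intro hij
      simp only [Fin.cons_succ]
      have := h2 i j (fun e => hij (by rw [e]))
      refine ⟨fun e => this.1 (Prod.mk.inj e).1, ?_, ?_⟩
      · cases hy : y j <;> simp_all
      · intro t hi hj
        cases hy : y j <;> cases hy' : y i <;> simp_all
        grind

theorem dbl_proj {W : Type} {E F : SimpleGraph W} {c : W} {b : Bool} {n : ℕ}
    {x : Fin n → W × Bool} {y : Fin n → Option (W × Bool)}
    (h : IsPFan (dblE E) (dblF E F) (c, b) n x y) (hx : ∀ i, x i ≠ (c, !b)) :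
    PFan E F c n := by
  obtain ⟨h1, h2⟩ := h
  have key : ∀ i, Item E F c (x i).1 ((y i).map Prod.fst) ∧ (x i).2 = b ∧
      ∀ t, y i = some t → t.2 = b := by
    intro i
    have a := h1 i
    have hxi := hx i
    cases hy : y i with
    | none =>
      rw [hy] at a
      rcases a with ⟨e, a⟩ | ⟨e, e', -⟩
      · exact ⟨a, e.symm, by simp⟩
      · exfalso
        apply hxi
        ext
        · exact e.symm
        · cases b <;> simp_all
    | some t =>
      rw [hy] at a
      obtain ⟨a1, a2, a3⟩ := a
      have hb : (x i).2 = b := by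
        rcases a1 with ⟨e, _⟩ | ⟨e, e'⟩
        · exact e.symm
        · exfalso
          apply hxi
          ext
          · exact e.symm
          · cases b <;> simp_all
      have a1' : E.Adj c (x i).1 := by
        rcases a1 with ⟨e, h⟩ | ⟨e, e'⟩
        · exact h
        · exact absurd hb.symm e'
      rcases a2 with ⟨e2, a2⟩ | ⟨e2, e2'⟩
      · refine ⟨⟨a1', a2, ?_⟩, hb, ?_⟩
        · rcases a3 with ⟨_, a3⟩ | ⟨_, e3⟩
          · exact a3
          · exact absurd (hb.trans e2) e3
        · rintro _ ⟨⟩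
          exact e2.symm
      · exfalso
        rcases a3 with ⟨e3, a3⟩ | ⟨e3, e3'⟩
        · exact e2' (hb.symm.trans e3)
        · exact a1'.ne (e2.trans e3.symm)
  refine ⟨fun i => (x i).1, fun i => (y i).map Prod.fst, fun i => (key i).1, ?_⟩
  intro i j hij
  have a := h2 i j hij
  obtain ⟨-, k2, k3⟩ := key i
  obtain ⟨-, l2, l3⟩ := key j
  refine ⟨fun e => a.1 (Prod.ext e (k2.trans l2.symm)), ?_, ?_⟩
  · intro e
    cases hy : y j with
    | none => simp [hy] at e
    | some t =>
      simp [hy] at e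
      exact a.2.1 (by rw [hy]; exact congrArg some (Prod.ext e (k2.trans (l3 _ hy).symm)))
  · intro t e e'
    cases hy : y j with
    | none => simp [hy] at e'
    | some u =>
      cases hy' : y i with
      | none => simp [hy'] at e
      | some u' =>
        simp [hy] at e'
        simp [hy'] at e
        refine a.2.2 u' hy' ?_
        rw [hy]
        exact congrArg some (Prod.ext (e'.trans e.symm) ((l3 _ hy).trans (k3 _ hy').symm))

theorem dbl_valid {W : Type} {E F : SimpleGraph W} (hv : Valid E F) :
    Valid (dblE E) (dblF E F) := by
  rintro ⟨c, b⟩ ⟨x, y, h⟩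
  by_cases hx : ∃ i, x i = (c, !b)
  · obtain ⟨i, hi⟩ := hx
    have h2 : ¬ PFan E F c 2 := by
      have a := h.1 i
      cases hy : y i with
      | none =>
        rw [hy, hi] at a
        rcases a with ⟨e, _⟩ | ⟨_, _, a⟩
        · simp at e
        · exact a
      | some t =>
        rw [hy, hi] at a
        obtain ⟨-, a2, a3⟩ := a
        exfalso
        rcases a2 with ⟨e2, a2⟩ | ⟨e2, a2⟩ <;> rcases a3 with ⟨e3, a3⟩ | ⟨e3, a3⟩
        · simp at e2 e3
          cases b <;> simp_all
        · exact a2.ne e3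
        · exact a3.ne e2
        · simp at a2 a3
          cases b <;> simp_all
    apply h2
    refine dbl_proj (b := b) (x := fun k => x (i.succAbove k)) (y := fun k => y (i.succAbove k))
      ⟨fun k => h.1 _, fun k l hkl => h.2 _ _ ?_⟩ ?_
    · exact fun e => hkl (Fin.succAbove_right_injective e)
    · intro k e
      exact (h.2 _ _ (Fin.succAbove_ne i k)).1 (e.trans hi.symm)
  · push Not at hx
    exact hv c (dbl_proj h hx)

/-- Every finite windmill-free graph sits in a saturated valid core. -/
theorem exists_core {α : Type} [Fintype α] (A : SimpleGraph α) (hA : ¬ Contains windmill A) :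
    ∃ (W : Type) (_ : Fintype W) (E F : SimpleGraph W) (_ : A ↪g E), F ≤ E ∧ Valid E F ∧
      ∀ c, PFan E F c 2 := by
  have hv0 : Valid A ⊥ := by
    rintro c h
    obtain ⟨x, y, h, -⟩ := fan_of_pfan (E := A) (F := ⊥) (G := A) bot_le id Function.injective_id
      (fun _ _ h => h) id (by simp) (by simp) h
    exact hA (contains_of_fan h)
  have one : ∀ c, PFan (dblE A) (dblF A ⊥) c 1 := by
    rintro ⟨c, b⟩
    by_cases h : PFan A ⊥ c 2
    · exact (dbl_keep b h).drop (by norm_num)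
    · exact dbl_add b (PFan.zero _ _ _) h
  refine ⟨(α × Bool) × Bool, inferInstance, dblE (dblE A), dblF (dblE A) (dblF A ⊥),
    (dblEmb _).comp (dblEmb A), dbl_le (dbl_le bot_le), dbl_valid (dbl_valid hv0), ?_⟩
  rintro ⟨c, b⟩
  by_cases h : PFan (dblE A) (dblF A ⊥) c 2
  · exact dbl_keep b h
  · exact dbl_add b (one c) h

theorem exists_max_core {α : Type} [Fintype α] (A : SimpleGraph α)
    (hA : ¬ Contains windmill A) :
    ∃ (W : Type) (_ : Fintype W) (E F : SimpleGraph W) (_ : A ↪g E), F ≤ E ∧ Valid E F ∧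
      (∀ c, PFan E F c 2) ∧ ∀ F', F ≤ F' → F' ≤ E → Valid E F' → F' = F := by
  obtain ⟨W, _, E, F, i, h1, h2, h3⟩ := exists_core A hA
  obtain ⟨F', hF, hm⟩ := Set.Finite.exists_le_maximal
    (Set.toFinite {F' : SimpleGraph W | F' ≤ E ∧ Valid E F'}) (a := F) ⟨h1, h2⟩
  refine ⟨W, ‹_›, E, F', i, hm.prop.1, hm.prop.2, fun c => (h3 c).mono hF, ?_⟩
  intro F'' a b c
  exact le_antisymm (hm.le_of_ge ⟨b, c⟩ a) a

/-! ### The hat graph -/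

def hat {W : Type} (E F : SimpleGraph W) : SimpleGraph (W ⊕ (W × W × Fin 3)) where
  Adj
    | Sum.inl u, Sum.inl v => E.Adj u v
    | Sum.inl u, Sum.inr z => F.Adj z.1 z.2.1 ∧ (u = z.1 ∨ u = z.2.1)
    | Sum.inr z, Sum.inl u => F.Adj z.1 z.2.1 ∧ (u = z.1 ∨ u = z.2.1)
    | Sum.inr _, Sum.inr _ => False
  symm := ⟨by
    rintro (u | z) (v | z') h
    · exact E.symm.symm _ _ h
    · exact h
    · exact h
    · exact h⟩
  loopless := ⟨by
    rintro (u | z) h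
    · exact E.loopless.irrefl _ h
    · exact h⟩

def hatEmb {W : Type} (E F : SimpleGraph W) : E ↪g hat E F where
  toFun := Sum.inl
  inj' := Sum.inl_injective
  map_rel_iff' := Iff.rfl

/-- Every triangle of `G` at a core vertex is controlled. -/
def Cert {W V : Type} (E F : SimpleGraph W) (G : SimpleGraph V) (j : W → V) : Prop :=
  ∀ c x y, G.Adj (j c) x → G.Adj (j c) y → G.Adj x y →
    ∃ s o, Item E F c s o ∧ (j s = x ∨ j s = y) ∧ ∀ t, o = some t → (j t = x ∨ j t = y)

theorem hat_cert {W : Type} (E F : SimpleGraph W) : Cert E F (hat E F) Sum.inl := by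
  have aux : ∀ (c u : W) (z : W × W × Fin 3), E.Adj c u → (hat E F).Adj (Sum.inl c) (Sum.inr z) →
      (hat E F).Adj (Sum.inl u) (Sum.inr z) → F.Adj c u := by
    rintro c u z h ⟨h1, h2⟩ ⟨-, h3⟩
    have := h.ne
    rcases h2 with h2 | h2 <;> rcases h3 with h3 | h3
    · exact absurd (h2.trans h3.symm) this
    · rw [h2, h3]; exact h1
    · rw [h2, h3]; exact h1.symm
    · exact absurd (h2.trans h3.symm) this
  rintro c (x | z) (y | z') h1 h2 h3
  · refine ⟨x, some y, ⟨h1, h2, h3⟩, by simp, by simp⟩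
  · exact ⟨x, none, aux c x z' h1 h2 h3, by simp, by simp⟩
  · exact ⟨y, none, aux c y z h2 h1 h3.symm, by simp, by simp⟩
  · exact h3.elim

theorem hat_free {W : Type} {E F : SimpleGraph W} (hv : Valid E F) :
    ¬ Contains windmill (hat E F) := by
  intro h
  obtain ⟨c, x, y, h⟩ := fan_of_contains h
  rcases c with c | z
  · exact hv c (pfan_of_fan Sum.inl h fun i => hat_cert E F c _ _ (h.1 i).1 (h.1 i).2.1 (h.1 i).2.2)
  · have key : ∀ p, (hat E F).Adj (Sum.inr z) p → p = Sum.inl z.1 ∨ p = Sum.inl z.2.1 := by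
      rintro (p | p) hp
      · rcases hp with ⟨-, rfl | rfl⟩ <;> simp
      · exact hp.elim
    have a0 := key _ (h.1 0).1
    have a1 := key _ (h.1 1).1
    have a2 := key _ (h.1 2).1
    have b01 := (h.2 0 1 (by decide)).1
    have b02 := (h.2 0 2 (by decide)).1
    have b12 := (h.2 1 2 (by decide)).1
    grind

theorem ext_cert {W V : Type} {E F : SimpleGraph W} {G : SimpleGraph V} (hFE : F ≤ E)
    (hs : ∀ c, PFan E F c 2)
    (hm : ∀ F', F ≤ F' → F' ≤ E → Valid E F' → F' = F)
    (hG : ¬ Contains windmill G) (f : hat E F ↪g G) :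
    Cert E F G (fun w => f (Sum.inl w)) := by
  classical
  have hj : Function.Injective (fun w => f (Sum.inl w)) :=
    fun a b h => Sum.inl_injective (f.injective h)
  have hE : ∀ u v, E.Adj u v → G.Adj (f (Sum.inl u)) (f (Sum.inl v)) :=
    fun u v h => f.map_rel_iff.2 h
  -- a private vertex avoiding two given vertices
  have hpriv : ∀ x y : V, ∀ c s : W, ∃ k : Fin 3, f (Sum.inr (c, s, k)) ≠ x ∧
      f (Sum.inr (c, s, k)) ≠ y := by
    intro x y c s
    by_contra! hcon
    have e : ∀ k l : Fin 3, f (Sum.inr (c, s, k)) = f (Sum.inr (c, s, l)) → k = l := by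
      intro k l h
      have := f.injective h
      simpa using this
    have n01 : f (Sum.inr (c, s, 0)) ≠ f (Sum.inr (c, s, 1)) := fun h => absurd (e 0 1 h) (by decide)
    have n02 : f (Sum.inr (c, s, 0)) ≠ f (Sum.inr (c, s, 2)) := fun h => absurd (e 0 2 h) (by decide)
    have n12 : f (Sum.inr (c, s, 1)) ≠ f (Sum.inr (c, s, 2)) := fun h => absurd (e 1 2 h) (by decide)
    rcases or_iff_not_imp_left.2 (hcon 0) with h0 | h0 <;>
      rcases or_iff_not_imp_left.2 (hcon 1) with h1 | h1 <;>
      rcases or_iff_not_imp_left.2 (hcon 2) with h2 | h2 <;>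
      first
      | exact n01 (h0.trans h1.symm)
      | exact n02 (h0.trans h2.symm)
      | exact n12 (h1.trans h2.symm)
  -- heavy edges
  have heavy : ∀ c s x, E.Adj c s → (∀ w, f (Sum.inl w) ≠ x) → G.Adj (f (Sum.inl c)) x →
      G.Adj (f (Sum.inl s)) x → F.Adj c s := by
    intro c s x hcs hx h1 h2
    have hle : F ⊔ SimpleGraph.edge c s ≤ E := by
      refine sup_le hFE ?_
      intro a b hab
      rw [SimpleGraph.edge_adj] at hab
      rcases hab.1 with ⟨rfl, rfl⟩ | ⟨rfl, rfl⟩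
      · exact hcs
      · exact hcs.symm
    have hval : Valid E (F ⊔ SimpleGraph.edge c s) := by
      intro d hd
      choose k hk using hpriv x x
      refine Exists.elim (fan_of_pfan (G := G) hle (fun w => f (Sum.inl w)) hj hE
        (fun t => if s(d, t) = s(c, s) then x else f (Sum.inr (d, t, k d t))) ?_ ?_ hd)
        (fun x' ⟨y', h, _⟩ => hG (contains_of_fan h))
      · intro t hdt
        split_ifs with e
        · refine ⟨hx, ?_⟩
          rw [Sym2.eq_iff] at e
          rcases e with ⟨rfl, rfl⟩ | ⟨rfl, rfl⟩
          · exact ⟨h1, h2⟩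
          · exact ⟨h2, h1⟩
        · have hF : F.Adj d t := by
            rcases hdt with hdt | hdt
            · exact hdt
            · rw [SimpleGraph.edge_adj] at hdt
              exact absurd (by rw [Sym2.eq_iff]; grind) e
          refine ⟨fun w hw => ?_, f.map_rel_iff.2 ⟨hF, Or.inl rfl⟩,
            f.map_rel_iff.2 ⟨hF, Or.inr rfl⟩⟩
          have := f.injective hw
          simp at this
      · intro t t' _ _ htt
        split_ifs at htt with e e' e'
        · have := e.trans e'.symm
          rw [Sym2.eq_iff] at this
          grind
        · exact absurd htt.symm (hk _ _).1
        · exact absurd htt (hk _ _).1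
        · have := f.injective htt
          simp at this
          exact this.1
    have := hm _ le_sup_left hle hval
    rw [← this]
    exact Or.inr (by rw [SimpleGraph.edge_adj]; exact ⟨Or.inl ⟨rfl, rfl⟩, hcs.ne⟩)
  intro c x y h1 h2 h3
  by_cases hx : ∃ u, f (Sum.inl u) = x <;> by_cases hy : ∃ v, f (Sum.inl v) = y
  · obtain ⟨u, rfl⟩ := hx
    obtain ⟨v, rfl⟩ := hy
    exact ⟨u, some v, ⟨f.map_rel_iff.1 h1, f.map_rel_iff.1 h2, f.map_rel_iff.1 h3⟩, by simp,
      by simp⟩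
  · obtain ⟨u, rfl⟩ := hx
    push Not at hy
    exact ⟨u, none, heavy c u y (f.map_rel_iff.1 h1) hy h2 h3, by simp, by simp⟩
  · obtain ⟨v, rfl⟩ := hy
    push Not at hx
    exact ⟨v, none, heavy c v x (f.map_rel_iff.1 h2) hx h1 h3.symm, by simp, by simp⟩
  · exfalso
    push Not at hx hy
    choose k hk using hpriv x y
    obtain ⟨x', y', h, hx', hy'⟩ := fan_of_pfan (G := G) hFE (fun w => f (Sum.inl w)) hj hE
      (fun t => f (Sum.inr (c, t, k c t))) (by
        intro t ht
        refine ⟨fun w hw => ?_, f.map_rel_iff.2 ⟨ht, Or.inl rfl⟩,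
            f.map_rel_iff.2 ⟨ht, Or.inr rfl⟩⟩
        have := f.injective hw
        simp at this) (by
        intro t t' _ _ htt
        have := f.injective htt
        simp at this
        exact this.1) (hs c)
    have hx1 : ∀ i, x' i ≠ x ∧ x' i ≠ y := by
      intro i
      obtain ⟨w, hw⟩ := hx' i
      rw [← hw]
      exact ⟨hx w, hy w⟩
    have hy1 : ∀ i, y' i ≠ x ∧ y' i ≠ y := by
      intro i
      rcases hy' i with ⟨w, hw⟩ | ⟨s, -, hs⟩
      · rw [← hw]
        exact ⟨hx w, hy w⟩
      · rw [← hs]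
        exact hk c s
    refine hG (contains_of_fan (c := f (Sum.inl c)) (x := Fin.cons x x') (y := Fin.cons y y') ⟨?_, ?_⟩)
    · intro i
      refine Fin.cases ?_ (fun i => ?_) i
      · exact ⟨h1, h2, h3⟩
      · exact h.1 i
    · intro i l
      refine Fin.cases ?_ (fun i => ?_) i <;> refine Fin.cases ?_ (fun l => ?_) l
      · simp
      · intro _
        simp only [Fin.cons_succ, Fin.cons_zero]
        exact ⟨(hx1 l).1.symm, (hy1 l).1.symm, (hy1 l).2.symm⟩
      · intro _
        simp only [Fin.cons_succ, Fin.cons_zero]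
        exact ⟨(hx1 i).1, (hx1 i).2, (hy1 i).2⟩
      · intro hil
        simp only [Fin.cons_succ]
        exact h.2 i l (fun e => hil (by rw [e]))

/-- The free amalgam over the core is windmill-free. -/
theorem amalgam_free {W γ δ ε : Type} {E F : SimpleGraph W} (hv : Valid E F)
    {B : SimpleGraph γ} {C : SimpleGraph δ} {D : SimpleGraph ε}
    (hB : ¬ Contains windmill B) (hC : ¬ Contains windmill C)
    (f : W → γ) (g : W → δ) (cB : Cert E F B f) (cC : Cert E F C g)
    (f' : B ↪g D) (g' : C ↪g D) (hfg : ∀ w, f' (f w) = g' (g w))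
    (hcap : ∀ b c, f' b = g' c → ∃ w, b = f w)
    (hD : ∀ p q, D.Adj p q → (∃ b b', f' b = p ∧ f' b' = q) ∨ ∃ c c', g' c = p ∧ g' c' = q) :
    ¬ Contains windmill D := by
  intro h
  obtain ⟨v, x, y, h⟩ := fan_of_contains h
  by_cases hvB : ∃ b, f' b = v
  · by_cases hvC : ∃ c, g' c = v
    · obtain ⟨b, rfl⟩ := hvB
      obtain ⟨c, hc⟩ := hvC
      obtain ⟨w, rfl⟩ := hcap b c hc.symm
      refine hv w (pfan_of_fan (fun w => f' (f w)) h ?_)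
      intro i
      obtain ⟨h1, h2, h3⟩ := h.1 i
      have hside : (∃ b b', f' b = x i ∧ f' b' = y i) ∨ ∃ c c', g' c = x i ∧ g' c' = y i :=
        hD _ _ h3
      rcases hside with ⟨b, b', hb, hb'⟩ | ⟨b, b', hb, hb'⟩
      · rw [← hb, ← hb'] at h3
        rw [← hb] at h1
        rw [← hb'] at h2
        obtain ⟨s, o, i1, i2, i3⟩ := cB w b b' (f'.map_rel_iff.1 h1) (f'.map_rel_iff.1 h2)
          (f'.map_rel_iff.1 h3)
        refine ⟨s, o, i1, ?_, fun t ht => ?_⟩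
        · rw [← hb, ← hb']
          exact i2.imp (congrArg f') (congrArg f')
        · rw [← hb, ← hb']
          exact (i3 t ht).imp (congrArg f') (congrArg f')
      · rw [← hb, ← hb'] at h3
        rw [← hb, hfg] at h1
        rw [← hb', hfg] at h2
        obtain ⟨s, o, i1, i2, i3⟩ := cC w b b' (g'.map_rel_iff.1 h1) (g'.map_rel_iff.1 h2)
          (g'.map_rel_iff.1 h3)
        refine ⟨s, o, i1, ?_, fun t ht => ?_⟩
        · rw [← hb, ← hb', hfg]
          exact i2.imp (congrArg g') (congrArg g')
        · rw [← hb, ← hb', hfg]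
          exact (i3 t ht).imp (congrArg g') (congrArg g')
    · obtain ⟨b, rfl⟩ := hvB
      have key : ∀ q, D.Adj (f' b) q → ∃ b', f' b' = q := by
        intro q hq
        rcases hD _ _ hq with ⟨_, b', -, hb⟩ | ⟨c, _, hc, -⟩
        · exact ⟨b', hb⟩
        · exact absurd ⟨c, hc⟩ hvC
      choose x' hx' using fun i => key _ (h.1 i).1
      choose y' hy' using fun i => key _ (h.1 i).2.1
      refine hB (contains_of_fan (c := b) (x := x') (y := y') ⟨fun i => ?_, fun i k hik => ?_⟩)
      · have := h.1 i
        rw [← hx', ← hy'] at this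
        exact ⟨f'.map_rel_iff.1 this.1, f'.map_rel_iff.1 this.2.1, f'.map_rel_iff.1 this.2.2⟩
      · have := h.2 i k hik
        rw [← hx', ← hy', ← hx', ← hy'] at this
        exact ⟨fun e => this.1 (congrArg f' e), fun e => this.2.1 (congrArg f' e),
          fun e => this.2.2 (congrArg f' e)⟩
  · have key : ∀ q, D.Adj v q → (∃ c', g' c' = q) ∧ ∃ c, g' c = v := by
      intro q hq
      rcases hD _ _ hq with ⟨b, _, hb, -⟩ | ⟨c, c', hc, hc'⟩
      · exact absurd ⟨b, hb⟩ hvB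
      · exact ⟨⟨c', hc'⟩, c, hc⟩
    obtain ⟨c, rfl⟩ := (key _ (h.1 0).1).2
    choose x' hx' using fun i => (key _ (h.1 i).1).1
    choose y' hy' using fun i => (key _ (h.1 i).2.1).1
    refine hC (contains_of_fan (c := c) (x := x') (y := y') ⟨fun i => ?_, fun i k hik => ?_⟩)
    · have := h.1 i
      rw [← hx', ← hy'] at this
      exact ⟨g'.map_rel_iff.1 this.1, g'.map_rel_iff.1 this.2.1, g'.map_rel_iff.1 this.2.2⟩
    · have := h.2 i k hik
      rw [← hx', ← hy', ← hx', ← hy'] at this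
      exact ⟨fun e => this.1 (congrArg g' e), fun e => this.2.1 (congrArg g' e),
        fun e => this.2.2 (congrArg g' e)⟩

/-- Existence of the free amalgam of graphs over a common induced subgraph. -/
theorem exists_amalgam {W γ δ : Type} [Fintype γ] [Fintype δ] {E : SimpleGraph W}
    {B : SimpleGraph γ} {C : SimpleGraph δ} (f : E ↪g B) (g : E ↪g C) :
    ∃ (ε : Type) (_ : Fintype ε) (D : SimpleGraph ε) (f' : B ↪g D) (g' : C ↪g D),
      (∀ w, f' (f w) = g' (g w)) ∧ (∀ b c, f' b = g' c → ∃ w, b = f w) ∧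
      ∀ p q, D.Adj p q → (∃ b b', f' b = p ∧ f' b' = q) ∨ ∃ c c', g' c = p ∧ g' c' = q := by
  classical
  let ε := γ ⊕ {c : δ // ∀ w, g w ≠ c}
  let G : δ → ε := fun c => if h : ∃ w, g w = c then Sum.inl (f h.choose)
    else Sum.inr ⟨c, fun w hw => h ⟨w, hw⟩⟩
  have G1 : ∀ w, G (g w) = Sum.inl (f w) := by
    intro w
    have h : ∃ w', g w' = g w := ⟨w, rfl⟩
    have : G (g w) = Sum.inl (f h.choose) := dif_pos h
    rw [this, g.injective h.choose_spec]
  have G2 : ∀ c (h : ∀ w, g w ≠ c), G c = Sum.inr ⟨c, h⟩ := by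
    intro c h
    exact dif_neg (fun ⟨w, hw⟩ => h w hw)
  have G3 : ∀ b c, Sum.inl b = G c → ∃ w, b = f w ∧ c = g w := by
    intro b c h
    by_cases hc : ∃ w, g w = c
    · obtain ⟨w, rfl⟩ := hc
      rw [G1] at h
      exact ⟨w, Sum.inl_injective h, rfl⟩
    · push Not at hc
      rw [G2 c hc] at h
      simp at h
  have Ginj : Function.Injective G := by
    intro c c' h
    by_cases hc : ∃ w, g w = c
    · obtain ⟨w, rfl⟩ := hc
      rw [G1] at h
      obtain ⟨w', e, rfl⟩ := G3 _ _ h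
      rw [f.injective e]
    · push Not at hc
      by_cases hc' : ∃ w, g w = c'
      · obtain ⟨w, rfl⟩ := hc'
        rw [G1, G2 c hc] at h
        simp at h
      · push Not at hc'
        rw [G2 c hc, G2 c' hc'] at h
        exact congrArg Subtype.val (Sum.inr_injective h)
  let D : SimpleGraph ε := B.map (⟨Sum.inl, Sum.inl_injective⟩ : γ ↪ ε) ⊔ C.map (⟨G, Ginj⟩ : δ ↪ ε)
  have hDadj : ∀ p q, D.Adj p q ↔ (∃ b b', B.Adj b b' ∧ Sum.inl b = p ∧ Sum.inl b' = q) ∨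
      ∃ c c', C.Adj c c' ∧ G c = p ∧ G c' = q := by
    intro p q
    simp only [D, SimpleGraph.sup_adj, SimpleGraph.map_adj]
    rfl
  refine ⟨ε, inferInstance, D, ⟨⟨Sum.inl, Sum.inl_injective⟩, ?_⟩, ⟨⟨G, Ginj⟩, ?_⟩, ?_, ?_, ?_⟩
  · intro b b'
    change D.Adj (Sum.inl b) (Sum.inl b') ↔ _
    rw [hDadj]
    constructor
    · rintro (⟨a, a', h, h1, h2⟩ | ⟨c, c', h, h1, h2⟩)
      · rwa [← Sum.inl_injective h1, ← Sum.inl_injective h2]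
      · obtain ⟨w, rfl, rfl⟩ := G3 _ _ h1.symm
        obtain ⟨w', rfl, rfl⟩ := G3 _ _ h2.symm
        exact f.map_rel_iff.2 (g.map_rel_iff.1 h)
    · exact fun h => Or.inl ⟨b, b', h, rfl, rfl⟩
  · intro c c'
    change D.Adj (G c) (G c') ↔ _
    rw [hDadj]
    constructor
    · rintro (⟨a, a', h, h1, h2⟩ | ⟨c, c', h, h1, h2⟩)
      · obtain ⟨w, rfl, rfl⟩ := G3 _ _ h1
        obtain ⟨w', rfl, rfl⟩ := G3 _ _ h2
        exact g.map_rel_iff.2 (f.map_rel_iff.1 h)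
      · rwa [← Ginj h1, ← Ginj h2]
    · exact fun h => Or.inr ⟨c, c', h, rfl, rfl⟩
  · intro w
    exact (G1 w).symm
  · intro b c h
    obtain ⟨w, h, -⟩ := G3 b c h
    exact ⟨w, h⟩
  · intro p q h
    rcases (hDadj p q).1 h with ⟨b, b', -, h1, h2⟩ | ⟨b, b', -, h1, h2⟩
    · exact Or.inl ⟨b, b', h1, h2⟩
    · exact Or.inr ⟨b, b', h1, h2⟩

end WindmillAux

open WindmillAux in
/-- The class of all finite windmill-free graphs has the weak amalgamation property. -/
theorem windmillFree_wap :
    GraphWAP (fun _ G => ¬ Contains windmill G) := by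
  intro α _ A hA
  obtain ⟨W, _, E, F, i, hFE, hv, hs, hm⟩ := exists_max_core A hA
  refine ⟨W ⊕ (W × W × Fin 3), inferInstance, hat E F, (hatEmb E F).comp i, hat_free hv, ?_⟩
  intro γ _ B hB δ _ C hC f g
  obtain ⟨ε, hε, D, f', g', h1, h2, h3⟩ :=
    exists_amalgam (f.comp (hatEmb E F)) (g.comp (hatEmb E F))
  exact ⟨ε, hε, D, amalgam_free hv hB hC (fun w => f (Sum.inl w)) (fun w => g (Sum.inl w))
    (ext_cert hFE hs hm hB f) (ext_cert hFE hs hm hC g) f' g' h1 h2 h3, f', g', fun a => h1 (i a)⟩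
end

section
/- Let H be the windmill graph Wd(3,3) (three triangles sharing exactly one common vertex p) and let the bowtie be the graph consisting of two triangles sharing exactly one common vertex v. For every finite H-free graph A there exists a finite H-free graph E containing A as an induced subgraph such that for every vertex a of A there is an injective graph homomorphism j from the bowtie into E with j(v) = a. -/
open SimpleGraph

/-- The bowtie graph: two triangles sharing the common vertex `0`,
with triangles `{0,1,2}` and `{0,3,4}`. -/
def bowtie : SimpleGraph (Fin 5) :=
  SimpleGraph.fromRel fun a b =>
    a = 0 ∨ (a = 1 ∧ b = 2) ∨ (a = 3 ∧ b = 4)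

/-- `x, y` together with `p` form a triangle of `G`. -/
def Tri {V : Type} (G : SimpleGraph V) (p x y : V) : Prop :=
  G.Adj p x ∧ G.Adj p y ∧ G.Adj x y

/-- The pairs `x, y` and `z, w` are disjoint. -/
def Dis {V : Type} (x y z w : V) : Prop := x ≠ z ∧ x ≠ w ∧ y ≠ z ∧ y ≠ w

lemma bowtie_hom {V : Type} (G : SimpleGraph V) (p x y z w : V)
    (h1 : Tri G p x y) (h2 : Tri G p z w) (d : Dis x y z w) :
    ∃ j : bowtie →g G, Function.Injective j ∧ j 0 = p := by
  obtain ⟨a1, a2, a3⟩ := h1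
  obtain ⟨b1, b2, b3⟩ := h2
  obtain ⟨d1, d2, d3, d4⟩ := d
  refine ⟨⟨![p, x, y, z, w], ?_⟩, ?_, rfl⟩
  · intro a b hab
    fin_cases a <;> fin_cases b <;> simp [bowtie] at hab ⊢ <;>
      first | assumption | (apply SimpleGraph.Adj.symm; assumption)
  · intro a b hab
    have e1 := a1.ne
    have e2 := a2.ne
    have e3 := a3.ne
    have e4 := b1.ne
    have e5 := b2.ne
    have e6 := b3.ne
    change ![p, x, y, z, w] a = ![p, x, y, z, w] b at hab
    fin_cases a <;> fin_cases b <;> simp at hab ⊢ <;> grind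

lemma windmill_of {V : Type} (G : SimpleGraph V) (p x y z w u v : V)
    (h1 : Tri G p x y) (h2 : Tri G p z w) (h3 : Tri G p u v)
    (d : Dis x y z w) (d' : Dis x y u v) (d'' : Dis z w u v) :
    Contains windmill G := by
  obtain ⟨a1, a2, a3⟩ := h1
  obtain ⟨b1, b2, b3⟩ := h2
  obtain ⟨c1, c2, c3⟩ := h3
  unfold Dis at d d' d''
  refine ⟨⟨![p, x, y, z, w, u, v], ?_⟩, ?_⟩
  · intro a b hab
    fin_cases a <;> fin_cases b <;> simp [windmill] at hab ⊢ <;>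
      first | assumption | (apply SimpleGraph.Adj.symm; assumption)
  · intro a b hab
    have e1 := a1.ne
    have e2 := a2.ne
    have e3 := a3.ne
    have e4 := b1.ne
    have e5 := b2.ne
    have e6 := b3.ne
    have e7 := c1.ne
    have e8 := c2.ne
    have e9 := c3.ne
    change ![p, x, y, z, w, u, v] a = ![p, x, y, z, w, u, v] b at hab
    fin_cases a <;> fin_cases b <;> simp at hab ⊢ <;> grind

lemma windmill_elim {V : Type} (G : SimpleGraph V) (h : Contains windmill G) :
    ∃ p x y z w u v, Tri G p x y ∧ Tri G p z w ∧ Tri G p u v ∧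
      Dis x y z w ∧ Dis x y u v ∧ Dis z w u v := by
  obtain ⟨f, hf⟩ := h
  have key : ∀ a b, windmill.Adj a b → G.Adj (f a) (f b) := fun a b hab => f.map_rel hab
  refine ⟨f 0, f 1, f 2, f 3, f 4, f 5, f 6, ⟨?_, ?_, ?_⟩, ⟨?_, ?_, ?_⟩, ⟨?_, ?_, ?_⟩,
    ⟨?_, ?_, ?_, ?_⟩, ⟨?_, ?_, ?_, ?_⟩, ⟨?_, ?_, ?_, ?_⟩⟩
  all_goals first
    | (apply key; simp [windmill]; done)
    | (apply hf.ne; decide)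

/-- Which of the two new triangles is attached at `a`: the first one if `a` is not the center of
a bowtie, the second one if `a` is in no triangle. -/
def Act {V : Type} (A : SimpleGraph V) (a : V) : Bool → Prop
  | false => ¬ ∃ x y z w, Tri A a x y ∧ Tri A a z w ∧ Dis x y z w
  | true => ¬ ∃ x y, Tri A a x y

/-- The adjacency relation of the extension. -/
def ExtAdj {V : Type} (A : SimpleGraph V) : V ⊕ (V × Bool × Bool) → V ⊕ (V × Bool × Bool) → Prop
  | .inl a, .inl b => A.Adj a b
  | .inl a, .inr q => a = q.1 ∧ Act A a q.2.1
  | .inr q, .inl a => a = q.1 ∧ Act A a q.2.1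
  | .inr q, .inr r => q.1 = r.1 ∧ q.2.1 = r.2.1 ∧ q.2.2 ≠ r.2.2

/-- The extension of `A`. -/
def BowExt {V : Type} (A : SimpleGraph V) : SimpleGraph (V ⊕ (V × Bool × Bool)) where
  Adj := ExtAdj A
  symm := ⟨by
    rintro (a | ⟨a, k, s⟩) (b | ⟨b, l, t⟩) h <;> simp only [ExtAdj] at h ⊢
    · exact h.symm
    · exact h
    · exact h
    · exact ⟨h.1.symm, h.2.1.symm, h.2.2.symm⟩⟩
  loopless := ⟨by
    rintro (a | ⟨a, k, s⟩) h <;> simp [ExtAdj] at h⟩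

lemma tri_inl {V : Type} (A : SimpleGraph V) (a : V) (u v : V ⊕ (V × Bool × Bool))
    (h : Tri (BowExt A) (.inl a) u v) :
    (∃ x y, u = .inl x ∧ v = .inl y ∧ Tri A a x y) ∨
    (∃ k s, Act A a k ∧ u = .inr (a, k, s) ∧ v = .inr (a, k, !s)) := by
  obtain ⟨h1, h2, h3⟩ := h
  rcases u with x | ⟨b, k, s⟩ <;> rcases v with y | ⟨c, l, t⟩ <;>
    simp only [BowExt, ExtAdj] at h1 h2 h3
  · exact .inl ⟨x, y, rfl, rfl, h1, h2, h3⟩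
  · exact absurd (h2.1.trans h3.1.symm) h1.ne
  · exact absurd (h1.1.trans h3.1.symm) h2.ne
  · right
    obtain ⟨rfl, ha⟩ := h1
    obtain ⟨rfl, -⟩ := h2
    obtain ⟨-, rfl, hs⟩ := h3
    refine ⟨k, s, ha, rfl, ?_⟩
    cases s <;> cases t <;> simp_all

lemma tri_inr {V : Type} (A : SimpleGraph V) (a : V) (k₀ s₀ : Bool) (u v : V ⊕ (V × Bool × Bool))
    (h : Tri (BowExt A) (.inr (a, k₀, s₀)) u v) : u = .inl a ∨ v = .inl a := by
  obtain ⟨h1, h2, h3⟩ := h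
  rcases u with x | ⟨b, k, s⟩ <;> rcases v with y | ⟨c, l, t⟩ <;>
    simp only [BowExt, ExtAdj] at h1 h2 h3
  · exact .inl (by rw [h1.1])
  · exact .inl (by rw [h1.1])
  · exact .inr (by rw [h2.1])
  · cases s₀ <;> cases s <;> cases t <;> simp_all

lemma ext_free {V : Type} (A : SimpleGraph V) (hA : ¬ Contains windmill A) :
    ¬ Contains windmill (BowExt A) := by
  intro h
  obtain ⟨p, x, y, z, w, u, v, t1, t2, t3, d1, d2, d3⟩ := windmill_elim _ h
  rcases p with a | ⟨a, k, s⟩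
  · -- two disjoint new pairs have different indices
    have new : ∀ k s l t, Dis (Sum.inr (a, k, s) : V ⊕ (V × Bool × Bool)) (.inr (a, k, !s))
        (.inr (a, l, t)) (.inr (a, l, !t)) → k ≠ l := by
      rintro k s l t ⟨e1, e2, -, -⟩ rfl
      cases s <;> cases t <;> simp_all
    have old : ∀ x y z w, Dis (Sum.inl x : V ⊕ (V × Bool × Bool)) (.inl y) (.inl z) (.inl w) →
        Dis x y z w := by
      rintro x y z w ⟨e1, e2, e3, e4⟩
      refine ⟨?_, ?_, ?_, ?_⟩ <;> rintro rfl <;> simp_all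
    -- one old pair excludes the second new triangle; two exclude both
    have ex1 : ∀ x y k, Tri A a x y → Act A a k → k = false := by
      rintro x y (_ | _) ht hk
      · rfl
      · exact absurd ⟨x, y, ht⟩ hk
    have ex2 : ∀ x y z w k, Tri A a x y → Tri A a z w → Dis x y z w → Act A a k → False := by
      rintro x y z w k h1 h2 hd hk
      obtain rfl := ex1 _ _ _ h1 hk
      exact hk ⟨x, y, z, w, h1, h2, hd⟩
    rcases tri_inl A a _ _ t1 with ⟨x1, y1, rfl, rfl, q1⟩ | ⟨k1, s1, q1, rfl, rfl⟩ <;>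
    rcases tri_inl A a _ _ t2 with ⟨x2, y2, rfl, rfl, q2⟩ | ⟨k2, s2, q2, rfl, rfl⟩ <;>
    rcases tri_inl A a _ _ t3 with ⟨x3, y3, rfl, rfl, q3⟩ | ⟨k3, s3, q3, rfl, rfl⟩
    · exact hA (windmill_of A a _ _ _ _ _ _ q1 q2 q3 (old _ _ _ _ d1) (old _ _ _ _ d2)
        (old _ _ _ _ d3))
    · exact ex2 _ _ _ _ _ q1 q2 (old _ _ _ _ d1) q3
    · exact ex2 _ _ _ _ _ q1 q3 (old _ _ _ _ d2) q2
    · exact new _ _ _ _ d3 ((ex1 _ _ _ q1 q2).trans (ex1 _ _ _ q1 q3).symm)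
    · exact ex2 _ _ _ _ _ q2 q3 (old _ _ _ _ d3) q1
    · exact new _ _ _ _ d2 ((ex1 _ _ _ q2 q1).trans (ex1 _ _ _ q2 q3).symm)
    · exact new _ _ _ _ d1 ((ex1 _ _ _ q3 q1).trans (ex1 _ _ _ q3 q2).symm)
    · have n1 := new _ _ _ _ d1
      have n2 := new _ _ _ _ d2
      have n3 := new _ _ _ _ d3
      revert n1 n2 n3
      cases k1 <;> cases k2 <;> cases k3 <;> simp
  · obtain ⟨e1, e2, e3, e4⟩ := d1
    rcases tri_inr A a k s _ _ t1 with rfl | rfl <;>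
    rcases tri_inr A a k s _ _ t2 with rfl | rfl <;> contradiction

lemma tri_new {V : Type} (A : SimpleGraph V) (a : V) (k : Bool) (h : Act A a k) :
    Tri (BowExt A) (.inl a) (.inr (a, k, false)) (.inr (a, k, true)) := by
  refine ⟨?_, ?_, ?_⟩ <;> simp [BowExt, ExtAdj, h]

/-- Every finite windmill-free graph `A` extends (as an induced subgraph, via a graph
embedding `i`) to a finite windmill-free graph `E` in which every vertex of (the image of)
`A` is the center of a bowtie. -/
theorem exists_bowtie_extension (α : Type) [Fintype α] (A : SimpleGraph α)
    (hA : ¬ Contains windmill A) :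
    ∃ (β : Type) (_ : Fintype β) (E : SimpleGraph β) (i : A ↪g E),
      (¬ Contains windmill E) ∧
      ∀ a : α, ∃ j : bowtie →g E, Function.Injective j ∧ j 0 = i a := by
  refine ⟨α ⊕ (α × Bool × Bool), inferInstance, BowExt A,
    ⟨⟨Sum.inl, Sum.inl_injective⟩, Iff.rfl⟩, ext_free A hA, ?_⟩
  intro a
  change ∃ j : bowtie →g BowExt A, Function.Injective j ∧ j 0 = Sum.inl a
  by_cases hb : ∃ x y z w, Tri A a x y ∧ Tri A a z w ∧ Dis x y z w
  · obtain ⟨x, y, z, w, h1, h2, d1, d2, d3, d4⟩ := hb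
    exact bowtie_hom (BowExt A) (.inl a) (.inl x) (.inl y) (.inl z) (.inl w) h1 h2
      ⟨by simpa, by simpa, by simpa, by simpa⟩
  · have t0 := tri_new A a false hb
    by_cases ht : ∃ x y, Tri A a x y
    · obtain ⟨x, y, h1⟩ := ht
      exact bowtie_hom (BowExt A) (.inl a) (.inl x) (.inl y) _ _ h1 t0
        ⟨by simp, by simp, by simp, by simp⟩
    · exact bowtie_hom (BowExt A) (.inl a) _ _ _ _ t0 (tri_new A a true ht)
        ⟨by simp, by simp, by simp, by simp⟩
end

section
/- Let A be a finite simple graph with nonempty vertex set which is C4-free, has the property that any two distinct vertices are adjacent or have a common neighbor (diameter at most 2), and has no dominating vertex (no vertex adjacent to every other vertex). Then there is an edge of A that is not contained in any triangle; that is, there are adjacent vertices x, y such that no vertex is adjacent to both x and y. -/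
/-- A graph is `C₄`-free if it contains no four distinct vertices forming a 4-cycle. -/
def C4Free {V : Type} (G : SimpleGraph V) : Prop :=
  ¬ ∃ a b c d : V, a ≠ b ∧ a ≠ c ∧ a ≠ d ∧ b ≠ c ∧ b ≠ d ∧ c ≠ d ∧
    G.Adj a b ∧ G.Adj b c ∧ G.Adj c d ∧ G.Adj d a

section Friendship
open SimpleGraph Matrix Finset

variable {V : Type} [Fintype V] [DecidableEq V] (G : SimpleGraph V) [DecidableRel G.Adj]

/-- Distinct vertices have exactly one common neighbor. -/
def FriendProp {V : Type} (G : SimpleGraph V) : Prop :=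
  ∀ v w : V, v ≠ w → ∃! z, G.Adj v z ∧ G.Adj z w

theorem fr_sq_ne (R : Type) [CommRing R] (hG : FriendProp G) {v w : V} (h : v ≠ w) :
    (G.adjMatrix R ^ 2) v w = 1 := by
  obtain ⟨z, ⟨hz1, hz2⟩, hz⟩ := hG v w h
  rw [sq, adjMatrix_mul_apply, Finset.sum_eq_single z]
  · simp [hz2]
  · intro b hb hbz
    rw [mem_neighborFinset] at hb
    rw [adjMatrix_apply, if_neg]
    intro hbw
    exact hbz (hz b ⟨hb, hbw⟩)
  · intro hn
    simp [hz1] at hn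

theorem fr_cube (hG : FriendProp G) {v w : V} (h : ¬ G.Adj v w) :
    (G.adjMatrix ℤ ^ 3) v w = G.degree v := by
  rw [pow_succ', adjMatrix_mul_apply, Finset.sum_congr rfl (g := fun _ => (1 : ℤ))]
  · simp
  · intro x hx
    apply fr_sq_ne G ℤ hG
    rintro rfl
    rw [mem_neighborFinset] at hx
    exact h hx

theorem fr_deg (hG : FriendProp G) {v w : V} (h : ¬ G.Adj v w) :
    G.degree v = G.degree w := by
  have h1 := fr_cube G hG h
  have h2 := fr_cube G hG (fun h' => h (SimpleGraph.Adj.symm h'))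
  have h3 : (G.adjMatrix ℤ ^ 3)ᵀ = G.adjMatrix ℤ ^ 3 := by
    rw [transpose_pow, transpose_adjMatrix]
  rw [← h3, transpose_apply, h1] at h2
  exact_mod_cast h2

theorem fr_regular [Nonempty V] (hG : FriendProp G)
    (hdom : ¬ ∃ v : V, ∀ w : V, w ≠ v → G.Adj v w) :
    ∃ d : ℕ, G.IsRegularOfDegree d := by
  push Not at hdom
  obtain ⟨v⟩ := ‹Nonempty V›
  refine ⟨G.degree v, fun x => ?_⟩
  by_cases hvx : G.Adj v x
  swap
  · exact (fr_deg G hG hvx).symm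
  obtain ⟨w, hvw', hvw⟩ := hdom v
  obtain ⟨y, hxy', hxy⟩ := hdom x
  by_cases hxw : G.Adj x w
  swap
  · rw [fr_deg G hG hvw]
    exact fr_deg G hG hxw
  rw [fr_deg G hG hxy]
  by_cases hvy : G.Adj v y
  swap
  · exact (fr_deg G hG hvy).symm
  rw [fr_deg G hG hvw]
  apply fr_deg G hG
  intro hc
  exact hxy' ((hG v w hvw'.symm).unique ⟨hvy, hc⟩ ⟨hvx, hxw⟩)

theorem fr_sq (R : Type) [CommRing R] (hG : FriendProp G) {d : ℕ}
    (hd : G.IsRegularOfDegree d) :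
    G.adjMatrix R ^ 2 = of fun v w => if v = w then (d : R) else 1 := by
  ext v w
  by_cases h : v = w
  · subst h
    rw [sq, adjMatrix_mul_self_apply_self, hd]
    simp
  · rw [fr_sq_ne G R hG h, of_apply, if_neg h]

theorem fr_card [Nonempty V] (hG : FriendProp G) {d : ℕ} (hd : G.IsRegularOfDegree d) :
    (Fintype.card V : ℤ) = d * d - d + 1 := by
  obtain ⟨v⟩ := ‹Nonempty V›
  have h1 : ∑ w, (G.adjMatrix ℤ ^ 2) v w = d * d := by
    rw [sq]
    simp only [adjMatrix_mul_apply]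
    rw [Finset.sum_comm, Finset.sum_congr rfl (g := fun _ => (d : ℤ))]
    · simp [hd v]
    · intro x _
      have := hd x
      simp [adjMatrix_apply, ← this, ← card_neighborFinset_eq_degree,
        neighborFinset_eq_filter]
  have h2 : ∑ w, (G.adjMatrix ℤ ^ 2) v w = d - 1 + Fintype.card V := by
    rw [fr_sq G ℤ hG hd]
    have : ∀ w : V, (of fun v w : V => if v = w then (d : ℤ) else 1) v w
        = (if v = w then (d - 1 : ℤ) else 0) + 1 := by
      intro w
      rw [of_apply]
      split_ifs <;> ring
    rw [Finset.sum_congr rfl (fun w _ => this w), Finset.sum_add_distrib]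
    simp
  linarith

theorem fr_pow (R : Type) [CommRing R] (hG : FriendProp G) {d : ℕ}
    (hd : G.IsRegularOfDegree d) (h1 : (d : R) = 1) (k : ℕ) :
    G.adjMatrix R ^ (k + 2) = of fun _ _ => 1 := by
  induction k with
  | zero => rw [fr_sq G R hG hd]; simp [h1]
  | succ k ih =>
    rw [show k + 1 + 2 = (k + 2) + 1 by ring, pow_succ', ih]
    ext v w
    rw [adjMatrix_mul_apply]
    simp [hd v, h1]

theorem friendship_thm [Nonempty V] (hG : FriendProp G) :
    ∃ v : V, ∀ w : V, w ≠ v → G.Adj v w := by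
  by_contra hdom
  obtain ⟨d, hd⟩ := fr_regular G hG hdom
  have hc := fr_card G hG hd
  by_cases h3 : d ≤ 2
  · apply hdom
    obtain ⟨v⟩ := ‹Nonempty V›
    refine ⟨v, ?_⟩
    by_contra hn
    push Not at hn
    obtain ⟨w, hwv, hw⟩ := hn
    have hlt : (insert w (insert v (G.neighborFinset v))).card ≤ Fintype.card V :=
      Finset.card_le_univ _
    rw [Finset.card_insert_of_notMem (by simp [hwv, hw]),
      Finset.card_insert_of_notMem (by simp), card_neighborFinset_eq_degree, hd v] at hlt
    zify at hlt
    interval_cases d <;> norm_num at hc hlt <;> omega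
  · obtain ⟨e, rfl⟩ : ∃ e, d = e + 1 := ⟨d - 1, by omega⟩
    have hp : (e.minFac).Prime := Nat.minFac_prime (by omega)
    set p := e.minFac with hpdef
    have : Fact p.Prime := ⟨hp⟩
    have he : (e : ZMod p) = 0 := (ZMod.natCast_eq_zero_iff _ _).2 (Nat.minFac_dvd e)
    have h1 : ((e + 1 : ℕ) : ZMod p) = 1 := by push_cast; rw [he]; ring
    have hV : (Fintype.card V : ZMod p) = 1 := by
      have := congrArg (Int.cast : ℤ → ZMod p) hc
      push_cast at this
      rw [this, he]; ring
    have ht := ZMod.trace_pow_card (G.adjMatrix (ZMod p))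
    obtain ⟨k, hk⟩ : ∃ k, p = k + 2 := ⟨p - 2, by have := hp.two_le; omega⟩
    have hJ : G.adjMatrix (ZMod p) ^ p = of fun _ _ => 1 := by
      have := fr_pow G (ZMod p) hG hd h1 k
      rwa [← hk] at this
    rw [hJ, trace_adjMatrix, zero_pow hp.ne_zero] at ht
    simp [Matrix.trace, hV] at ht

end Friendship

/-- A finite nonempty `C₄`-free graph of diameter at most `2` with no dominating vertex
has an edge not contained in any triangle. -/
theorem exists_edge_not_in_triangle {V : Type} [Fintype V] [Nonempty V]
    (A : SimpleGraph V) (hC4 : C4Free A)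
    (hdiam : ∀ x y : V, x ≠ y → A.Adj x y ∨ ∃ z : V, A.Adj x z ∧ A.Adj z y)
    (hdom : ¬ ∃ v : V, ∀ w : V, w ≠ v → A.Adj v w) :
    ∃ x y : V, A.Adj x y ∧ ∀ z : V, ¬ (A.Adj z x ∧ A.Adj z y) := by
  classical
  by_contra hcon
  push Not at hcon
  apply hdom
  apply friendship_thm A
  intro v w hvw
  have hex : ∃ z, A.Adj v z ∧ A.Adj z w := by
    rcases hdiam v w hvw with h | h
    · obtain ⟨z, hz1, hz2⟩ := hcon v w h
      exact ⟨z, hz1.symm, hz2⟩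
    · exact h
  obtain ⟨z, hz1, hz2⟩ := hex
  refine ⟨z, ⟨hz1, hz2⟩, ?_⟩
  rintro y ⟨hy1, hy2⟩
  by_contra hyz
  exact hC4 ⟨v, z, w, y, hz1.ne, hvw, hy1.ne, hz2.ne, fun h => hyz h.symm, hy2.ne.symm,
    hz1, hz2, hy2.symm, hy1.symm⟩
end

section
/- The class K(C4) of all finite C4-free graphs does not have the weak amalgamation property. -/
open SimpleGraph

/-- A finite friendship graph with no universal vertex has no vertex of degree at least 3. -/
theorem friendship_aux {V : Type} [Fintype V] [DecidableEq V] (G : SimpleGraph V)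
    [DecidableRel G.Adj]
    (h : ∀ u v, u ≠ v → ∃! w, G.Adj u w ∧ G.Adj v w)
    (hnp : ∀ p, ∃ w, w ≠ p ∧ ¬ G.Adj p w) (v0 : V) (hd : 3 ≤ G.degree v0) : False := by
  have hsq : ∀ (R : Type) [CommRing R] (u v : V), (G.adjMatrix R * G.adjMatrix R) u v =
      if u = v then (G.degree u : R) else 1 := by
    intro R _ u v
    split_ifs with huv
    · subst huv
      rw [adjMatrix_mul_self_apply_self]
    · obtain ⟨w, hw, hu⟩ := h u v huv
      rw [adjMatrix_mul_apply]
      rw [Finset.sum_eq_single w]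
      · simp [adjMatrix_apply, hw.2.symm]
      · intro b hb hbw
        simp only [adjMatrix_apply]
        rw [if_neg]
        intro hb2
        exact hbw (hu b ⟨by simpa using hb, hb2.symm⟩)
      · intro hw2
        exact absurd (by simpa using hw.1) hw2
  have hna : ∀ u v, ¬ G.Adj u v → G.degree u = G.degree v := by
    intro u v huv
    have h1 : ((G.adjMatrix ℤ * G.adjMatrix ℤ) * G.adjMatrix ℤ) u v = G.degree v := by
      rw [mul_adjMatrix_apply, Finset.sum_congr rfl (g := fun _ => (1 : ℤ))]
      · simp
      · intro w hw
        rw [hsq, if_neg]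
        rintro rfl
        exact huv ((mem_neighborFinset _ _ _).mp hw).symm
    have h2 : (G.adjMatrix ℤ * (G.adjMatrix ℤ * G.adjMatrix ℤ)) u v = G.degree u := by
      rw [adjMatrix_mul_apply, Finset.sum_congr rfl (g := fun _ => (1 : ℤ))]
      · simp
      · intro w hw
        rw [hsq, if_neg]
        rintro rfl
        exact huv (by simpa using hw)
    rw [mul_assoc, h2] at h1
    exact_mod_cast h1
  have hreg : ∀ u v, G.degree u = G.degree v := by
    intro v w
    by_cases hvw : G.Adj v w
    · obtain ⟨x, hxv, hx⟩ := hnp v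
      obtain ⟨y, hyw, hy⟩ := hnp w
      by_cases hxw : G.Adj w x
      · by_cases hyv : G.Adj v y
        · have hxy : ¬ G.Adj x y := by
            intro hxy
            have hne : w ≠ y := fun e => hyw e.symm
            have := (h v x (fun e => hxv e.symm)).unique ⟨hvw, hxw.symm⟩ ⟨hyv, hxy⟩
            exact hne this
          rw [hna v x hx, hna x y hxy, hna w y hy]
        · rw [hna v y hyv, hna w y hy]
      · rw [hna v x hx, hna w x hxw]
    · exact hna v w hvw
  obtain ⟨d, hdeg⟩ : ∃ d, G.degree v0 = d := ⟨_, rfl⟩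
  have hr : ∀ u, G.degree u = d := fun u => (hreg u v0).trans hdeg
  have hcount : (d : ℤ) * d = d + (Fintype.card V - 1) := by
    have e1 : ∑ v, (G.adjMatrix ℤ * G.adjMatrix ℤ) v0 v = d * d := by
      simp_rw [adjMatrix_mul_apply]
      rw [Finset.sum_comm]
      have : ∀ w, ∑ v, G.adjMatrix ℤ w v = d := by
        intro w
        have := hr w
        simp [adjMatrix_apply, ← this, degree, neighborFinset_eq_filter]
      rw [Finset.sum_congr rfl (fun w _ => this w)]
      simp [hdeg]
    have e2 : ∑ v, (G.adjMatrix ℤ * G.adjMatrix ℤ) v0 v = d + (Fintype.card V - 1) := by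
      simp_rw [hsq]
      rw [← Finset.add_sum_erase _ _ (Finset.mem_univ v0)]
      rw [Finset.sum_congr rfl (g := fun _ => (1 : ℤ))]
      · have : 1 ≤ Fintype.card V := Fintype.card_pos_iff.mpr ⟨v0⟩
        simp [hdeg, Finset.card_erase_of_mem, Nat.cast_sub this]
      · intro w hw
        rw [if_neg]
        rintro rfl
        simp at hw
    rw [← e1, e2]
  obtain ⟨p, hp, hpd⟩ := Nat.exists_prime_and_dvd (n := d - 1) (by omega)
  have : Fact p.Prime := ⟨hp⟩
  have hd1 : (d : ZMod p) = 1 := by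
    have : ((d - 1 : ℕ) : ZMod p) = 0 := (ZMod.natCast_eq_zero_iff _ _).mpr hpd
    rw [Nat.cast_sub (by omega)] at this
    simpa using sub_eq_zero.mp this
  have hn1 : (Fintype.card V : ZMod p) = 1 := by
    have := congrArg (Int.cast : ℤ → ZMod p) hcount
    push_cast at this
    rw [hd1] at this
    linear_combination -this
  let J : Matrix V V (ZMod p) := Matrix.of fun _ _ => 1
  have hA2 : G.adjMatrix (ZMod p) * G.adjMatrix (ZMod p) = J := by
    ext u v
    rw [hsq]
    simp [J, hr, hd1]
  have hJA : J * G.adjMatrix (ZMod p) = J := by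
    ext u v
    rw [mul_adjMatrix_apply]
    simp [J, hr, hd1]
  have hpow : ∀ k, G.adjMatrix (ZMod p) ^ (k + 2) = J := by
    intro k
    induction k with
    | zero => rw [zero_add, pow_two, hA2]
    | succ k ih => rw [show k + 1 + 2 = (k + 2) + 1 by ring, pow_succ, ih, hJA]
  have htr := ZMod.trace_pow_card (p := p) (G.adjMatrix (ZMod p))
  obtain ⟨k, rfl⟩ : ∃ k, p = k + 2 := ⟨p - 2, by have := hp.two_le; omega⟩
  rw [hpow, trace_adjMatrix] at htr
  simp [J, Matrix.trace, hn1] at htr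

theorem c4_unique {V : Type} {G : SimpleGraph V} (h : C4Free G) {a c b d : V} (hac : a ≠ c)
    (h1 : G.Adj a b) (h2 : G.Adj c b) (h3 : G.Adj a d) (h4 : G.Adj c d) : b = d := by
  by_contra hbd
  exact h ⟨a, b, c, d, h1.ne, hac, h3.ne, h2.ne.symm, hbd, h4.ne, h1, h2.symm, h4, h3.symm⟩

/-- One new vertex `none`, adjacent exactly to `T`. -/
def extG {V : Type} (G : SimpleGraph V) (T : V → Prop) : SimpleGraph (Option V) where
  Adj a b := match a, b with
    | none, none => False
    | some a, some b => G.Adj a b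
    | none, some b => T b
    | some a, none => T a
  symm := ⟨by
    rintro (_ | a) (_ | b) h
    · exact h
    · exact h
    · exact h
    · exact SimpleGraph.Adj.symm h⟩
  loopless := ⟨by
    rintro (_ | a) h
    · exact h
    · exact G.irrefl h⟩

section
variable {V : Type} (G : SimpleGraph V) (T : V → Prop)
@[simp] theorem extG_nn : (extG G T).Adj none none ↔ False := Iff.rfl
@[simp] theorem extG_ss (a b : V) : (extG G T).Adj (some a) (some b) ↔ G.Adj a b := Iff.rfl
@[simp] theorem extG_ns (b : V) : (extG G T).Adj none (some b) ↔ T b := Iff.rfl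
@[simp] theorem extG_sn (a : V) : (extG G T).Adj (some a) none ↔ T a := Iff.rfl

/-- The inclusion of the old graph. -/
def extEmb : G ↪g extG G T where
  toFun := some
  inj' := Option.some_injective _
  map_rel_iff' := Iff.rfl

@[simp] theorem extEmb_apply (a : V) : extEmb G T a = some a := rfl

variable {G T}
theorem extG_c4 (hG : C4Free G)
    (hT : ∀ a b, T a → T b → a ≠ b → ∀ c, ¬ (G.Adj a c ∧ G.Adj b c)) : C4Free (extG G T) := by
  rintro ⟨a, b, c, d, hab, hac, had, hbc, hbd, hcd, h1, h2, h3, h4⟩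
  have key : ∀ x y z, x ≠ z → T x → T z → G.Adj x y → G.Adj y z → False :=
    fun x y z hxz hx hz h1 h2 => hT x z hx hz hxz y ⟨h1, h2.symm⟩
  rcases a with _ | a <;> rcases b with _ | b <;> rcases c with _ | c <;> rcases d with _ | d <;>
    simp only [extG_ss, extG_ns, extG_sn, ne_eq, Option.some.injEq, not_true_eq_false]
      at *
  · exact key b c d hbd h1 h4 h2 h3
  · exact key c d a (Ne.symm hac) h2 h1 h3 h4
  · exact key d a b (Ne.symm hbd) h3 h2 h4 h1
  · exact key a b c hac h4 h3 h1 h2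
  · exact hG ⟨a, b, c, d, hab, hac, had, hbc, hbd, hcd, h1, h2, h3, h4⟩
end

/-- `G` has two extensions that do not amalgamate over `S`. -/
def Bad {V : Type} (G : SimpleGraph V) (S : V → Prop) : Prop :=
  ∃ (γ : Type) (_ : Fintype γ) (B : SimpleGraph γ) (δ : Type) (_ : Fintype δ) (C : SimpleGraph δ)
    (f : G ↪g B) (g : G ↪g C), C4Free B ∧ C4Free C ∧
    ∀ (ε : Type) (D : SimpleGraph ε), C4Free D → ∀ (f' : B ↪g D) (g' : C ↪g D),
      ¬ ∀ s, S s → f' (f s) = g' (g s)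

/-- The old set together with the new vertex. -/
def insS {V : Type} (S : V → Prop) : Option V → Prop
  | none => True
  | some a => S a

@[simp] theorem insS_none {V : Type} (S : V → Prop) : insS S none ↔ True := Iff.rfl
@[simp] theorem insS_some {V : Type} (S : V → Prop) (a : V) : insS S (some a) ↔ S a := Iff.rfl

theorem bad_step {V : Type} {G : SimpleGraph V} {S : V → Prop} (x y : V) (hx : S x) (hy : S y)
    (hxy : x ≠ y) (h : Bad (extG G (fun a => a = x ∨ a = y)) (insS S)) : Bad G S := by
  obtain ⟨γ, i1, B, δ, i2, C, f, g, hB, hC, H⟩ := h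
  refine ⟨γ, i1, B, δ, i2, C, (extEmb G _).trans f, (extEmb G _).trans g, hB, hC, ?_⟩
  intro ε D hD f' g' hS
  refine H ε D hD f' g' ?_
  have hS' : ∀ s, S s → f' (f (some s)) = g' (g (some s)) := fun s hs => hS s hs
  rintro (_ | s) hs
  · refine c4_unique hD (a := f' (f (some x))) (c := f' (f (some y))) ?_ ?_ ?_ ?_ ?_
    · simpa using hxy
    · simp
    · simp
    · rw [hS' x hx]; simp
    · rw [hS' y hy]; simp
  · exact hS' s hs

theorem bad_triple {V : Type} [Fintype V] {G : SimpleGraph V} {S : V → Prop} (hG : C4Free G)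
    (x y z : V) (hx : S x) (hy : S y) (hz : S z) (hxy : x ≠ y) (hxz : x ≠ z) (hyz : y ≠ z)
    (n1 : ∀ c, ¬ (G.Adj x c ∧ G.Adj y c)) (n2 : ∀ c, ¬ (G.Adj x c ∧ G.Adj z c))
    (n3 : ∀ c, ¬ (G.Adj y c ∧ G.Adj z c)) : Bad G S := by
  refine ⟨Option V, inferInstance, extG G (fun a => a = x ∨ a = y), Option V, inferInstance,
    extG G (fun a => a = x ∨ a = y ∨ a = z), extEmb G _, extEmb G _, ?_, ?_, ?_⟩
  · refine extG_c4 hG ?_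
    rintro a b (rfl | rfl) (rfl | rfl) hab c hc
    · exact hab rfl
    · exact n1 c hc
    · exact n1 c hc.symm
    · exact hab rfl
  · refine extG_c4 hG ?_
    rintro a b (rfl | rfl | rfl) (rfl | rfl | rfl) hab c hc
    · exact hab rfl
    · exact n1 c hc
    · exact n2 c hc
    · exact n1 c hc.symm
    · exact hab rfl
    · exact n3 c hc
    · exact n2 c hc.symm
    · exact n3 c hc.symm
    · exact hab rfl
  · intro ε D hD f' g' hS
    simp only [extEmb_apply] at hS
    have e : f' none = g' none := by
      refine c4_unique hD (a := f' (some x)) (c := f' (some y)) ?_ ?_ ?_ ?_ ?_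
      · simpa using hxy
      · simp
      · simp
      · rw [hS x hx]; simp
      · rw [hS y hy]; simp
    have h1 : D.Adj (g' none) (g' (some z)) := by simp
    rw [← e, ← hS z hz] at h1
    have h2 : z = x ∨ z = y := by simpa using h1
    rcases h2 with h2 | h2
    · exact hxz h2.symm
    · exact hyz h2.symm

theorem pair_c4 {V : Type} {G : SimpleGraph V} (hG : C4Free G) (x y : V)
    (n1 : ∀ c, ¬ (G.Adj x c ∧ G.Adj y c)) : C4Free (extG G (fun a => a = x ∨ a = y)) := by
  refine extG_c4 hG ?_
  rintro a b (rfl | rfl) (rfl | rfl) hab c hc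
  · exact hab rfl
  · exact n1 c hc
  · exact n1 c hc.symm
  · exact hab rfl

theorem bad_main {V : Type} [Fintype V] {G : SimpleGraph V} {S : V → Prop} (hG : C4Free G)
    (x y a b c : V) (hx : S x) (hy : S y) (ha : S a) (hb : S b) (hc : S c) (hxy : x ≠ y)
    (hab : a ≠ b) (hac : a ≠ c) (hbc : b ≠ c)
    (n : ∀ c, ¬ (G.Adj x c ∧ G.Adj y c))
    (ax : a ≠ x) (ay : a ≠ y) (bx : b ≠ x) (bY : b ≠ y) (cx : c ≠ x) (cy : c ≠ y)
    (nax : ¬ G.Adj a x) (nay : ¬ G.Adj a y) (nbx : ¬ G.Adj b x) (nby : ¬ G.Adj b y)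
    (ncx : ¬ G.Adj c x) (ncy : ¬ G.Adj c y) : Bad G S := by
  have hG1 := pair_c4 hG x y n
  refine bad_step x y hx hy hxy ?_
  -- the new vertex is z
  have hG2 := pair_c4 hG1 none (some a) (by
    simp only [Option.forall]; grind [extG_nn, extG_ss, extG_sn, extG_ns])
  refine bad_step none (some a) (by simp) (by simpa) (by simp) ?_
  have hG3 := pair_c4 hG2 (some none) (some (some b)) (by
    simp only [Option.forall]; grind [extG_nn, extG_ss, extG_sn, extG_ns])
  refine bad_step (some none) (some (some b)) (by simp) (by simpa) (by simp) ?_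
  have hG4 := pair_c4 hG3 (some (some none)) (some (some (some c))) (by
    simp only [Option.forall]; grind [extG_nn, extG_ss, extG_sn, extG_ns])
  refine bad_step (some (some none)) (some (some (some c))) (by simp) (by simpa) (by simp) ?_
  -- now: v_c = none, v_b = some none, v_a = some some none, z = some some some none
  have hG5 := pair_c4 hG4 (some (some none)) (some (some (some (some a)))) (by
    simp only [Option.forall]; grind [extG_nn, extG_ss, extG_sn, extG_ns, SimpleGraph.irrefl])
  refine bad_step (some (some none)) (some (some (some (some a)))) (by simp) (by simpa)
    (by simp) ?_
  have hG6 := pair_c4 hG5 (some (some none)) (some (some (some (some (some b))))) (by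
    simp only [Option.forall]; grind [extG_nn, extG_ss, extG_sn, extG_ns, SimpleGraph.irrefl])
  refine bad_step (some (some none)) (some (some (some (some (some b))))) (by simp) (by simpa)
    (by simp) ?_
  have hG7 := pair_c4 hG6 (some (some none)) (some (some (some (some (some (some c)))))) (by
    simp only [Option.forall]; grind [extG_nn, extG_ss, extG_sn, extG_ns, SimpleGraph.irrefl])
  refine bad_step (some (some none)) (some (some (some (some (some (some c)))))) (by simp)
    (by simpa) (by simp) ?_
  refine bad_triple hG7 none (some none) (some (some none)) (by simp) (by simp) (by simp)
    (by simp) (by simp) (by simp) ?_ ?_ ?_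
  all_goals
    clear hG1 hG2 hG3 hG4 hG5 hG6 hG7
    simp [Option.forall, hab.symm, hac.symm, hbc.symm]

/-- Closure under common neighbours. -/
inductive Cl {V : Type} (G : SimpleGraph V) (S : V → Prop) : V → Prop
  | base (a : V) : S a → Cl G S a
  | step (x y z : V) : Cl G S x → Cl G S y → x ≠ y → G.Adj x z → G.Adj y z → Cl G S z

theorem bad_cl {V : Type} {G : SimpleGraph V} {S : V → Prop} (h : Bad G (Cl G S)) : Bad G S := by
  obtain ⟨γ, i1, B, δ, i2, C, f, g, hB, hC, H⟩ := h
  refine ⟨γ, i1, B, δ, i2, C, f, g, hB, hC, ?_⟩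
  intro ε D hD f' g' hS
  refine H ε D hD f' g' ?_
  intro s hs
  induction hs with
  | base a ha => exact hS a ha
  | step x y z _ _ hxy h1 h2 ihx ihy =>
    refine c4_unique hD (a := f' (f x)) (c := f' (f y)) ?_ ?_ ?_ ?_ ?_
    · simpa using hxy
    · simpa using h1
    · simpa using h2
    · rw [ihx]; simpa using h1
    · rw [ihy]; simpa using h2

/-- Three disjoint stars with seven leaves each. -/
def stars : SimpleGraph (Fin 3 × Option (Fin 7)) where
  Adj a b := a.1 = b.1 ∧ ((a.2 = none ∧ b.2 ≠ none) ∨ (a.2 ≠ none ∧ b.2 = none))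
  symm := ⟨by rintro a b ⟨h, h'⟩; exact ⟨h.symm, by tauto⟩⟩
  loopless := ⟨by rintro a ⟨h, h'⟩; tauto⟩

theorem stars_c4 : C4Free stars := by
  rintro ⟨⟨a, a'⟩, ⟨b, b'⟩, ⟨c, c'⟩, ⟨d, d'⟩, hab, hac, had, hbc, hbd, hcd, h1, h2, h3, h4⟩
  simp only [stars, ne_eq, Prod.mk.injEq] at *
  grind

/-- Among seven common neighbours, three avoid both neighbourhoods. -/
theorem three_outside {V : Type} [Fintype V] [DecidableEq V] {G : SimpleGraph V} (hG : C4Free G)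
    (x y c : V) (hcx : c ≠ x) (hcy : c ≠ y) (l : Fin 7 → V) (hl : Function.Injective l)
    (hadj : ∀ i, G.Adj c (l i)) : ∃ i j k, i ≠ j ∧ i ≠ k ∧ j ≠ k ∧
      ∀ t, (t = i ∨ t = j ∨ t = k) → l t ≠ x ∧ l t ≠ y ∧ ¬ G.Adj (l t) x ∧ ¬ G.Adj (l t) y := by
  classical
  let Q : V → Finset (Fin 7) := fun x => Finset.univ.filter fun t => l t = x
  let P : V → Finset (Fin 7) := fun x => Finset.univ.filter fun t => G.Adj (l t) x
  have hQ : ∀ x, (Q x).card ≤ 1 := by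
    intro x
    rw [Finset.card_le_one]
    intro i hi j hj
    simp only [Q, Finset.mem_filter, Finset.mem_univ, true_and] at hi hj
    exact hl (hi.trans hj.symm)
  have hP : ∀ x, c ≠ x → (P x).card ≤ 1 := by
    intro x hx
    rw [Finset.card_le_one]
    intro i hi j hj
    simp only [P, Finset.mem_filter, Finset.mem_univ, true_and] at hi hj
    exact hl (c4_unique hG hx (hadj i) hi.symm (hadj j) hj.symm)
  have hcard : 2 < ((Q x ∪ Q y ∪ (P x ∪ P y))ᶜ).card := by
    rw [Finset.card_compl]
    have h1 := Finset.card_union_le (Q x ∪ Q y) (P x ∪ P y)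
    have h2 := Finset.card_union_le (Q x) (Q y)
    have h3 := Finset.card_union_le (P x) (P y)
    have := hQ x
    have := hQ y
    have := hP x hcx
    have := hP y hcy
    simp only [Fintype.card_fin]
    omega
  obtain ⟨i, j, k, hi, hj, hk, hij, hik, hjk⟩ := Finset.two_lt_card_iff.mp hcard
  refine ⟨i, j, k, hij, hik, hjk, ?_⟩
  simp only [Q, P, Finset.mem_compl, Finset.mem_union, Finset.mem_filter, Finset.mem_univ,
    true_and, not_or] at hi hj hk
  rintro t (rfl | rfl | rfl) <;> tauto

theorem bad_stars {V : Type} [Fintype V] {G : SimpleGraph V} (hG : C4Free G) (e : stars ↪g G) :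
    Bad G (fun v => ∃ a, e a = v) := by
  classical
  apply bad_cl
  set S := Cl G (fun v => ∃ a, e a = v) with hS
  have hSe : ∀ a, S (e a) := fun a => Cl.base _ ⟨a, rfl⟩
  have hadj : ∀ i t, G.Adj (e (i, none)) (e (i, some t)) := by
    intro i t
    rw [e.map_adj_iff]
    simp [stars]
  by_cases hex : ∃ x y, S x ∧ S y ∧ x ≠ y ∧ ∀ c, ¬ (G.Adj x c ∧ G.Adj y c)
  · obtain ⟨x, y, hx, hy, hxy, n⟩ := hex
    obtain ⟨m, hm1, hm2⟩ : ∃ m : Fin 3, e (m, none) ≠ x ∧ e (m, none) ≠ y := by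
      by_contra hcon
      push Not at hcon
      have inj : ∀ m m' : Fin 3, e (m, none) = e (m', none) → m = m' := by
        intro m m' h
        simpa using h
      have i01 := inj 0 1
      have i02 := inj 0 2
      have i12 := inj 1 2
      have c0 := hcon 0
      have c1 := hcon 1
      have c2 := hcon 2
      have n01 : ¬ (0 : Fin 3) = 1 := by decide
      have n02 : ¬ (0 : Fin 3) = 2 := by decide
      have n12 : ¬ (1 : Fin 3) = 2 := by decide
      by_cases h0 : e (0, none) = x
      · have h1 := c1 (fun h => n01 (i01 (h0.trans h.symm)))
        have h2 := c2 (fun h => n02 (i02 (h0.trans h.symm)))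
        exact n12 (i12 (h1.trans h2.symm))
      · have h0' := c0 h0
        by_cases h1 : e (1, none) = x
        · have h2 := c2 (fun h => n12 (i12 (h1.trans h.symm)))
          exact n02 (i02 (h0'.trans h2.symm))
        · exact n01 (i01 (h0'.trans (c1 h1).symm))
    obtain ⟨i, j, k, hij, hik, hjk, H⟩ := three_outside hG x y (e (m, none)) hm1 hm2
      (fun t => e (m, some t)) (by intro t t' h; simpa using h) (hadj m)
    have Hi := H i (by simp)
    have Hj := H j (by simp)
    have Hk := H k (by simp)
    exact bad_main hG x y (e (m, some i)) (e (m, some j)) (e (m, some k)) hx hy (hSe _) (hSe _)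
      (hSe _) hxy (by simpa using hij) (by simpa using hik) (by simpa using hjk) n
      Hi.1 Hi.2.1 Hj.1 Hj.2.1 Hk.1 Hk.2.1 Hi.2.2.1 Hi.2.2.2 Hj.2.2.1 Hj.2.2.2 Hk.2.2.1 Hk.2.2.2
  · exfalso
    push Not at hex
    let W := {v : V // S v}
    let F : SimpleGraph W := G.comap Subtype.val
    have hF : ∀ u v : W, F.Adj u v ↔ G.Adj u.1 v.1 := fun u v => Iff.rfl
    refine friendship_aux F ?_ ?_ ⟨e (0, none), hSe _⟩ ?_
    · rintro ⟨u, hu⟩ ⟨v, hv⟩ huv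
      have huv' : u ≠ v := fun h => huv (Subtype.ext h)
      obtain ⟨w, h1, h2⟩ := hex u v hu hv huv'
      refine ⟨⟨w, Cl.step u v w hu hv huv' h1 h2⟩, ⟨h1, h2⟩, ?_⟩
      rintro ⟨w', hw'⟩ ⟨h3, h4⟩
      exact Subtype.ext (c4_unique hG huv' h3 h4 h1 h2)
    · rintro ⟨p, hp⟩
      by_contra hcon
      push Not at hcon
      have hall : ∀ a, e a ≠ p → G.Adj p (e a) := fun a ha =>
        hcon ⟨e a, hSe a⟩ (fun h => ha (congrArg Subtype.val h))
      have hc : ∀ m : Fin 3, e (m, none) = p := by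
        intro m
        by_contra hm
        obtain ⟨i, j, k, hij, hik, hjk, H⟩ := three_outside hG p p (e (m, none)) hm hm
          (fun t => e (m, some t)) (by intro t t' h; simpa using h) (hadj m)
        have Hi := H i (by simp)
        exact Hi.2.2.1 (hall _ Hi.1).symm
      have := (hc 0).trans (hc 1).symm
      simp at this
    · let l : Fin 7 → W := fun t => ⟨e (0, some t), hSe _⟩
      have hl : Function.Injective l := by
        intro t t' h
        have := congrArg Subtype.val h
        simpa [l] using this
      have : (Finset.univ.image l).card ≤ F.degree ⟨e (0, none), hSe _⟩ := by
        rw [← card_neighborFinset_eq_degree]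
        apply Finset.card_le_card
        intro w hw
        simp only [Finset.mem_image, Finset.mem_univ, true_and] at hw
        obtain ⟨t, rfl⟩ := hw
        rw [mem_neighborFinset]
        exact hadj 0 t
      rw [Finset.card_image_of_injective _ hl] at this
      simp only [Finset.card_univ, Fintype.card_fin] at this
      omega

/-- The class of all finite `C₄`-free graphs does not have the weak amalgamation property. -/
theorem c4Free_not_wap : ¬ GraphWAP (fun _ G => C4Free G) := by
  intro h
  obtain ⟨β, iβ, A', i, hA', H⟩ := h _ stars stars_c4
  obtain ⟨γ, i1, B, δ, i2, C, f, g, hB, hC, K⟩ := bad_stars hA' i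
  obtain ⟨ε, _, D, hD, f', g', hfg⟩ := H γ B hB δ C hC f g
  refine K ε D hD f' g' ?_
  rintro s ⟨a, rfl⟩
  exact hfg a
end

section
/- Let the bowtie be the graph consisting of two triangles sharing exactly one common vertex. The class K(bowtie) of all finite bowtie-free graphs has the weak amalgamation property. -/
open SimpleGraph

namespace BowtieWAP

theorem prop_aux {a b c x y z : Prop} (h1 : (a ∧ b) ∨ (x ∧ y)) (h2 : (a ∧ c) ∨ (x ∧ z))
    (h3 : (b ∧ c) ∨ (y ∧ z)) : (a ∧ b ∧ c) ∨ (x ∧ y ∧ z) := by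
  tauto

/-- Link formulation of bowtie-freeness. -/
def BF {V : Type} (G : SimpleGraph V) : Prop :=
  ∀ v a b c d, G.Adj v a → G.Adj v b → G.Adj a b → G.Adj v c → G.Adj v d → G.Adj c d →
    a = c ∨ a = d ∨ b = c ∨ b = d

theorem bf_iff {V : Type} (G : SimpleGraph V) : ¬ Contains bowtie G ↔ BF G := by
  constructor
  · intro h v a b c d h1 h2 h3 h4 h5 h6
    by_contra hne
    push Not at hne
    obtain ⟨n1, n2, n3, n4⟩ := hne
    apply h
    have := h1.ne
    have := h2.ne
    have := h3.ne
    have := h4.ne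
    have := h5.ne
    have := h6.ne
    refine ⟨⟨![v, a, b, c, d], ?_⟩, ?_⟩
    · intro i j hij
      have s1 := h1.symm
      have s2 := h2.symm
      have s3 := h3.symm
      have s4 := h4.symm
      have s5 := h5.symm
      have s6 := h6.symm
      fin_cases i <;> fin_cases j <;> simp [bowtie] at hij ⊢ <;> assumption
    · intro i j hij
      fin_cases i <;> fin_cases j <;> simp at hij ⊢ <;> simp_all
  · rintro h ⟨f, hf⟩
    have e : ∀ i j, bowtie.Adj i j → G.Adj (f i) (f j) := fun i j hij => f.map_rel hij
    have := h (f 0) (f 1) (f 2) (f 3) (f 4) (e _ _ (by simp [bowtie])) (e _ _ (by simp [bowtie]))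
      (e _ _ (by simp [bowtie])) (e _ _ (by simp [bowtie])) (e _ _ (by simp [bowtie]))
      (e _ _ (by simp [bowtie]))
    simp [hf.eq_iff] at this

/-- `v` is in a diamond, on the middle edge or as a tip. -/
def Good {V : Type} (G : SimpleGraph V) (v : V) : Prop :=
  ∃ w x y, G.Adj v x ∧ G.Adj v y ∧ G.Adj w x ∧ G.Adj w y ∧
    ((x ≠ y ∧ G.Adj v w) ∨ (v ≠ w ∧ G.Adj x y))

theorem Good.map {V W : Type} {G : SimpleGraph V} {H : SimpleGraph W} (f : G ↪g H) {v : V}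
    (h : Good G v) : Good H (f v) := by
  obtain ⟨w, x, y, h1, h2, h3, h4, h5⟩ := h
  refine ⟨f w, f x, f y, ?_⟩
  simpa [f.injective.eq_iff] using ⟨h1, h2, h3, h4, h5⟩

/-- Add one vertex adjacent to `x` and `y`. -/
def ext {V : Type} (G : SimpleGraph V) (x y : V) : SimpleGraph (Option V) where
  Adj p q := match p, q with
    | some a, some b => G.Adj a b
    | some a, none => a = x ∨ a = y
    | none, some a => a = x ∨ a = y
    | none, none => False
  symm := ⟨by rintro (_ | a) (_ | b) <;> simp [G.adj_comm]⟩
  loopless := ⟨by rintro (_ | a) <;> simp⟩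

section
variable {V : Type} (G : SimpleGraph V) (x y a b : V)
@[simp] theorem ext_ss : (ext G x y).Adj (some a) (some b) ↔ G.Adj a b := Iff.rfl
@[simp] theorem ext_sn : (ext G x y).Adj (some a) none ↔ a = x ∨ a = y := Iff.rfl
@[simp] theorem ext_ns : (ext G x y).Adj none (some a) ↔ a = x ∨ a = y := Iff.rfl
@[simp] theorem ext_nn : ¬ (ext G x y).Adj none none := fun h => h

def extEmb : G ↪g ext G x y where
  toFun := some
  inj' := Option.some_injective _
  map_rel_iff' := by simp

@[simp] theorem extEmb_apply : extEmb G x y a = some a := rfl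
end

theorem ext_bf {V : Type} {G : SimpleGraph V} (hG : BF G) (x y : V)
    (h : x = y ∨ (G.Adj x y ∧ (∀ p q, G.Adj x p → G.Adj x q → G.Adj p q → p = y ∨ q = y) ∧
      (∀ p q, G.Adj y p → G.Adj y q → G.Adj p q → p = x ∨ q = x))) : BF (ext G x y) := by
  have irr : ∀ a, ¬ G.Adj a a := fun a => G.irrefl
  have sym : ∀ a b, G.Adj a b → G.Adj b a := fun a b h => h.symm
  rintro (_ | v) (_ | a) (_ | b) (_ | c) (_ | d) h1 h2 h3 h4 h5 h6 <;>
    simp only [ext_ss, ext_sn, ext_ns, ext_nn] at h1 h2 h3 h4 h5 h6 <;>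
    simp only [Option.some.injEq, reduceCtorEq, or_false, false_or, or_true, true_or]
  · grind
  · grind
  · grind
  · grind
  · grind
  · exact hG v a b c d h1 h2 h3 h4 h5 h6

theorem step {V : Type} [Fintype V] {G : SimpleGraph V} (hG : BF G) (v : V) (hv : ¬ Good G v) :
    ∃ (W : Type) (_ : Fintype W) (H : SimpleGraph W) (i : G ↪g H), BF H ∧ Good H (i v) ∧
      ∀ w : W, Good H w ∨ ∃ u, i u = w := by
  have irr : ∀ a, ¬ G.Adj a a := fun a => G.irrefl
  have sym : ∀ a b, G.Adj a b → G.Adj b a := fun a b h => h.symm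
  by_cases ht : ∃ x y, G.Adj v x ∧ G.Adj v y ∧ G.Adj x y
  · obtain ⟨x, y, h1, h2, h3⟩ := ht
    refine ⟨Option V, inferInstance, ext G x y, extEmb G x y, ?_, ?_, ?_⟩
    · apply ext_bf hG
      right
      refine ⟨h3, ?_, ?_⟩
      · intro p q hp hq hpq
        by_contra hne
        have := hG x v y p q
        apply hv
        have key : ∃ q, q ≠ y ∧ G.Adj v q ∧ G.Adj x q := by grind
        obtain ⟨q, hq1, hq2, hq3⟩ := key
        exact ⟨x, y, q, h2, hq2, h3, hq3, Or.inl ⟨hq1.symm, h1⟩⟩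
      · intro p q hp hq hpq
        by_contra hne
        have := hG y v x p q
        apply hv
        have key : ∃ q, q ≠ x ∧ G.Adj v q ∧ G.Adj y q := by grind
        obtain ⟨q, hq1, hq2, hq3⟩ := key
        exact ⟨y, x, q, h1, hq2, h3.symm, hq3, Or.inl ⟨hq1.symm, h2⟩⟩
    · exact ⟨none, some x, some y, by simp [h1, h2, h3]⟩
    · rintro (_ | w)
      · exact Or.inl ⟨some v, some x, some y, by simp [h1, h2, h3]⟩
      · exact Or.inr ⟨w, rfl⟩
  · push Not at ht
    let G1 := ext G v v
    have b1 : BF G1 := ext_bf hG v v (Or.inl rfl)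
    let G2 := ext G1 (some v) none
    have b2 : BF G2 := by
      apply ext_bf b1
      right
      refine ⟨by simp [G1], ?_, ?_⟩
      · rintro (_ | p) (_ | q) <;> simp [G1]
        exact ht p q
      · rintro (_ | p) (_ | q) <;> simp [G1] <;> grind
    let G3 := ext G2 (some (some v)) (some none)
    have b3 : BF G3 := by
      apply ext_bf b2
      right
      refine ⟨by simp [G2, G1], ?_, ?_⟩
      · rintro (_ | _ | p) (_ | _ | q) <;> simp [G1, G2] <;> grind
      · rintro (_ | _ | p) (_ | _ | q) <;> simp [G1, G2] <;> grind
    refine ⟨Option (Option (Option V)), inferInstance, G3,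
      (extEmb _ _ _).comp ((extEmb _ _ _).comp (extEmb _ _ _)), b3, ?_, ?_⟩
    · exact ⟨some (some none), none, some none, by simp [G3, G2, G1]⟩
    · rintro (_ | _ | _ | w)
      · exact Or.inl ⟨some none, some (some none), some (some (some v)), by simp [G3, G2, G1]⟩
      · exact Or.inl ⟨none, some (some none), some (some (some v)), by simp [G3, G2, G1]⟩
      · exact Or.inl ⟨some (some (some v)), none, some none, by simp [G3, G2, G1]⟩
      · exact Or.inr ⟨w, rfl⟩

theorem exists_good (n : ℕ) : ∀ (V : Type) [Fintype V] (G : SimpleGraph V), BF G →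
    ∀ l : List V, l.length = n → (∀ v, v ∈ l ∨ Good G v) →
    ∃ (W : Type) (_ : Fintype W) (H : SimpleGraph W) (_ : G ↪g H), BF H ∧ ∀ w, Good H w := by
  induction n with
  | zero =>
    intro V _ G hG l hl h
    obtain rfl := List.length_eq_zero_iff.mp hl
    exact ⟨V, inferInstance, G, Embedding.refl, hG, by simpa using h⟩
  | succ n ih =>
    intro V _ G hG l hl h
    match l, hl, h with
    | v :: l, hl, h =>
      by_cases hv : Good G v
      · refine ih V G hG l (by simpa using hl) ?_
        intro u
        rcases h u with hu | hu
        · rcases List.mem_cons.mp hu with rfl | hu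
          · exact Or.inr hv
          · exact Or.inl hu
        · exact Or.inr hu
      · obtain ⟨W, _, H, i, hH, hgv, hw⟩ := step hG v hv
        obtain ⟨X, fX, K, j, hK, hall⟩ := ih W H hH (l.map i) (by simpa using hl) (by
          intro w
          rcases hw w with hw | ⟨u, rfl⟩
          · exact Or.inr hw
          · rcases h u with hu | hu
            · rcases List.mem_cons.mp hu with rfl | hu
              · exact Or.inr hgv
              · exact Or.inl (List.mem_map_of_mem hu)
            · exact Or.inr (hu.map i))
        exact ⟨X, fX, K, j.comp i, hK, hall⟩

/-- Triangles at good vertices are controlled by the base. -/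
theorem key {V : Type} {G : SimpleGraph V} {a : V} (ha : Good G a) :
    (∃ w, ∀ (W : Type) (H : SimpleGraph W) (f : G ↪g H), BF H → ∀ p q,
      H.Adj (f a) p → H.Adj (f a) q → H.Adj p q → p = f w ∨ q = f w) ∨
    (∃ x y z, ∀ (W : Type) (H : SimpleGraph W) (f : G ↪g H), BF H → ∀ p q,
      H.Adj (f a) p → H.Adj (f a) q → H.Adj p q →
        (p = f x ∨ p = f y ∨ p = f z) ∧ (q = f x ∨ q = f y ∨ q = f z)) := by
  obtain ⟨w, x, y, h1, h2, h3, h4, h5⟩ := ha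
  by_cases hk : G.Adj a w ∧ G.Adj x y
  · right
    refine ⟨w, x, y, ?_⟩
    intro W H f hH p q hp hq hpq
    have e : ∀ u v, G.Adj u v → H.Adj (f u) (f v) := fun u v h => f.map_rel_iff.mpr h
    have n1 := (e _ _ h3).ne
    have n2 := (e _ _ h4).ne
    have n3 := (e _ _ hk.2).ne
    have n4 := hpq.ne
    have t1 := hH (f a) p q (f w) (f x) hp hq hpq (e _ _ hk.1) (e _ _ h1) (e _ _ h3)
    have t2 := hH (f a) p q (f w) (f y) hp hq hpq (e _ _ hk.1) (e _ _ h2) (e _ _ h4)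
    have t3 := hH (f a) p q (f x) (f y) hp hq hpq (e _ _ h1) (e _ _ h2) (e _ _ hk.2)
    grind
  · left
    rcases h5 with ⟨hxy, haw⟩ | ⟨haw, hxy⟩
    · refine ⟨w, ?_⟩
      intro W H f hH p q hp hq hpq
      have e : ∀ u v, G.Adj u v → H.Adj (f u) (f v) := fun u v h => f.map_rel_iff.mpr h
      have n : ¬ H.Adj (f x) (f y) := fun h => hk ⟨haw, f.map_rel_iff.mp h⟩
      have n' : ¬ H.Adj (f y) (f x) := fun h => n h.symm
      have t1 := hH (f a) p q (f w) (f x) hp hq hpq (e _ _ haw) (e _ _ h1) (e _ _ h3)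
      have t2 := hH (f a) p q (f w) (f y) hp hq hpq (e _ _ haw) (e _ _ h2) (e _ _ h4)
      have n3 : f x ≠ f y := fun h => hxy (f.injective h)
      grind
    · refine ⟨x, ?_⟩
      intro W H f hH p q hp hq hpq
      have e : ∀ u v, G.Adj u v → H.Adj (f u) (f v) := fun u v h => f.map_rel_iff.mpr h
      have n : ¬ H.Adj (f a) (f w) := fun h => hk ⟨f.map_rel_iff.mp h, hxy⟩
      have t1 := hH (f a) p q (f x) (f y) hp hq hpq (e _ _ h1) (e _ _ h2) (e _ _ hxy)
      have n3 : f a ≠ f w := fun h => haw (f.injective h)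
      have n4 := (e _ _ h2).ne
      have t2 : ∀ r, H.Adj (f a) r → H.Adj (f y) r → r = f x := by
        intro r hr1 hr2
        have := hH (f y) (f a) r (f x) (f w) (e _ _ h2.symm) hr2 hr1 (e _ _ hxy.symm)
          (e _ _ h4.symm) (e _ _ h3.symm)
        have n5 := (e _ _ h1).ne
        grind
      have := hpq.symm
      grind

theorem set_pushout {A B C : Type} [Fintype B] [Fintype C] (f : A → B) (g : A → C)
    (hf : f.Injective) (hg : g.Injective) :
    ∃ (D : Type) (_ : Fintype D) (f' : B → D) (g' : C → D), f'.Injective ∧ g'.Injective ∧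
      (∀ a, f' (f a) = g' (g a)) ∧ (∀ b c, f' b = g' c → ∃ a, f a = b ∧ g a = c) := by
  classical
  let g' : C → B ⊕ C := fun c => if h : ∃ a, g a = c then Sum.inl (f h.choose) else Sum.inr c
  have e1 : ∀ a, g' (g a) = Sum.inl (f a) := by
    intro a
    have h : ∃ a', g a' = g a := ⟨a, rfl⟩
    have : h.choose = a := hg h.choose_spec
    simp only [g', dif_pos h, this]
  have e2 : ∀ c, (¬ ∃ a, g a = c) → g' c = Sum.inr c := by
    intro c h
    simp only [g', dif_neg h]
  refine ⟨B ⊕ C, inferInstance, Sum.inl, g', Sum.inl_injective, ?_, fun a => (e1 a).symm, ?_⟩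
  · intro c d h
    by_cases hc : ∃ a, g a = c <;> by_cases hd : ∃ a, g a = d
    · obtain ⟨a, rfl⟩ := hc
      obtain ⟨b, rfl⟩ := hd
      rw [e1, e1] at h
      rw [hf (Sum.inl_injective h)]
    · obtain ⟨a, rfl⟩ := hc
      rw [e1, e2 _ hd] at h
      cases h
    · obtain ⟨a, rfl⟩ := hd
      rw [e1, e2 _ hc] at h
      cases h
    · rw [e2 _ hc, e2 _ hd] at h
      exact Sum.inr_injective h
  · intro b c h
    by_cases hc : ∃ a, g a = c
    · obtain ⟨a, rfl⟩ := hc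
      rw [e1] at h
      exact ⟨a, (Sum.inl_injective h).symm, rfl⟩
    · rw [e2 _ hc] at h
      cases h

theorem amalg {V W X : Type} [Fintype W] [Fintype X] {A : SimpleGraph V} {B : SimpleGraph W}
    {C : SimpleGraph X} (hA : ∀ a, Good A a) (hB : BF B) (hC : BF C) (f : A ↪g B) (g : A ↪g C) :
    ∃ (Y : Type) (_ : Fintype Y) (D : SimpleGraph Y), BF D ∧
      ∃ (f' : B ↪g D) (g' : C ↪g D), ∀ a, f' (f a) = g' (g a) := by
  obtain ⟨Y, fY, f', g', hf', hg', hc, hp⟩ := set_pushout f g f.injective g.injective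
  let D : SimpleGraph Y :=
    { Adj := fun p q => (∃ b c, B.Adj b c ∧ f' b = p ∧ f' c = q) ∨
        (∃ b c, C.Adj b c ∧ g' b = p ∧ g' c = q)
      symm := ⟨by
        rintro p q (⟨b, c, h, rfl, rfl⟩ | ⟨b, c, h, rfl, rfl⟩)
        · exact Or.inl ⟨c, b, h.symm, rfl, rfl⟩
        · exact Or.inr ⟨c, b, h.symm, rfl, rfl⟩⟩
      loopless := ⟨by
        rintro p (⟨b, c, h, rfl, h2⟩ | ⟨b, c, h, rfl, h2⟩)
        · exact h.ne (hf' h2).symm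
        · exact h.ne (hg' h2).symm⟩ }
  have hD : ∀ p q, D.Adj p q → (∃ b c, B.Adj b c ∧ f' b = p ∧ f' c = q) ∨
        (∃ b c, C.Adj b c ∧ g' b = p ∧ g' c = q) := fun _ _ h => h
  have eB : ∀ b c, D.Adj (f' b) (f' c) ↔ B.Adj b c := by
    intro b c
    refine ⟨fun h => ?_, fun h => Or.inl ⟨b, c, h, rfl, rfl⟩⟩
    rcases h with ⟨b', c', h, h1, h2⟩ | ⟨b', c', h, h1, h2⟩
    · rwa [← hf' h1, ← hf' h2]
    · obtain ⟨a1, rfl, rfl⟩ := hp _ _ h1.symm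
      obtain ⟨a2, rfl, rfl⟩ := hp _ _ h2.symm
      exact f.map_rel_iff.mpr (g.map_rel_iff.mp h)
  have eC : ∀ b c, D.Adj (g' b) (g' c) ↔ C.Adj b c := by
    intro b c
    refine ⟨fun h => ?_, fun h => Or.inr ⟨b, c, h, rfl, rfl⟩⟩
    rcases h with ⟨b', c', h, h1, h2⟩ | ⟨b', c', h, h1, h2⟩
    · obtain ⟨a1, rfl, rfl⟩ := hp _ _ h1
      obtain ⟨a2, rfl, rfl⟩ := hp _ _ h2
      exact g.map_rel_iff.mpr (f.map_rel_iff.mp h)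
    · rwa [← hg' h1, ← hg' h2]
  have edge : ∀ p q, D.Adj p q → ((∃ b, f' b = p) ∧ ∃ b, f' b = q) ∨
      ((∃ b, g' b = p) ∧ ∃ b, g' b = q) := by
    intro p q h
    rcases hD p q h with ⟨b, c, -, h1, h2⟩ | ⟨b, c, -, h1, h2⟩
    · exact Or.inl ⟨⟨b, h1⟩, c, h2⟩
    · exact Or.inr ⟨⟨b, h1⟩, c, h2⟩
  have tri : ∀ p q r, D.Adj p q → D.Adj p r → D.Adj q r →
      (∃ b c d, B.Adj b c ∧ B.Adj b d ∧ B.Adj c d ∧ f' b = p ∧ f' c = q ∧ f' d = r) ∨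
      (∃ b c d, C.Adj b c ∧ C.Adj b d ∧ C.Adj c d ∧ g' b = p ∧ g' c = q ∧ g' d = r) := by
    intro p q r h1 h2 h3
    have : ((∃ b, f' b = p) ∧ (∃ b, f' b = q) ∧ (∃ b, f' b = r)) ∨
        ((∃ b, g' b = p) ∧ (∃ b, g' b = q) ∧ (∃ b, g' b = r)) := by
      exact prop_aux (edge _ _ h1) (edge _ _ h2) (edge _ _ h3)
    rcases this with ⟨⟨b, rfl⟩, ⟨c, rfl⟩, ⟨d, rfl⟩⟩ | ⟨⟨b, rfl⟩, ⟨c, rfl⟩, ⟨d, rfl⟩⟩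
    · exact Or.inl ⟨b, c, d, (eB _ _).1 h1, (eB _ _).1 h2, (eB _ _).1 h3, rfl, rfl, rfl⟩
    · exact Or.inr ⟨b, c, d, (eC _ _).1 h1, (eC _ _).1 h2, (eC _ _).1 h3, rfl, rfl, rfl⟩
  have mixed : ∀ b p q c r s, B.Adj b p → B.Adj b q → B.Adj p q → C.Adj c r → C.Adj c s →
      C.Adj r s → f' b = g' c → f' p = g' r ∨ f' p = g' s ∨ f' q = g' r ∨ f' q = g' s := by
    intro b p q c r s h1 h2 h3 h4 h5 h6 h
    obtain ⟨a, rfl, rfl⟩ := hp _ _ h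
    have n1 := h3.ne
    have n2 := h6.ne
    rcases key (hA a) with ⟨w, hw⟩ | ⟨x, y, z, hw⟩
    · have k1 := hw _ B f hB p q h1 h2 h3
      have k2 := hw _ C g hC r s h4 h5 h6
      have := hc w
      grind
    · have k1 := hw _ B f hB p q h1 h2 h3
      have k2 := hw _ C g hC r s h4 h5 h6
      have := hc x
      have := hc y
      have := hc z
      grind
  refine ⟨Y, fY, D, ?_, ⟨⟨f', hf'⟩, ?_⟩, ⟨⟨g', hg'⟩, ?_⟩, hc⟩
  · intro v p q r s h1 h2 h3 h4 h5 h6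
    rcases tri v p q h1 h2 h3 with ⟨b, c, d, t1, t2, t3, rfl, rfl, rfl⟩ |
        ⟨b, c, d, t1, t2, t3, rfl, rfl, rfl⟩ <;>
      rcases tri _ r s h4 h5 h6 with ⟨b', c', d', s1, s2, s3, e, rfl, rfl⟩ |
        ⟨b', c', d', s1, s2, s3, e, rfl, rfl⟩
    · obtain rfl := hf' e
      have := hB _ _ _ _ _ t1 t2 t3 s1 s2 s3
      grind
    · exact mixed _ _ _ _ _ _ t1 t2 t3 s1 s2 s3 e.symm
    · have := mixed _ _ _ _ _ _ s1 s2 s3 t1 t2 t3 e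
      grind
    · obtain rfl := hg' e
      have := hC _ _ _ _ _ t1 t2 t3 s1 s2 s3
      grind
  · intro a b
    exact eB a b
  · intro a b
    exact eC a b

end BowtieWAP

/-- The class of all finite bowtie-free graphs has the weak amalgamation property. -/
theorem bowtieFree_wap :
    GraphWAP (fun _ G => ¬ Contains bowtie G) := by
  intro α _ A hA
  obtain ⟨β, hβ, A', i, hA', hg⟩ := BowtieWAP.exists_good _ α A ((BowtieWAP.bf_iff A).1 hA)
    Finset.univ.toList rfl (fun v => Or.inl (by simp))
  refine ⟨β, hβ, A', i, (BowtieWAP.bf_iff A').2 hA', ?_⟩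
  intro γ _ B hB δ _ C hC f g
  obtain ⟨ε, hε, D, hD, f', g', h⟩ := BowtieWAP.amalg hg ((BowtieWAP.bf_iff B).1 hB)
    ((BowtieWAP.bf_iff C).1 hC) f g
  exact ⟨ε, hε, D, (BowtieWAP.bf_iff D).2 hD, f', g', fun a => h (i a)⟩
end

section
/- Fix n ≥ 3 and let F = {C_m : m ≥ n} be the family of all cycles of length at least n. The class K(F) of all finite graphs containing no cycle of length at least n (equivalently, admitting no injective graph homomorphism from any C_m with m ≥ n) has the weak amalgamation property. -/
open SimpleGraph

namespace LCF

/-- No cycle of length at least `n` with vertices in `X`. -/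
def NoLongOn (n : ℕ) {V : Type} (G : SimpleGraph V) (X : Set V) : Prop :=
  ∀ (u : V) (c : G.Walk u u), c.IsCycle → (∀ x ∈ c.support, x ∈ X) → c.length < n

/-- Any two vertices of `T` are joined by a walk inside `T`. -/
def ConnOn {V : Type} (G : SimpleGraph V) (T : Set V) : Prop :=
  ∀ a ∈ T, ∀ b ∈ T, ∃ w : G.Walk a b, ∀ x ∈ w.support, x ∈ T

abbrev NoLong (n : ℕ) {V : Type} (G : SimpleGraph V) : Prop := NoLongOn n G Set.univ

theorem noLong_iff {n : ℕ} (hn : 3 ≤ n) {V : Type} (G : SimpleGraph V) :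
    (∀ m : ℕ, n ≤ m → ¬ Contains (SimpleGraph.cycleGraph m) G) ↔ NoLong n G := by
  have key : ∀ m, n ≤ m → (Contains (SimpleGraph.cycleGraph m) G ↔
      ∃ (v : V) (p : G.Walk v v), p.IsCycle ∧ p.length = m) := by
    intro m hm
    rw [← SimpleGraph.cycleGraph_isContained_iff (by omega)]
    constructor
    · rintro ⟨f, hf⟩
      exact ⟨⟨f, hf⟩⟩
    · rintro ⟨f⟩
      exact ⟨f.toHom, f.injective⟩
  constructor
  · intro h u c hc _
    by_contra hlt
    exact h c.length (by omega) ((key _ (by omega)).2 ⟨u, c, hc, rfl⟩)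
  · intro h m hm hcon
    obtain ⟨v, p, hp, hl⟩ := (key m hm).1 hcon
    have := h v p hp (fun _ _ => trivial)
    omega

theorem NoLongOn.mono {n : ℕ} {V : Type} {G : SimpleGraph V} {X Y : Set V}
    (h : NoLongOn n G Y) (hXY : X ⊆ Y) : NoLongOn n G X :=
  fun u c hc hs => h u c hc (fun x hx => hXY (hs x hx))

/-- Walks supported on the range of an embedding lift. -/
theorem lift_walk {V W : Type} {G : SimpleGraph V} {H : SimpleGraph W} (φ : G ↪g H) :
    ∀ {x y : W} (w : H.Walk x y) (a b : V), φ a = x → φ b = y →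
      (∀ z ∈ w.support, z ∈ Set.range φ) →
      ∃ p : G.Walk a b, p.support.map φ = w.support ∧ p.length = w.length := by
  intro x y w
  induction w with
  | nil =>
    intro a b ha hb _
    have : a = b := φ.injective (ha.trans hb.symm)
    subst this
    exact ⟨.nil, by simp [ha], rfl⟩
  | cons h w ih =>
    intro a b ha hb hs
    obtain ⟨a', ha'⟩ := hs _ (List.mem_cons_of_mem _ w.start_mem_support)
    obtain ⟨p, hp, hl⟩ := ih a' b ha' hb (fun z hz => hs z (by simp [hz]))
    have hadj : G.Adj a a' := by
      rw [← φ.map_adj_iff, ha, ha']; exact h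
    exact ⟨.cons hadj p, by simp [ha, hp], by simp [hl]⟩

theorem lift_path {V W : Type} {G : SimpleGraph V} {H : SimpleGraph W} (φ : G ↪g H)
    {a b : V} (w : H.Walk (φ a) (φ b)) (hw : w.IsPath) (hs : ∀ z ∈ w.support, z ∈ Set.range φ) :
    ∃ p : G.Walk a b, p.IsPath ∧ p.support.map φ = w.support ∧ p.length = w.length := by
  obtain ⟨p, hp, hl⟩ := lift_walk φ w a b rfl rfl hs
  refine ⟨p, ?_, hp, hl⟩
  rw [SimpleGraph.Walk.isPath_def] at hw ⊢
  rw [← hp] at hw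
  exact hw.of_map _

theorem NoLong.range {n : ℕ} {V W : Type} {G : SimpleGraph V} {H : SimpleGraph W} (φ : G ↪g H)
    (h : NoLong n G) : NoLongOn n H (Set.range φ) := by
  intro u c hc hs
  obtain ⟨a, rfl⟩ := hs u c.start_mem_support
  obtain ⟨p, hp, hl⟩ := lift_walk φ c a a rfl rfl hs
  rw [← hl]
  refine h a p ?_ (fun _ _ => trivial)
  rw [SimpleGraph.Walk.isCycle_iff_isPath_tail_and_le_length] at hc ⊢
  refine ⟨?_, by omega⟩
  have h1 : ¬ p.Nil := by
    intro hh
    have := SimpleGraph.Walk.length_eq_zero_iff.2 hh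
    omega
  have h2 : ¬ c.Nil := by
    intro hh
    have := SimpleGraph.Walk.length_eq_zero_iff.2 hh
    omega
  have := hc.1
  rw [SimpleGraph.Walk.isPath_def, SimpleGraph.Walk.support_tail_of_not_nil _ h2] at this
  rw [SimpleGraph.Walk.isPath_def, SimpleGraph.Walk.support_tail_of_not_nil _ h1]
  rw [← hp, ← List.map_tail] at this
  exact this.of_map _

theorem NoLong.comap {n : ℕ} {V W : Type} {G : SimpleGraph V} {H : SimpleGraph W} (φ : G ↪g H)
    (h : NoLong n H) : NoLong n G := by
  intro u c hc _
  have := h _ (c.map φ.toHom)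
    ((SimpleGraph.Walk.isCycle_map_iff_of_injective φ.injective).2 hc) (fun _ _ => trivial)
  simpa using this

/-- Split a walk at the first vertex in `T`. -/
theorem split_first {V : Type} {G : SimpleGraph V} (T : Set V) {u v : V} (p : G.Walk u v) :
    v ∈ T → ∃ w ∈ T, ∃ (q : G.Walk u w) (r : G.Walk w v), p = q.append r ∧
      ∀ x ∈ q.support, x ∈ T → x = w := by
  induction p with
  | nil => intro hv; exact ⟨_, hv, .nil, .nil, rfl, by simp⟩
  | @cons a b c h p ih =>
    intro hv
    by_cases ha : a ∈ T
    · exact ⟨a, ha, .nil, .cons h p, rfl, by simp⟩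
    · obtain ⟨w, hw, q, r, e, hq⟩ := ih hv
      refine ⟨w, hw, .cons h q, r, by simp [e], ?_⟩
      intro x hx hxT
      rw [SimpleGraph.Walk.support_cons, List.mem_cons] at hx
      rcases hx with rfl | hx
      · exact absurd hxT ha
      · exact hq x hx hxT

/-- Two internally disjoint paths form a cycle. -/
theorem cycle_of_paths {V : Type} {G : SimpleGraph V} {a b : V}
    {p : G.Walk a b} {q : G.Walk b a} (hp : p.IsPath) (hq : q.IsPath)
    (hd : ∀ x ∈ p.support, x ∈ q.support → x = a ∨ x = b)
    (hl : 1 < p.length) : (p.append q).IsCycle := by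
  refine hp.isCycle_append hq ?_ (Or.inl hl)
  intro x hx hy
  have h1 := hp.support_nodup
  have h2 := hq.support_nodup
  rw [← SimpleGraph.Walk.cons_tail_support, List.nodup_cons] at h1 h2
  rcases hd x (List.mem_of_mem_tail hx) (List.mem_of_mem_tail hy) with rfl | rfl
  · exact h1.1 hx
  · exact h2.1 hy

theorem ear_length {n : ℕ} (hn : 3 ≤ n) {V : Type} {G : SimpleGraph V} {X T : Set V}
    (hX : NoLongOn n G X) (hT : ConnOn G T) (hTX : T ⊆ X) {a b : V} (ha : a ∈ T) (hb : b ∈ T)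
    (hab : a ≠ b)
    (p : G.Walk a b) (hp : p.IsPath) (hpX : ∀ x ∈ p.support, x ∈ X)
    (hpT : ∀ x ∈ p.support, x ∈ T → x = a ∨ x = b) : p.length < n := by
  classical
  by_cases hl : 1 < p.length
  · obtain ⟨w, hw⟩ := hT b hb a ha
    have hsub := w.support_bypass_subset_support
    have hc := cycle_of_paths hp w.bypass_isPath
      (fun x hx hy => hpT x hx (hw x (hsub hy))) hl
    have := hX _ _ hc (by
      intro x hx
      rw [SimpleGraph.Walk.mem_support_append_iff] at hx
      rcases hx with hx | hx
      · exact hpX x hx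
      · exact hTX (hw x (hsub hx)))
    rw [SimpleGraph.Walk.length_append] at this
    omega
  · omega

theorem long_path {n : ℕ} (hn : 3 ≤ n) {V : Type} {G : SimpleGraph V} {X : Set V}
    {T : Finset V} (hX : NoLongOn n G X) (hT : ConnOn G T) (hTX : (T : Set V) ⊆ X) :
    ∀ (k : ℕ) (T' : Finset V), T' ⊆ T → T'.card ≤ k → ∀ {a b : V} (_ : a ∈ T') (_ : b ∈ T)
    (p : G.Walk a b), p.IsPath → (∀ x ∈ p.support, x ∈ X) →
    (∀ x ∈ p.support, x ∈ T → x ∈ T') → p.length ≤ n * k := by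
  classical
  intro k
  induction k with
  | zero =>
    intro T' _ hc a b ha
    rw [Nat.le_zero, Finset.card_eq_zero] at hc
    simp [hc] at ha
  | succ k ih =>
    intro T' hT' hc a b ha hb p hp hpX hpT
    cases p with
    | nil => simp
    | @cons _ a' _ h p =>
      obtain ⟨w, hw, q, r, e, hq⟩ := split_first (T : Set V) p hb
      subst e
      rw [SimpleGraph.Walk.cons_isPath_iff] at hp
      have haw : a ≠ w := by
        rintro rfl
        exact hp.2 (by simp)
      have hr := ih (T'.erase a) ((Finset.erase_subset _ _).trans hT')
        (by rw [Finset.card_erase_of_mem ha]; omega)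
        (a := w) (b := b) (by
          rw [Finset.mem_erase]
          exact ⟨haw.symm, hpT w (by simp) hw⟩) hb r hp.1.of_append_right
        (fun x hx => hpX x (by simp [hx])) (by
          intro x hx hxT
          rw [Finset.mem_erase]
          refine ⟨?_, hpT x (by simp [hx]) hxT⟩
          rintro rfl
          exact hp.2 (by simp [hx]))
      have hqp : (SimpleGraph.Walk.cons h q).IsPath := by
        rw [SimpleGraph.Walk.cons_isPath_iff]
        exact ⟨hp.1.of_append_left, fun hh => hp.2 (by simp [hh])⟩
      have h2 := ear_length hn hX hT hTX (hT' ha) hw haw _ hqp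
        (by
          intro x hx
          rw [SimpleGraph.Walk.support_cons, List.mem_cons] at hx
          rcases hx with rfl | hx
          · exact hpX _ (by simp)
          · exact hpX _ (by simp [hx]))
        (by
          intro x hx hxT
          rw [SimpleGraph.Walk.support_cons, List.mem_cons] at hx
          rcases hx with rfl | hx
          · exact Or.inl rfl
          · exact Or.inr (hq x hx hxT))
      simp only [SimpleGraph.Walk.length_cons, SimpleGraph.Walk.length_append] at h2 ⊢
      rw [Nat.mul_succ]
      omega

theorem long_path' {n : ℕ} (hn : 3 ≤ n) {V : Type} {G : SimpleGraph V} {X : Set V}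
    {T : Finset V} (hX : NoLongOn n G X) (hT : ConnOn G T) (hTX : (T : Set V) ⊆ X)
    {a b : V} (ha : a ∈ T) (hb : b ∈ T) (p : G.Walk a b) (hp : p.IsPath)
    (hpX : ∀ x ∈ p.support, x ∈ X) : p.length ≤ n * T.card :=
  long_path hn hX hT hTX T.card T (Finset.Subset.refl _) le_rfl ha hb p hp hpX (fun _ _ h => h)

theorem ConnOn.union {V : Type} {G : SimpleGraph V} {S T : Set V} (hS : ConnOn G S)
    (hT : ConnOn G T) {c : V} (hcS : c ∈ S) (hcT : c ∈ T) : ConnOn G (S ∪ T) := by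
  have key : ∀ a ∈ S ∪ T, ∃ w : G.Walk a c, ∀ x ∈ w.support, x ∈ S ∪ T := by
    rintro a (ha | ha)
    · obtain ⟨w, hw⟩ := hS a ha c hcS
      exact ⟨w, fun x hx => Or.inl (hw x hx)⟩
    · obtain ⟨w, hw⟩ := hT a ha c hcT
      exact ⟨w, fun x hx => Or.inr (hw x hx)⟩
  intro a ha b hb
  obtain ⟨w, hw⟩ := key a ha
  obtain ⟨w', hw'⟩ := key b hb
  refine ⟨w.append w'.reverse, ?_⟩
  intro x hx
  rw [SimpleGraph.Walk.mem_support_append_iff] at hx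
  rcases hx with hx | hx
  · exact hw x hx
  · exact hw' x (by simpa using hx)

theorem connOn_support {V : Type} {G : SimpleGraph V} {u v : V} (p : G.Walk u v) :
    ConnOn G {x | x ∈ p.support} := by
  have key : ∀ a ∈ p.support, ∃ w : G.Walk a v, ∀ x ∈ w.support, x ∈ p.support := by
    intro a ha
    obtain ⟨q, r, e⟩ := SimpleGraph.Walk.mem_support_iff_exists_append.1 ha
    exact ⟨r, fun x hx => by rw [e]; simp [hx]⟩
  intro a ha b hb
  obtain ⟨w, hw⟩ := key a ha
  obtain ⟨w', hw'⟩ := key b hb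
  refine ⟨w.append w'.reverse, ?_⟩
  intro x hx
  rw [SimpleGraph.Walk.mem_support_append_iff] at hx
  rcases hx with hx | hx
  · exact hw x hx
  · exact hw' x (by simpa using hx)


theorem path_append {V : Type} {G : SimpleGraph V} {u v w : V} {p : G.Walk u v} {q : G.Walk v w}
    (hp : p.IsPath) (hq : q.IsPath) (h : ∀ x ∈ p.support, x ∈ q.support → x = v) :
    (p.append q).IsPath := by
  rw [SimpleGraph.Walk.isPath_def, SimpleGraph.Walk.support_append, List.nodup_append']
  refine ⟨hp.support_nodup, hq.support_nodup.tail, ?_⟩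
  intro x hx hy
  have h2 := hq.support_nodup
  rw [← SimpleGraph.Walk.cons_tail_support, List.nodup_cons] at h2
  have := h x hx (List.mem_of_mem_tail hy)
  subst this
  exact h2.1 hy

theorem path_meet {V : Type} {G : SimpleGraph V} {u v w : V} {p : G.Walk u v} {q : G.Walk v w}
    (h : (p.append q).IsPath) {x : V} (hx : x ∈ p.support) (hy : x ∈ q.support) : x = v := by
  by_contra hne
  exact h.ne_of_mem_support_of_append hne hx hy rfl

/-- In a cycle meeting both sides, split off an ear on one side. -/
theorem cycle_ear {V : Type} {D : SimpleGraph V} {Sb Sc : Set V}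
    (hcov : ∀ x, x ∈ Sb ∨ x ∈ Sc)
    (hedge : ∀ x y, D.Adj x y → (x ∈ Sb ∧ y ∈ Sb) ∨ (x ∈ Sc ∧ y ∈ Sc))
    {u : V} (w : D.Walk u u) (hw : w.IsCycle) {b c : V} (hb : b ∈ w.support) (hbc : b ∉ Sc)
    (hc : c ∈ w.support) (hcb : c ∉ Sb) :
    ∃ s ∈ Sb ∩ Sc, ∃ t ∈ Sb ∩ Sc, s ≠ t ∧ ∃ (e : D.Walk s t) (r : D.Walk t s),
      e.IsPath ∧ r.IsPath ∧ e.length + r.length = w.length ∧ c ∈ e.support ∧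
      (∀ x ∈ e.support, x ∈ Sc) ∧ (∀ x ∈ e.support, x ∈ Sb → x = s ∨ x = t) ∧
      (∀ x ∈ e.support, x ∈ r.support → x = s ∨ x = t) ∧
      (∀ x ∈ r.support, x ∈ w.support) := by
  classical
  have stay : ∀ {x y : V} (q : D.Walk x y), q.IsPath → x ∉ Sb →
      (∀ z ∈ q.support, z ∈ Sb → z = y) → ∀ z ∈ q.support, z ∈ Sc := by
    intro x y q
    induction q with
    | nil => intro _ hx _ z hz; simp at hz; subst hz; exact (hcov _).resolve_left hx
    | @cons x' y' z' h q ih =>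
      intro hp hx hq z hz
      rw [SimpleGraph.Walk.cons_isPath_iff] at hp
      rw [SimpleGraph.Walk.support_cons, List.mem_cons] at hz
      rcases hz with rfl | hz
      · exact (hcov _).resolve_left hx
      · by_cases hy : y' ∈ Sb
        · have hyz := hq y' (by simp) hy
          subst hyz
          have h1 : y' ∈ Sc := by
            rcases hedge _ _ h with h' | h'
            · exact absurd h'.1 hx
            · exact h'.2
          have := SimpleGraph.Walk.isPath_iff_eq_nil.1 hp.1
          subst this
          simp at hz
          subst hz
          exact h1
        · exact ih hp.1 hy (fun z hz hzb => hq z (by simp [hz]) hzb) z hz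
  have hbb : b ∈ Sb := (hcov b).resolve_right hbc
  have hbc' : b ≠ c := fun h => hcb (h ▸ hbb)
  obtain ⟨w', hw', hlen, hsup⟩ : ∃ w' : D.Walk b b, w'.IsCycle ∧ w'.length = w.length ∧
      ∀ x, x ∈ w'.support ↔ x ∈ w.support :=
    ⟨w.rotate b hb, (SimpleGraph.Walk.isCycle_rotate hb).2 hw, by simp,
      fun x => SimpleGraph.Walk.mem_support_rotate_iff w b hb⟩
  obtain ⟨w1, w2, e⟩ := SimpleGraph.Walk.mem_support_iff_exists_append.1 ((hsup c).2 hc)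
  subst e
  have hw1 : w1.IsPath := hw'.isPath_of_append_left
    (fun h => hbc' (SimpleGraph.Walk.Nil.eq h).symm)
  have hw2 : w2.IsPath := hw'.isPath_of_append_right
    (fun h => hbc' (SimpleGraph.Walk.Nil.eq h))
  have hdis : ∀ x ∈ w1.support, x ∈ w2.support → x = b ∨ x = c := by
    intro x hx hy
    have := hw'.support_nodup
    rw [SimpleGraph.Walk.tail_support_append, List.nodup_append'] at this
    rw [SimpleGraph.Walk.mem_support_iff] at hx hy
    rcases hx with hx | hx
    · exact Or.inl hx
    · rcases hy with hy | hy
      · exact Or.inr hy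
      · exact absurd hy (this.2.2 hx)
  obtain ⟨t, ht, e2, p2, h2, ht2⟩ := split_first Sb w2 hbb
  obtain ⟨s, hs, e1, p1, h1, hs1⟩ := split_first Sb w1.reverse hbb
  have hP2 : (e2.append p2).IsPath := h2 ▸ hw2
  have hP1 : (e1.append p1).IsPath := h1 ▸ hw1.reverse
  have m1 : ∀ x, x ∈ w1.support ↔ x ∈ e1.support ∨ x ∈ p1.support := by
    intro x
    rw [← SimpleGraph.Walk.mem_support_append_iff, ← h1]
    simp
  have m2 : ∀ x, x ∈ w2.support ↔ x ∈ e2.support ∨ x ∈ p2.support := by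
    intro x
    rw [← SimpleGraph.Walk.mem_support_append_iff, ← h2]
  have st1 := stay e1 hP1.of_append_left hcb hs1
  have st2 := stay e2 hP2.of_append_left hcb ht2
  have hcp1 : c ∉ p1.support := fun h =>
    hcb ((path_meet hP1 e1.start_mem_support h).symm ▸ hs)
  have hcp2 : c ∉ p2.support := fun h =>
    hcb ((path_meet hP2 e2.start_mem_support h).symm ▸ ht)
  have hsc := st1 s e1.end_mem_support
  have htc := st2 t e2.end_mem_support
  have l1 : w1.length = e1.length + p1.length := by
    rw [← SimpleGraph.Walk.length_append, ← h1]; simp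
  have l2 : w2.length = e2.length + p2.length := by
    rw [← SimpleGraph.Walk.length_append, ← h2]
  refine ⟨s, ⟨hs, hsc⟩, t, ⟨ht, htc⟩, ?_, e1.reverse.append e2, p2.append p1.reverse, ?_, ?_, ?_, ?_,
    ?_, ?_, ?_, ?_⟩
  · rintro rfl
    rcases hdis s ((m1 s).2 (Or.inl e1.end_mem_support)) ((m2 s).2 (Or.inl e2.end_mem_support))
      with rfl | rfl
    · exact hbc hsc
    · exact hcb hs
  · refine path_append hP1.of_append_left.reverse hP2.of_append_left ?_
    intro x hx hy
    simp at hx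
    rcases hdis x ((m1 x).2 (Or.inl hx)) ((m2 x).2 (Or.inl hy)) with rfl | rfl
    · exact absurd (st1 _ hx) hbc
    · rfl
  · refine path_append hP2.of_append_right hP1.of_append_right.reverse ?_
    intro x hx hy
    simp at hy
    rcases hdis x ((m1 x).2 (Or.inr hy)) ((m2 x).2 (Or.inr hx)) with rfl | rfl
    · rfl
    · exact absurd hx hcp2
  · rw [← hlen]
    simp only [SimpleGraph.Walk.length_append, SimpleGraph.Walk.length_reverse]
    omega
  · simp
  · intro x hx
    simp at hx
    rcases hx with hx | hx
    · exact st1 x hx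
    · exact st2 x hx
  · intro x hx hxb
    simp at hx
    rcases hx with hx | hx
    · exact Or.inl (hs1 x hx hxb)
    · exact Or.inr (ht2 x hx hxb)
  · intro x hx hy
    simp at hx hy
    rcases hx with hx | hx <;> rcases hy with hy | hy
    · rcases hdis x ((m1 x).2 (Or.inl hx)) ((m2 x).2 (Or.inr hy)) with rfl | rfl
      · exact absurd (st1 _ hx) hbc
      · exact absurd hy hcp2
    · exact Or.inl (path_meet hP1 hx hy)
    · exact Or.inr (path_meet hP2 hx hy)
    · rcases hdis x ((m1 x).2 (Or.inr hy)) ((m2 x).2 (Or.inl hx)) with rfl | rfl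
      · exact absurd (st2 _ hx) hbc
      · exact absurd hy hcp1
  · intro x hx
    rw [← hsup]
    simp at hx ⊢
    rcases hx with hx | hx
    · exact Or.inr ((m2 x).2 (Or.inr hx))
    · exact Or.inl ((m1 x).2 (Or.inr hx))

/-- `N` internally disjoint paths of length `l`. -/
def Many {V : Type} (G : SimpleGraph V) (N : ℕ) (s t : V) (l : ℕ) : Prop :=
  ∃ P : Fin N → G.Walk s t, (∀ j, (P j).IsPath ∧ (P j).length = l) ∧
    ∀ i j, i ≠ j → ∀ x ∈ (P i).support, x ∈ (P j).support → x = s ∨ x = t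

theorem Many.map {V W : Type} {G : SimpleGraph V} {H : SimpleGraph W} (φ : G ↪g H) {N : ℕ}
    {s t : V} {l : ℕ} : Many G N s t l → ∃ P : Fin N → H.Walk (φ s) (φ t),
      (∀ j, (P j).IsPath ∧ (P j).length = l ∧ ∀ x ∈ (P j).support, x ∈ Set.range φ) ∧
    ∀ i j, i ≠ j → ∀ x ∈ (P i).support, x ∈ (P j).support → x = φ s ∨ x = φ t := by
  rintro ⟨P, hP, hd⟩
  refine ⟨fun j => (P j).map φ.toHom, ?_, ?_⟩
  · intro j
    refine ⟨(hP j).1.map φ.injective, by simp [(hP j).2], ?_⟩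
    intro x hx
    simp only [SimpleGraph.Walk.support_map, List.mem_map] at hx
    obtain ⟨y, _, rfl⟩ := hx
    exact ⟨y, rfl⟩
  · intro i j hij x hx hy
    simp only [SimpleGraph.Walk.support_map, List.mem_map] at hx hy
    obtain ⟨y, hy1, rfl⟩ := hx
    obtain ⟨z, hz1, hz⟩ := hy
    have : z = y := φ.injective hz
    subst this
    rcases hd i j hij z hy1 hz1 with rfl | rfl
    · exact Or.inl rfl
    · exact Or.inr rfl

theorem amalg_noLong {n : ℕ} (hn : 3 ≤ n) {V β γ δ : Type} [Fintype V] {D : SimpleGraph V}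
    {A : SimpleGraph β} {B : SimpleGraph γ} {C : SimpleGraph δ}
    (f : A ↪g B) (g : A ↪g C) (f' : B ↪g D) (g' : C ↪g D)
    (hB : NoLong n B) (hC : NoLong n C)
    (hcomm : ∀ a, f' (f a) = g' (g a))
    (hcov : ∀ x, x ∈ Set.range f' ∨ x ∈ Set.range g')
    (hinter : ∀ x, x ∈ Set.range f' → x ∈ Set.range g' → ∃ a, g' (g a) = x)
    (hedge : ∀ x y, D.Adj x y → (x ∈ Set.range f' ∧ y ∈ Set.range f') ∨
      (x ∈ Set.range g' ∧ y ∈ Set.range g'))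
    (hmany : ∀ s t, s ≠ t → ∀ e : C.Walk (g s) (g t), e.IsPath →
      (∀ x ∈ e.support, x ∈ Set.range g → x = g s ∨ x = g t) →
      (∃ x ∈ e.support, x ∉ Set.range g) → e.length < n ∧ Many A (n * n + 2) s t e.length) :
    NoLong n D := by
  classical
  have claim : ∀ (k : ℕ) (X : Finset V), (X.filter (· ∉ Set.range f')).card ≤ k →
      NoLongOn n D X := by
    intro k
    induction k with
    | zero =>
      intro X hX
      refine (NoLong.range f' hB).mono ?_
      intro x hx
      by_contra hxb
      have : x ∈ X.filter (· ∉ Set.range f') := by simp only [Finset.mem_filter]; exact ⟨hx, hxb⟩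
      have := Finset.card_pos.2 ⟨x, this⟩
      omega
    | succ k ih =>
      intro X hX u w hw hsup
      by_cases h1 : ∀ x ∈ w.support, x ∈ Set.range f'
      · exact NoLong.range f' hB u w hw h1
      by_cases h2 : ∀ x ∈ w.support, x ∈ Set.range g'
      · exact NoLong.range g' hC u w hw h2
      push Not at h1 h2
      obtain ⟨c, hc, hcb⟩ := h1
      obtain ⟨b, hb, hbc⟩ := h2
      obtain ⟨s, hs, t, ht, hst, e, r, he, hr, hlen, hce, hec, heb, her, hrw⟩ :=
        cycle_ear hcov hedge w hw hb hbc hc hcb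
      obtain ⟨s, rfl⟩ := hinter s hs.1 hs.2
      obtain ⟨t, rfl⟩ := hinter t ht.1 ht.2
      have hst' : s ≠ t := fun h => hst (h ▸ rfl)
      obtain ⟨e', he', hes, hel⟩ := lift_path g' e he hec
      have hmem : ∀ x, x ∈ e'.support → g' x ∈ e.support := by
        intro x hx
        rw [← hes]
        exact List.mem_map_of_mem hx
      have hgf : ∀ x, x ∈ Set.range g → g' x ∈ Set.range f' := by
        rintro x ⟨a, rfl⟩
        exact ⟨f a, hcomm a⟩
      obtain ⟨hln, hm⟩ := hmany s t hst' e' he' (by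
          intro x hx hxg
          rcases heb _ (hmem x hx) (hgf x hxg) with h | h
          · exact Or.inl (g'.injective h)
          · exact Or.inr (g'.injective h)) (by
          rw [← hes, List.mem_map] at hce
          obtain ⟨x, hx, rfl⟩ := hce
          exact ⟨x, hx, fun h => hcb (hgf x h)⟩)
      obtain ⟨P, hP, hPb, hd⟩ : ∃ P : Fin (n * n + 2) → D.Walk (g' (g s)) (g' (g t)),
          (∀ j, (P j).IsPath ∧ (P j).length = e'.length) ∧
          (∀ j, ∀ x ∈ (P j).support, x ∈ Set.range f') ∧
          ∀ i j, i ≠ j → ∀ x ∈ (P i).support, x ∈ (P j).support →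
            x = g' (g s) ∨ x = g' (g t) := by
        have h := hm.map (f'.comp f)
        have es : (f'.comp f) s = g' (g s) := hcomm s
        have et : (f'.comp f) t = g' (g t) := hcomm t
        rw [es, et] at h
        obtain ⟨P, hP, hd⟩ := h
        refine ⟨P, fun j => ⟨(hP j).1, (hP j).2.1⟩, ?_, hd⟩
        intro j x hx
        obtain ⟨a, rfl⟩ := (hP j).2.2 x hx
        exact ⟨f a, rfl⟩
      have hsB : g' (g s) ∈ Set.range f' := hgf _ ⟨s, rfl⟩
      have htB : g' (g t) ∈ Set.range f' := hgf _ ⟨t, rfl⟩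
      have hcr : c ∉ r.support := by
        intro h
        rcases her c hce h with h | h
        · exact hcb (h ▸ hsB)
        · exact hcb (h ▸ htB)
      have hcX : c ∈ X := hsup c hc
      have hX' : ∀ j, NoLongOn n D ((r.support ++ (P j).support).toFinset : Finset V) := by
        intro j
        apply ih
        have hsub : ((r.support ++ (P j).support).toFinset.filter (· ∉ Set.range f')) ⊆
            (X.filter (· ∉ Set.range f')).erase c := by
          intro x hx
          simp only [Finset.mem_filter, List.mem_toFinset, List.mem_append,
            Finset.mem_erase] at hx ⊢
          obtain ⟨h | h, hxb⟩ := hx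
          · exact ⟨fun h' => hcr (h' ▸ h), hsup x (hrw x h), hxb⟩
          · exact absurd (hPb j x h) hxb
        have h1 := Finset.card_le_card hsub
        rw [Finset.card_erase_of_mem (by simp only [Finset.mem_filter]; exact ⟨hcX, hcb⟩)] at h1
        omega
      have hel2 : 1 < e.length := by
        by_contra hle
        have h1 := he.support_nodup
        have hcs : c ≠ g' (g s) := fun h => hcb (h ▸ hsB)
        have hct : c ≠ g' (g t) := fun h => hcb (h ▸ htB)
        have hsub : ({g' (g s), g' (g t), c} : Finset V) ⊆ e.support.toFinset := by
          intro x hx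
          simp only [Finset.mem_insert, Finset.mem_singleton] at hx
          rw [List.mem_toFinset]
          rcases hx with rfl | rfl | rfl
          · exact e.start_mem_support
          · exact e.end_mem_support
          · exact hce
        have h2 := Finset.card_le_card hsub
        rw [Finset.card_eq_three.2 ⟨_, _, _, hst, hcs.symm, hct.symm, rfl⟩] at h2
        have h3 := e.support.toFinset_card_le
        rw [SimpleGraph.Walk.length_support] at h3
        omega
      by_cases hj : ∃ j, ∀ x ∈ (P j).support, x ∈ r.support → x = g' (g s) ∨ x = g' (g t)
      · obtain ⟨j, hj⟩ := hj
        have hcy := cycle_of_paths (hP j).1 hr hj (by rw [(hP j).2, hel]; exact hel2)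
        have := hX' j _ _ hcy (by
          intro x hx
          simp only [SimpleGraph.Walk.mem_support_append_iff] at hx
          simp only [Finset.mem_coe, List.mem_toFinset, List.mem_append]
          tauto)
        rw [SimpleGraph.Walk.length_append, (hP j).2, hel] at this
        omega
      · exfalso
        push Not at hj
        choose x hx1 hx2 hx3 hx4 using hj
        have hinj : Function.Injective x := by
          intro i j hij
          by_contra hne
          rcases hd i j hne (x i) (hx1 i) (hij ▸ hx1 j) with h | h
          · exact hx3 i h
          · exact hx4 i h
        have h1 : (Finset.univ.image x).card ≤ r.support.toFinset.card := by
          apply Finset.card_le_card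
          intro y hy
          simp only [Finset.mem_image, Finset.mem_univ, true_and] at hy
          obtain ⟨i, rfl⟩ := hy
          exact List.mem_toFinset.2 (hx2 i)
        rw [Finset.card_image_of_injective _ hinj, Finset.card_univ, Fintype.card_fin] at h1
        have h3 := r.support.toFinset_card_le
        rw [SimpleGraph.Walk.length_support] at h3
        have h4 := (P 0).support.toFinset_card_le
        rw [SimpleGraph.Walk.length_support, (hP 0).2] at h4
        have h5 := long_path' (T := (P 0).support.toFinset) hn (hX' 0) (by
          have := connOn_support (P 0)
          simpa using this) (by intro y hy; simp at hy ⊢; tauto) (by simp) (by simp) r hr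
          (by intro y hy; simp; tauto)
        have h6 : n * (P 0).support.toFinset.card ≤ n * n := Nat.mul_le_mul_left _ (by omega)
        omega
  intro u w hw _
  exact claim _ Finset.univ le_rfl u w hw (fun _ _ => by simp)

/-- The free amalgam. -/
theorem pushout {n : ℕ} (hn : 3 ≤ n) {β γ δ : Type} [Fintype γ] [Fintype δ]
    {A : SimpleGraph β} {B : SimpleGraph γ} {C : SimpleGraph δ}
    (f : A ↪g B) (g : A ↪g C) (hB : NoLong n B) (hC : NoLong n C)
    (hmany : ∀ s t, s ≠ t → ∀ e : C.Walk (g s) (g t), e.IsPath →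
      (∀ x ∈ e.support, x ∈ Set.range g → x = g s ∨ x = g t) →
      (∃ x ∈ e.support, x ∉ Set.range g) → e.length < n ∧ Many A (n * n + 2) s t e.length) :
    ∃ (ε : Type) (_ : Fintype ε) (D : SimpleGraph ε), NoLong n D ∧
      ∃ (f' : B ↪g D) (g' : C ↪g D), ∀ a, f' (f a) = g' (g a) := by
  classical
  obtain ⟨k, hk1, hk2, hk3⟩ : ∃ k : δ → γ ⊕ {d : δ // d ∉ Set.range g},
      (∀ a, k (g a) = Sum.inl (f a)) ∧ (∀ d (h : d ∉ Set.range g), k d = Sum.inr ⟨d, h⟩) ∧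
      Function.Injective k := by
    refine ⟨fun d => if h : d ∈ Set.range g then Sum.inl (f h.choose) else Sum.inr ⟨d, h⟩,
      ?_, ?_, ?_⟩
    · intro a
      have h : g a ∈ Set.range g := ⟨a, rfl⟩
      have h2 : h.choose = a := g.injective h.choose_spec
      simp only [h, dite_true]
      rw [h2]
    · intro d h
      simp only [h, dite_false]
    · intro x y hxy
      by_cases hx : x ∈ Set.range g <;> by_cases hy : y ∈ Set.range g
      · simp only [hx, hy, dite_true, Sum.inl.injEq] at hxy
        have h := f.injective hxy
        rw [← hx.choose_spec, ← hy.choose_spec, h]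
      · simp only [hx, hy, dite_true, dite_false, reduceCtorEq] at hxy
      · simp only [hx, hy, dite_true, dite_false, reduceCtorEq] at hxy
      · simp only [hx, hy, dite_false, Sum.inr.injEq, Subtype.mk.injEq] at hxy
        exact hxy
  have hk4 : ∀ c b, k c = Sum.inl b → ∃ a, c = g a ∧ b = f a := by
    intro c b h
    by_cases hc : c ∈ Set.range g
    · obtain ⟨a, rfl⟩ := hc
      rw [hk1] at h
      exact ⟨a, rfl, (Sum.inl.inj h).symm⟩
    · rw [hk2 c hc] at h
      cases h
  let D : SimpleGraph (γ ⊕ {d : δ // d ∉ Set.range g}) :=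
    { Adj := fun x y => (∃ b b', x = Sum.inl b ∧ y = Sum.inl b' ∧ B.Adj b b') ∨
        (∃ c c', k c = x ∧ k c' = y ∧ C.Adj c c')
      symm := ⟨by
        rintro x y (⟨b, b', hx, hy, h⟩ | ⟨b, b', hx, hy, h⟩)
        · exact Or.inl ⟨b', b, hy, hx, h.symm⟩
        · exact Or.inr ⟨b', b, hy, hx, h.symm⟩⟩
      loopless := ⟨by
        rintro x (⟨b, b', hx, hy, h⟩ | ⟨b, b', hx, hy, h⟩)
        · subst hx
          cases hy
          exact h.ne rfl
        · exact h.ne (hk3 (hx.trans hy.symm))⟩ }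
  have hD : ∀ x y, D.Adj x y ↔ (∃ b b', x = Sum.inl b ∧ y = Sum.inl b' ∧ B.Adj b b') ∨
        (∃ c c', k c = x ∧ k c' = y ∧ C.Adj c c') := fun _ _ => Iff.rfl
  let f' : B ↪g D := ⟨⟨Sum.inl, Sum.inl_injective⟩, by
    intro b b'
    simp only [Function.Embedding.coeFn_mk]
    rw [hD]
    constructor
    · rintro (⟨b, b', hx, hy, h⟩ | ⟨c, c', hx, hy, h⟩)
      · cases hx
        cases hy
        exact h
      · obtain ⟨a, rfl, rfl⟩ := hk4 _ _ hx
        obtain ⟨a', rfl, rfl⟩ := hk4 _ _ hy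
        exact f.map_adj_iff.2 (g.map_adj_iff.1 h)
    · intro h
      exact Or.inl ⟨b, b', rfl, rfl, h⟩⟩
  let g' : C ↪g D := ⟨⟨k, hk3⟩, by
    intro c c'
    simp only [Function.Embedding.coeFn_mk]
    rw [hD]
    constructor
    · rintro (⟨b, b', hx, hy, h⟩ | ⟨c, c', hx, hy, h⟩)
      · obtain ⟨a, rfl, rfl⟩ := hk4 _ _ hx
        obtain ⟨a', rfl, rfl⟩ := hk4 _ _ hy
        exact g.map_adj_iff.2 (f.map_adj_iff.1 h)
      · rw [← hk3 hx, ← hk3 hy]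
        exact h
    · intro h
      exact Or.inr ⟨c, c', rfl, rfl, h⟩⟩
  have hf' : ∀ b, f' b = Sum.inl b := fun _ => rfl
  have hg' : ∀ c, g' c = k c := fun _ => rfl
  have hcomm : ∀ a, f' (f a) = g' (g a) := by
    intro a
    rw [hf', hg', hk1]
  refine ⟨_, inferInstance, D, ?_, f', g', hcomm⟩
  refine amalg_noLong hn f g f' g' hB hC hcomm ?_ ?_ ?_ hmany
  · rintro (b | ⟨c, hc⟩)
    · exact Or.inl ⟨b, rfl⟩
    · exact Or.inr ⟨c, by rw [hg', hk2 c hc]⟩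
  · rintro x ⟨b, rfl⟩ ⟨c, hc⟩
    rw [hf', hg'] at hc
    obtain ⟨a, rfl, rfl⟩ := hk4 _ _ hc
    exact ⟨a, (hcomm a).symm⟩
  · intro x y h
    rw [hD] at h
    rcases h with ⟨b, b', rfl, rfl, h⟩ | ⟨c, c', rfl, rfl, h⟩
    · exact Or.inl ⟨⟨b, rfl⟩, ⟨b', rfl⟩⟩
    · exact Or.inr ⟨⟨c, rfl⟩, ⟨c', rfl⟩⟩


/-- `G` is built from `S` by successively adding labelled ears, with levels `lev`. -/
structure Built (n N : ℕ) {β : Type} (G : SimpleGraph β) (S : Finset β) (lev : β → ℕ)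
    (ear : β → β × β × ℕ × ℕ) : Prop where
  conn : ConnOn G (S : Set β)
  lev0 : ∀ v, lev v = 0 ↔ v ∈ S
  step : ∀ v, v ∉ S → ∃ (s t : β) (l j : ℕ) (P : G.Walk s t), ear v = (s, t, l, j) ∧ s ≠ t ∧
    l < n ∧ j < N ∧ lev v = max (lev s) (lev t) + 1 ∧ P.IsPath ∧ P.length = l ∧
    v ∈ P.support ∧ (∀ x ∈ P.support, x = s ∨ x = t ∨ (x ∉ S ∧ ear x = ear v)) ∧
    (∀ x, x ∉ S → ear x = ear v → x ∈ P.support)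

section
variable {n N : ℕ} {β : Type} {G : SimpleGraph β} {S : Finset β} {lev : β → ℕ}
    {ear : β → β × β × ℕ × ℕ}

theorem Built.lev_eq (h : Built n N G S lev ear) {x y : β} (hx : x ∉ S) (hy : y ∉ S)
    (hxy : ear x = ear y) : lev x = lev y := by
  obtain ⟨s, t, l, j, P, he, -, -, -, hl, -⟩ := h.step x hx
  obtain ⟨s', t', l', j', P', he', -, -, -, hl', -⟩ := h.step y hy
  rw [he, he'] at hxy
  simp only [Prod.mk.injEq] at hxy
  obtain ⟨rfl, rfl, -, -⟩ := hxy
  omega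

theorem Built.seg (h : Built n N G S lev ear) {v : β} (hv : v ∉ S) :
    ∃ (s t : β) (p : G.Walk s v) (q : G.Walk v t), (p.append q).IsPath ∧ s ≠ t ∧
      lev v = max (lev s) (lev t) + 1 ∧ (p.append q).length < n ∧
      (∀ x ∈ p.support, x = s ∨ (x ∉ S ∧ ear x = ear v)) ∧
      (∀ x ∈ q.support, x = t ∨ (x ∉ S ∧ ear x = ear v)) ∧
      (∀ x, x ∉ S → ear x = ear v → x ∈ p.support ∨ x ∈ q.support) := by
  obtain ⟨s, t, l, j, P, he, hst, hln, -, hl, hP, hPl, hvP, hin, hall⟩ := h.step v hv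
  obtain ⟨p, q, rfl⟩ := SimpleGraph.Walk.mem_support_iff_exists_append.1 hvP
  refine ⟨s, t, p, q, hP, hst, hl, by omega, ?_, ?_, ?_⟩
  · intro x hx
    rcases hin x (by simp [hx]) with h1 | h1 | h1
    · exact Or.inl h1
    · subst h1
      have := path_meet hP hx q.end_mem_support
      subst this
      omega
    · exact Or.inr h1
  · intro x hx
    rcases hin x (by simp [hx]) with h1 | h1 | h1
    · subst h1
      have := path_meet hP p.start_mem_support hx
      subst this
      omega
    · exact Or.inl h1
    · exact Or.inr h1
  · intro x hx hxe
    have := hall x hx hxe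
    simpa using this

theorem Built.long (h : Built n N G S lev ear) : ∀ (k : ℕ) (v : β), lev v = k →
    ∃ a ∈ S, ∃ p : G.Walk a v, p.IsPath ∧ lev v ≤ p.length ∧ ∀ x ∈ p.support, lev x ≤ lev v := by
  intro k
  induction k using Nat.strong_induction_on with
  | _ k ih =>
    intro v hk
    by_cases hv : v ∈ S
    · refine ⟨v, hv, .nil, by simp, by simp [(h.lev0 v).2 hv], by simp⟩
    obtain ⟨s, t, p, q, hpq, hst, hl, -, hp, hq, -⟩ := h.seg hv
    have main : ∀ (z : β) (r : G.Walk z v), r.IsPath → lev v = lev z + 1 →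
        (∀ x ∈ r.support, x = z ∨ (x ∉ S ∧ ear x = ear v)) → ∃ a ∈ S, ∃ p : G.Walk a v,
        p.IsPath ∧ lev v ≤ p.length ∧ ∀ x ∈ p.support, lev x ≤ lev v := by
      intro z r hr hz hrs
      obtain ⟨a, ha, w, hw, hwl, hws⟩ := ih (lev z) (by omega) z rfl
      refine ⟨a, ha, w.append r, path_append hw hr ?_, ?_, ?_⟩
      · intro x hx hy
        rcases hrs x hy with h1 | h1
        · exact h1
        · have h2 := h.lev_eq h1.1 hv h1.2
          have h3 := hws x hx
          omega
      · rw [SimpleGraph.Walk.length_append]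
        have : r.length ≠ 0 := by
          intro h0
          have := SimpleGraph.Walk.eq_of_length_eq_zero h0
          subst this
          omega
        omega
      · intro x hx
        rw [SimpleGraph.Walk.mem_support_append_iff] at hx
        rcases hx with hx | hx
        · have := hws x hx
          omega
        · rcases hrs x hx with h1 | h1
          · subst h1
            omega
          · exact (h.lev_eq h1.1 hv h1.2).le
    rcases le_total (lev t) (lev s) with hle | hle
    · exact main s p hpq.of_append_left (by rw [hl, max_eq_left hle]) hp
    · refine main t q.reverse hpq.of_append_right.reverse (by rw [hl, max_eq_right hle]) ?_
      intro x hx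
      exact hq x (by simpa using hx)

theorem Built.connected (h : Built n N G S lev ear) : ConnOn G Set.univ := by
  intro a _ b _
  obtain ⟨a', ha, p, -⟩ := h.long _ a rfl
  obtain ⟨b', hb, q, -⟩ := h.long _ b rfl
  obtain ⟨w, -⟩ := h.conn a' ha b' hb
  exact ⟨p.reverse.append (w.append q), fun _ _ => trivial⟩

/-- From a vertex outside `S`, go to an end of its ear different from a given vertex. -/
theorem Built.leave (h : Built n N G S lev ear) {v : β} (hv : v ∉ S) (y : β) :
    ∃ (z : β) (p : G.Walk v z), z ≠ y ∧ lev z < lev v ∧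
      (∀ x ∈ p.support, x = z ∨ (x ∉ S ∧ ear x = ear v)) := by
  obtain ⟨s, t, p, q, hpq, hst, hl, -, hp, hq, -⟩ := h.seg hv
  by_cases hs : s = y
  · refine ⟨t, q, fun h' => hst (hs.trans h'.symm), ?_, hq⟩
    have := le_max_right (lev s) (lev t)
    omega
  · refine ⟨s, p.reverse, hs, ?_, fun x hx => hp x (by simpa using hx)⟩
    have := le_max_left (lev s) (lev t)
    omega

theorem Built.step2 (h : Built n N G S lev ear) {x y : β} (hxy : x ≠ y) (hle : lev y ≤ lev x)
    (hx : x ∉ S) : ∃ (z w : β) (p : G.Walk x z) (q : G.Walk y w), z ≠ w ∧ lev z < lev x ∧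
      lev w < lev x ∧ (∀ u ∈ p.support, u = z ∨ lev u = lev x) ∧
      (∀ u ∈ q.support, u = w ∨ lev u = lev x) ∧ ∀ u ∈ p.support, u ∉ q.support := by
  rcases hle.lt_or_eq with hlt | heq
  · obtain ⟨z, p, hz, hzl, hp⟩ := h.leave hx y
    refine ⟨z, y, p, .nil, hz, hzl, hlt, ?_, by simp, ?_⟩
    · intro u hu
      exact (hp u hu).imp id (fun h1 => h.lev_eq h1.1 hx h1.2)
    · intro u hu hu'
      simp only [SimpleGraph.Walk.support_nil, List.mem_singleton] at hu'
      subst hu'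
      rcases hp u hu with h1 | h1
      · exact hz h1.symm
      · have := h.lev_eq h1.1 hx h1.2
        omega
  · have hy : y ∉ S := by
      rw [← h.lev0] at hx ⊢
      omega
    by_cases hear : ear y = ear x
    · obtain ⟨s, t, p, q, hpq, hst, hl, -, hp, hq, hall⟩ := h.seg hx
      have hls : lev s < lev x := by
        have := le_max_left (lev s) (lev t)
        omega
      have hlt : lev t < lev x := by
        have := le_max_right (lev s) (lev t)
        omega
      have hp' : ∀ u ∈ p.support, u = s ∨ lev u = lev x := fun u hu =>
        (hp u hu).imp id (fun h1 => h.lev_eq h1.1 hx h1.2)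
      have hq' : ∀ u ∈ q.support, u = t ∨ lev u = lev x := fun u hu =>
        (hq u hu).imp id (fun h1 => h.lev_eq h1.1 hx h1.2)
      rcases hall y hy hear with hm | hm
      · obtain ⟨p1, p2, rfl⟩ := SimpleGraph.Walk.mem_support_iff_exists_append.1 hm
        refine ⟨t, s, q, p1.reverse, hst.symm, hlt, hls, hq', ?_, ?_⟩
        · intro u hu
          exact hp' u (by simp at hu; simp [hu])
        · intro u hu hu'
          simp only [SimpleGraph.Walk.support_reverse, List.mem_reverse] at hu'
          have h1 : u = x := path_meet hpq (by simp [hu']) hu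
          subst h1
          exact hxy (path_meet hpq.of_append_left hu' p2.end_mem_support)
      · obtain ⟨q1, q2, rfl⟩ := SimpleGraph.Walk.mem_support_iff_exists_append.1 hm
        refine ⟨s, t, p.reverse, q2, hst, hls, hlt, ?_, ?_, ?_⟩
        · intro u hu
          exact hp' u (by simpa using hu)
        · intro u hu
          exact hq' u (by simp [hu])
        · intro u hu hu'
          simp only [SimpleGraph.Walk.support_reverse, List.mem_reverse] at hu
          have h1 : u = x := path_meet hpq hu (by simp [hu'])
          subst h1
          exact hxy (path_meet hpq.of_append_right q1.start_mem_support hu')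
    · obtain ⟨z, p, hz, hzl, hp⟩ := h.leave hx y
      obtain ⟨w, q, hw, hwl, hq⟩ := h.leave hy z
      refine ⟨z, w, p, q, hw.symm, hzl, by omega, ?_, ?_, ?_⟩
      · intro u hu
        exact (hp u hu).imp id (fun h1 => h.lev_eq h1.1 hx h1.2)
      · intro u hu
        exact (hq u hu).imp id (fun h1 => (h.lev_eq h1.1 hy h1.2).trans heq)
      · intro u hu hu'
        rcases hp u hu with h1 | h1 <;> rcases hq u hu' with h2 | h2
        · exact hw (h2.symm.trans h1)
        · have := h.lev_eq h2.1 hy h2.2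
          subst h1
          omega
        · have := h.lev_eq h1.1 hx h1.2
          subst h2
          omega
        · exact hear (h2.2.symm.trans h1.2)

theorem Built.linkage (h : Built n N G S lev ear) : ∀ (k : ℕ) (x y : β), x ≠ y → lev x ≤ k →
    lev y ≤ k → ∃ a ∈ S, ∃ b ∈ S, ∃ (p : G.Walk x a) (q : G.Walk y b),
      (∀ u ∈ p.support, lev u ≤ k) ∧ (∀ u ∈ q.support, lev u ≤ k) ∧
      ∀ u ∈ p.support, u ∉ q.support := by
  intro k
  induction k with
  | zero =>
    intro x y hxy hx hy
    refine ⟨x, (h.lev0 x).1 (by omega), y, (h.lev0 y).1 (by omega), .nil, .nil, ?_, ?_, ?_⟩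
    · simpa using hx
    · simpa using hy
    · simpa using hxy
  | succ k ih =>
    have main : ∀ (x y : β), x ≠ y → lev y ≤ lev x → lev x = k + 1 →
        ∃ a ∈ S, ∃ b ∈ S, ∃ (p : G.Walk x a) (q : G.Walk y b),
        (∀ u ∈ p.support, lev u ≤ k + 1) ∧ (∀ u ∈ q.support, lev u ≤ k + 1) ∧
        ∀ u ∈ p.support, u ∉ q.support := by
      intro x y hxy hle hx
      obtain ⟨z, w, p, q, hzw, hz, hw, hp, hq, hd⟩ := h.step2 hxy hle
        (by rw [← h.lev0]; omega)
      obtain ⟨a, ha, b, hb, p1, q1, hp1, hq1, hd1⟩ := ih z w hzw (by omega) (by omega)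
      refine ⟨a, ha, b, hb, p.append p1, q.append q1, ?_, ?_, ?_⟩
      · intro u hu
        rw [SimpleGraph.Walk.mem_support_append_iff] at hu
        rcases hu with hu | hu
        · rcases hp u hu with rfl | h1 <;> omega
        · have := hp1 u hu
          omega
      · intro u hu
        rw [SimpleGraph.Walk.mem_support_append_iff] at hu
        rcases hu with hu | hu
        · rcases hq u hu with rfl | h1 <;> omega
        · have := hq1 u hu
          omega
      · intro u hu hu'
        rw [SimpleGraph.Walk.mem_support_append_iff] at hu hu'
        rcases hu with hu | hu <;> rcases hu' with hu' | hu'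
        · exact hd u hu hu'
        · rcases hp u hu with h1 | h1
          · subst h1
            exact hd1 u p1.start_mem_support hu'
          · have := hq1 u hu'
            omega
        · rcases hq u hu' with h1 | h1
          · subst h1
            exact hd1 u hu q1.start_mem_support
          · have := hp1 u hu
            omega
        · exact hd1 u hu hu'
    intro x y hxy hx hy
    by_cases hmx : lev x = k + 1
    · exact main x y hxy (by omega) hmx
    by_cases hmy : lev y = k + 1
    · obtain ⟨a, ha, b, hb, p, q, hp, hq, hd⟩ := main y x hxy.symm (by omega) hmy
      exact ⟨b, hb, a, ha, q, p, hq, hp, fun u hu hu' => hd u hu' hu⟩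
    obtain ⟨a, ha, b, hb, p, q, hp, hq, hd⟩ := ih x y hxy (by omega) (by omega)
    exact ⟨a, ha, b, hb, p, q, fun u hu => (hp u hu).trans (by omega),
      fun u hu => (hq u hu).trans (by omega), hd⟩

theorem Built.lev_le (hn : 3 ≤ n) (h : Built n N G S lev ear) (hG : NoLong n G) (x : β) :
    lev x ≤ n * (S.card + n * S.card + 1) := by
  classical
  by_cases hx : x ∈ S
  · rw [(h.lev0 x).2 hx]
    omega
  obtain ⟨s, t, p, q, hpq, hst, hl, -, hp, hq, -⟩ := h.seg hx
  obtain ⟨a, ha, b, hb, w1, w2, hw1, hw2, hd⟩ := h.linkage (max (lev s) (lev t)) s t hst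
    (le_max_left _ _) (le_max_right _ _)
  have hs1 := w1.support_bypass_subset_support
  have hs2 := w2.support_bypass_subset_support
  have hP : (w1.bypass.reverse.append ((p.append q).append w2.bypass)).IsPath := by
    refine path_append w1.bypass_isPath.reverse (path_append hpq w2.bypass_isPath ?_) ?_
    · intro u hu hu'
      have h2 := hw2 u (hs2 hu')
      rw [SimpleGraph.Walk.mem_support_append_iff] at hu
      rcases hu with hu | hu
      · rcases hp u hu with h1 | h1
        · subst h1
          exact absurd (hs2 hu') (hd u w1.start_mem_support)
        · have := h.lev_eq h1.1 hx h1.2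
          omega
      · rcases hq u hu with h1 | h1
        · exact h1
        · have := h.lev_eq h1.1 hx h1.2
          omega
    · intro u hu hu'
      simp only [SimpleGraph.Walk.support_reverse, List.mem_reverse] at hu
      have h2 := hw1 u (hs1 hu)
      simp only [SimpleGraph.Walk.mem_support_append_iff] at hu'
      rcases hu' with (hu' | hu') | hu'
      · rcases hp u hu' with h1 | h1
        · exact h1
        · have := h.lev_eq h1.1 hx h1.2
          omega
      · rcases hq u hu' with h1 | h1
        · subst h1
          exact absurd w2.start_mem_support (hd u (hs1 hu))
        · have := h.lev_eq h1.1 hx h1.2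
          omega
      · exact absurd (hs2 hu') (hd u (hs1 hu))
  generalize hQ : w1.bypass.reverse.append ((p.append q).append w2.bypass) = Q at hP
  have hxQ : x ∈ Q.support := by
    rw [← hQ]
    simp
  have hQl := long_path' hn hG h.conn (Set.subset_univ _) ha hb Q hP (fun _ _ => trivial)
  have hconn : ConnOn G ((S ∪ Q.support.toFinset : Finset β) : Set β) := by
    have := h.conn.union (connOn_support Q) (c := a) ha Q.start_mem_support
    simpa [Finset.coe_union] using this
  obtain ⟨c, hc, R, hR, hRl, -⟩ := h.long _ x rfl
  have h3 := long_path' hn hG hconn (Set.subset_univ _) (Finset.mem_union_left _ hc)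
    (Finset.mem_union_right _ (List.mem_toFinset.2 hxQ)) R hR (fun _ _ => trivial)
  have h4 := Finset.card_union_le S Q.support.toFinset
  have h5 := Q.support.toFinset_card_le
  rw [SimpleGraph.Walk.length_support] at h5
  have h6 : n * (S ∪ Q.support.toFinset).card ≤ n * (S.card + n * S.card + 1) :=
    Nat.mul_le_mul_left _ (by omega)
  omega

/-- The bound for the number of vertices of level at most `k`. -/
def cbound (n N s : ℕ) : ℕ → ℕ
  | 0 => s
  | k + 1 => cbound n N s k + n * (cbound n N s k * (cbound n N s k * (n * N)))

theorem Built.card_lev [Fintype β] (h : Built n N G S lev ear) (k : ℕ) :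
    (Finset.univ.filter (fun x => lev x ≤ k)).card ≤ cbound n N S.card k := by
  classical
  induction k with
  | zero =>
    have : Finset.univ.filter (fun x => lev x ≤ 0) = S := by
      ext x
      simp [← h.lev0]
    rw [this]
    exact le_rfl
  | succ k ih =>
    set L := Finset.univ.filter (fun x => lev x ≤ k) with hL
    set E := Finset.univ.filter (fun x => lev x = k + 1) with hE
    have hsub : Finset.univ.filter (fun x => lev x ≤ k + 1) ⊆ L ∪ E := by
      intro x hx
      simp only [hL, hE, Finset.mem_filter, Finset.mem_univ, true_and, Finset.mem_union] at hx ⊢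
      omega
    have hES : ∀ x ∈ E, x ∉ S := by
      intro x hx
      simp only [hE, Finset.mem_filter, Finset.mem_univ, true_and] at hx
      rw [← h.lev0]
      omega
    have h1 : E.card ≤ n * (E.image ear).card := by
      apply Finset.card_le_mul_card_image
      intro e he
      obtain ⟨v, hv, rfl⟩ := Finset.mem_image.1 he
      obtain ⟨s, t, l, j, P, he, hst, hln, -, hl, hP, hPl, hvP, hin, hall⟩ := h.step v (hES v hv)
      have : E.filter (fun x => ear x = ear v) ⊆ P.support.toFinset := by
        intro x hx
        rw [Finset.mem_filter] at hx
        exact List.mem_toFinset.2 (hall x (hES x hx.1) hx.2)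
      have h2 := Finset.card_le_card this
      have h3 := P.support.toFinset_card_le
      rw [SimpleGraph.Walk.length_support] at h3
      omega
    have h2 : E.image ear ⊆ L ×ˢ (L ×ˢ (Finset.range n ×ˢ Finset.range N)) := by
      intro e he
      obtain ⟨v, hv, rfl⟩ := Finset.mem_image.1 he
      obtain ⟨s, t, l, j, P, he, hst, hln, hj, hl, -⟩ := h.step v (hES v hv)
      simp only [hE, Finset.mem_filter, Finset.mem_univ, true_and] at hv
      have h3 := le_max_left (lev s) (lev t)
      have h4 := le_max_right (lev s) (lev t)
      rw [he]
      simp only [hL, Finset.mem_product, Finset.mem_filter, Finset.mem_univ, true_and,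
        Finset.mem_range]
      exact ⟨by omega, by omega, hln, hj⟩
    have h3 := Finset.card_le_card h2
    simp only [Finset.card_product, Finset.card_range] at h3
    have h4 : n * (E.image ear).card ≤
        n * (cbound n N S.card k * (cbound n N S.card k * (n * N))) := by
      refine Nat.mul_le_mul_left _ (h3.trans ?_)
      gcongr
    have h5 := (Finset.card_le_card hsub).trans (Finset.card_union_le L E)
    simp only [cbound]
    omega

theorem Built.card_le [Fintype β] (hn : 3 ≤ n) (h : Built n N G S lev ear) (hG : NoLong n G) :
    Fintype.card β ≤ cbound n N S.card (n * (S.card + n * S.card + 1)) := by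
  refine le_trans ?_ (h.card_lev (n * (S.card + n * S.card + 1)))
  rw [← Finset.card_univ]
  apply Finset.card_le_card
  intro x _
  simp only [Finset.mem_filter, Finset.mem_univ, true_and]
  exact h.lev_le hn hG x

end


theorem Built.extend {n N : ℕ} {β β' : Type} {G : SimpleGraph β} {S : Finset β} {lev : β → ℕ}
    {ear : β → β × β × ℕ × ℕ} (h : Built n N G S lev ear) {G' : SimpleGraph β'} (g : G ↪g G')
    {s t : β} (hst : s ≠ t) (e : G'.Walk (g s) (g t)) (he : e.IsPath) (hln : e.length < n)
    (hin : ∀ x ∈ e.support, x ∈ Set.range g → x = g s ∨ x = g t)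
    (hcov : ∀ x, x ∈ Set.range g ∨ x ∈ e.support) {j : ℕ} (hj : j < N)
    (hun : ∀ v, v ∉ S → ear v ≠ (s, t, e.length, j)) :
    ∃ lev' ear', Built n N G' (S.map g.toEmbedding) lev' ear' := by
  classical
  obtain ⟨lev', hlev1, hlev2⟩ : ∃ lev' : β' → ℕ, (∀ b, lev' (g b) = lev b) ∧
      ∀ x, x ∉ Set.range g → lev' x = max (lev s) (lev t) + 1 :=
    ⟨Function.extend g lev (fun _ => max (lev s) (lev t) + 1),
      fun b => g.injective.extend_apply _ _ b, fun x hx => Function.extend_apply' _ _ _ hx⟩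
  obtain ⟨ear', hear1, hear2⟩ : ∃ ear' : β' → β' × β' × ℕ × ℕ,
      (∀ b, ear' (g b) = (g (ear b).1, g (ear b).2.1, (ear b).2.2)) ∧
      ∀ x, x ∉ Set.range g → ear' x = (g s, g t, e.length, j) :=
    ⟨Function.extend g (fun b => (g (ear b).1, g (ear b).2.1, (ear b).2.2))
      (fun _ => (g s, g t, e.length, j)),
      fun b => g.injective.extend_apply _ _ b, fun x hx => Function.extend_apply' _ _ _ hx⟩
  have hS : ∀ b, g b ∈ S.map g.toEmbedding ↔ b ∈ S := by
    intro b
    exact Finset.mem_map' g.toEmbedding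
  have hS' : ∀ x, x ∉ Set.range g → x ∉ S.map g.toEmbedding := by
    intro x hx hxS
    obtain ⟨b, _, rfl⟩ := Finset.mem_map.1 hxS
    exact hx ⟨b, rfl⟩
  have hun' : ∀ b, b ∉ S → ear' (g b) ≠ (g s, g t, e.length, j) := by
    intro b hb heq
    rw [hear1] at heq
    simp only [Prod.mk.injEq] at heq
    obtain ⟨h1, h2, h3⟩ := heq
    refine hun b hb ?_
    exact Prod.ext (g.injective h1) (Prod.ext (g.injective h2) h3)
  have heq : ∀ b c, ear' (g b) = ear' (g c) → ear b = ear c := by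
    intro b c hbc
    rw [hear1, hear1] at hbc
    simp only [Prod.mk.injEq] at hbc
    obtain ⟨h1, h2, h3⟩ := hbc
    exact Prod.ext (g.injective h1) (Prod.ext (g.injective h2) h3)
  refine ⟨lev', ear', ?_, ?_, ?_⟩
  · intro a ha b hb
    rw [Finset.mem_coe] at ha hb
    obtain ⟨a, ha', rfl⟩ := Finset.mem_map.1 ha
    obtain ⟨b, hb', rfl⟩ := Finset.mem_map.1 hb
    obtain ⟨w, hw⟩ := h.conn a ha' b hb'
    refine ⟨w.map g.toHom, ?_⟩
    intro x hx
    simp only [SimpleGraph.Walk.support_map, List.mem_map] at hx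
    obtain ⟨y, hy, rfl⟩ := hx
    exact (hS y).2 (hw y hy)
  · intro x
    by_cases hx : x ∈ Set.range g
    · obtain ⟨b, rfl⟩ := hx
      rw [hlev1, hS, h.lev0]
    · rw [hlev2 x hx]
      exact iff_of_false (by omega) (hS' x hx)
  · intro x hxS
    by_cases hx : x ∈ Set.range g
    · obtain ⟨b, rfl⟩ := hx
      have hb := fun h' => hxS ((hS b).2 h')
      obtain ⟨s', t', l', j', P, heb, hst', hln', hj', hl, hP, hPl, hvP, hPin, hall⟩ := h.step b hb
      refine ⟨g s', g t', l', j', P.map g.toHom, by rw [hear1, heb], fun h' => hst' (g.injective h'),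
        hln', hj', by rw [hlev1, hlev1, hlev1, hl], hP.map g.injective, by simpa using hPl, ?_, ?_, ?_⟩
      · simp only [SimpleGraph.Walk.support_map, List.mem_map]
        exact ⟨b, hvP, rfl⟩
      · intro y hy
        simp only [SimpleGraph.Walk.support_map, List.mem_map] at hy
        obtain ⟨y, hy, rfl⟩ := hy
        rcases hPin y hy with h1 | h1 | h1
        · exact Or.inl (h1 ▸ rfl)
        · exact Or.inr (Or.inl (h1 ▸ rfl))
        · refine Or.inr (Or.inr ⟨fun h' => h1.1 ((hS y).1 h'), ?_⟩)
          change ear' (g y) = _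
          rw [hear1, hear1, h1.2]
      · intro y hyS hy
        by_cases hyr : y ∈ Set.range g
        · obtain ⟨c, rfl⟩ := hyr
          have hc := fun h' => hyS ((hS c).2 h')
          simp only [SimpleGraph.Walk.support_map, List.mem_map]
          exact ⟨c, hall c hc (heq _ _ hy), rfl⟩
        · rw [hear2 y hyr] at hy
          exact absurd hy.symm (hun' b hb)
    · refine ⟨g s, g t, e.length, j, e, hear2 x hx, fun h' => hst (g.injective h'), hln, hj,
        by rw [hlev1, hlev1, hlev2 x hx], he, rfl, (hcov x).resolve_left hx, ?_, ?_⟩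
      · intro y hy
        by_cases hyr : y ∈ Set.range g
        · rcases hin y hy hyr with h1 | h1
          · exact Or.inl h1
          · exact Or.inr (Or.inl h1)
        · exact Or.inr (Or.inr ⟨hS' y hyr, by rw [hear2 y hyr, hear2 x hx]⟩)
      · intro y hyS hy
        by_cases hyr : y ∈ Set.range g
        · obtain ⟨c, rfl⟩ := hyr
          have hc := fun h' => hyS ((hS c).2 h')
          rw [hear2 x hx] at hy
          exact absurd hy (hun' c hc)
        · exact (hcov y).resolve_left hyr

theorem exists_max {n : ℕ} (hn : 3 ≤ n) {α : Type} [Fintype α] (A : SimpleGraph α)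
    (hA : NoLong n A) (hconn : ConnOn A Set.univ) :
    ∃ (β : Type) (_ : Fintype β) (A' : SimpleGraph β) (_ : A ↪g A'), NoLong n A' ∧
      ∀ (δ : Type) [Fintype δ] (C : SimpleGraph δ), NoLong n C → ∀ g : A' ↪g C,
      ∀ s t, s ≠ t → ∀ e : C.Walk (g s) (g t), e.IsPath →
      (∀ x ∈ e.support, x ∈ Set.range g → x = g s ∨ x = g t) →
      (∃ x ∈ e.support, x ∉ Set.range g) →
        e.length < n ∧ Many A' (n * n + 2) s t e.length := by
  classical
  let Q : Set ℕ := {m | ∃ (β : Type) (_ : Fintype β) (A' : SimpleGraph β) (i : A ↪g A')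
    (lev : β → ℕ) (ear : β → β × β × ℕ × ℕ), NoLong n A' ∧
    Built n (n * n + 2) A' (Finset.univ.map i.toEmbedding) lev ear ∧ Fintype.card β = m}
  have hne : Q.Nonempty := by
    refine ⟨_, α, inferInstance, A, RelEmbedding.refl _, fun _ => 0, fun a => (a, a, 0, 0), hA,
      ⟨?_, ?_, ?_⟩, rfl⟩
    · intro a _ b _
      obtain ⟨w, -⟩ := hconn a trivial b trivial
      exact ⟨w, fun x _ => by simp⟩
    · intro v
      simp
    · intro v hv
      simp at hv
  have hbd : BddAbove Q := by
    refine ⟨cbound n (n * n + 2) (Fintype.card α)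
      (n * (Fintype.card α + n * Fintype.card α + 1)), ?_⟩
    rintro m ⟨β, _, A', i, lev, ear, hA', hb, rfl⟩
    have := hb.card_le hn hA'
    simpa using this
  obtain ⟨β, _, A', i, lev, ear, hA', hb, hcard⟩ := Nat.sSup_mem hne hbd
  refine ⟨β, inferInstance, A', i, hA', ?_⟩
  intro δ _ C hC g s t hst e he hin hout
  have hln : e.length < n := by
    refine ear_length (T := Set.range g) hn hC ?_ (Set.subset_univ _) ⟨s, rfl⟩ ⟨t, rfl⟩
      (fun h' => hst (g.injective h')) e he (fun _ _ => trivial) hin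
    rintro _ ⟨a, rfl⟩ _ ⟨b, rfl⟩
    obtain ⟨w, -⟩ := hb.connected a trivial b trivial
    refine ⟨w.map g.toHom, ?_⟩
    intro x hx
    simp only [SimpleGraph.Walk.support_map, List.mem_map] at hx
    obtain ⟨y, hy, rfl⟩ := hx
    exact ⟨y, rfl⟩
  refine ⟨hln, ?_⟩
  have hused : ∀ j : Fin (n * n + 2), ∃ v, v ∉ Finset.univ.map i.toEmbedding ∧
      ear v = (s, t, e.length, (j : ℕ)) := by
    intro j
    by_contra hno
    push Not at hno
    let X : Set δ := {d | d ∈ Set.range g ∨ d ∈ e.support}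
    let ι : C.induce X ↪g C := SimpleGraph.Embedding.induce X
    have hι : ∀ x : X, ι x = x.1 := fun _ => rfl
    let g1 : A' ↪g C.induce X := ⟨⟨fun b => ⟨g b, Or.inl ⟨b, rfl⟩⟩, by
      intro a b hab
      exact g.injective (congrArg Subtype.val hab)⟩, by
      intro a b
      exact g.map_adj_iff⟩
    have hg1 : ∀ b, ι (g1 b) = g b := fun _ => rfl
    have hr1 : ∀ x : X, x ∈ Set.range g1 ↔ x.1 ∈ Set.range g := by
      intro x
      constructor
      · rintro ⟨b, rfl⟩
        exact ⟨b, rfl⟩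
      · rintro ⟨b, hb⟩
        exact ⟨b, Subtype.ext hb⟩
    obtain ⟨e', he', hes, hel⟩ := lift_path ι (a := g1 s) (b := g1 t) e he (by
      intro z hz
      exact ⟨⟨z, Or.inr hz⟩, rfl⟩)
    have hmem : ∀ x : X, x ∈ e'.support ↔ x.1 ∈ e.support := by
      intro x
      have h1 : x.1 ∈ e'.support.map ι ↔ x ∈ e'.support :=
        List.mem_map_of_injective ι.injective
      rw [hes] at h1
      exact h1.symm
    obtain ⟨lev', ear', hb'⟩ := hb.extend g1 hst e' he' (hel.trans_lt hln) (by
      intro x hx hxr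
      rcases hin x.1 ((hmem x).1 hx) ((hr1 x).1 hxr) with h1 | h1
      · exact Or.inl (Subtype.ext h1)
      · exact Or.inr (Subtype.ext h1)) (by
      intro x
      rw [hr1, hmem]
      exact x.2) (j := j) j.2 (by rw [hel]; exact hno)
    have hQ : Fintype.card X ∈ Q := by
      refine ⟨X, inferInstance, C.induce X, g1.comp i, lev', ear', hC.comap ι, ?_, rfl⟩
      rw [Finset.map_map] at hb'
      exact hb'
    have h1 := le_csSup hbd hQ
    obtain ⟨x, hx, hxr⟩ := hout
    have h2 := Fintype.card_lt_of_injective_of_notMem g1 g1.injective (b := ⟨x, Or.inr hx⟩)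
      (fun h' => hxr ((hr1 _).1 h'))
    omega
  choose v hvS hv using hused
  have hpath : ∀ j, ∃ P : A'.Walk s t, P.IsPath ∧ P.length = e.length ∧
      ∀ x ∈ P.support, x = s ∨ x = t ∨ ear x = ear (v j) := by
    intro j
    obtain ⟨s', t', l', j', P, heb, -, -, -, -, hP, hPl, -, hPin, -⟩ := hb.step (v j) (hvS j)
    have h1 := hv j
    rw [heb] at h1
    simp only [Prod.mk.injEq] at h1
    obtain ⟨rfl, rfl, rfl, -⟩ := h1
    exact ⟨P, hP, hPl, fun x hx => (hPin x hx).imp id (fun h' => h'.imp id And.right)⟩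
  choose P hP hPl hPin using hpath
  refine ⟨P, fun j => ⟨hP j, hPl j⟩, ?_⟩
  intro a b hab x hx hy
  rcases hPin a x hx with h1 | h1 | h1
  · exact Or.inl h1
  · exact Or.inr h1
  rcases hPin b x hy with h2 | h2 | h2
  · exact Or.inl h2
  · exact Or.inr h2
  rw [h1, hv, hv] at h2
  simp only [Prod.mk.injEq, true_and] at h2
  exact absurd (Fin.ext h2) hab


/-- Every graph in the class extends to a connected one. -/
theorem cone {n : ℕ} {α : Type} (A : SimpleGraph α) (hA : NoLong n A) :
    ∃ (A0 : SimpleGraph (Option α)) (_ : A ↪g A0), NoLong n A0 ∧ ConnOn A0 Set.univ := by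
  classical
  let rep : α → α := fun a => (A.connectedComponentMk a).out
  have hrep : ∀ a, A.connectedComponentMk (rep a) = A.connectedComponentMk a := fun a =>
    Quot.out_eq _
  have hrr : ∀ a b, A.Reachable a b → rep a = rep b := by
    intro a b h
    simp only [rep]
    rw [SimpleGraph.ConnectedComponent.eq.2 h]
  let A0 : SimpleGraph (Option α) :=
    { Adj := fun x y => match x, y with
        | none, none => False
        | none, some a => rep a = a
        | some a, none => rep a = a
        | some a, some b => A.Adj a b
      symm := ⟨by
        rintro (_ | a) (_ | b) h
        · exact h
        · exact h
        · exact h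
        · exact SimpleGraph.Adj.symm h⟩
      loopless := ⟨by
        rintro (_ | a) h
        · exact h
        · exact SimpleGraph.Adj.ne h rfl⟩ }
  have h0 : ∀ a, A0.Adj none (some a) ↔ rep a = a := fun _ => Iff.rfl
  have h1 : ∀ a b, A0.Adj (some a) (some b) ↔ A.Adj a b := fun _ _ => Iff.rfl
  have h2 : ¬ A0.Adj none none := fun h => h.ne rfl
  let φ : A ↪g A0 := ⟨⟨some, Option.some_injective _⟩, by
    intro a b
    exact h1 a b⟩
  have hφ : ∀ a, φ a = some a := fun _ => rfl
  refine ⟨A0, φ, ?_, ?_⟩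
  · intro u w hw _
    by_cases hno : none ∈ w.support
    · exfalso
      have hc := hw.rotate hno
      generalize w.rotate _ hno = w' at hc
      cases w' with
      | nil => exact SimpleGraph.Walk.IsCycle.not_of_nil hc
      | @cons _ a _ h p =>
        rw [SimpleGraph.Walk.cons_isCycle_iff] at hc
        obtain ⟨hp, he⟩ := hc
        cases a with
        | none => exact h2 h
        | some a =>
          have hp' := hp.reverse
          have he' : s(none, some a) ∉ p.reverse.edges := by simpa using he
          generalize p.reverse = q at hp' he'
          cases q with
          | @cons _ b _ h' q =>
            rw [SimpleGraph.Walk.cons_isPath_iff] at hp'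
            cases b with
            | none => exact h2 h'
            | some b =>
              obtain ⟨r, -⟩ := lift_walk φ q b a rfl rfl (by
                intro z hz
                cases z with
                | none => exact absurd hz hp'.2
                | some z => exact ⟨z, rfl⟩)
              have h3 := hrr b a r.reachable
              rw [(h0 a).1 h, (h0 b).1 h'] at h3
              subst h3
              simp at he'
    · refine NoLong.range φ hA u w hw ?_
      intro x hx
      cases x with
      | none => exact absurd hx hno
      | some x => exact ⟨x, rfl⟩
  · have key : ∀ x, A0.Reachable x none := by
      intro x
      cases x with
      | none => exact SimpleGraph.Reachable.refl _
      | some a =>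
        have h3 : A.Reachable a (rep a) := (SimpleGraph.ConnectedComponent.eq.1 (hrep a)).symm
        have h4 : A0.Reachable (some a) (some (rep a)) := h3.map φ.toHom
        have h5 : A0.Adj none (some (rep a)) := (h0 _).2 (hrr _ _ h3).symm
        exact h4.trans h5.symm.reachable
    intro a _ b _
    obtain ⟨w⟩ := (key a).trans (key b).symm
    exact ⟨w, fun _ _ => trivial⟩

theorem main {n : ℕ} (hn : 3 ≤ n) :
    GraphWAP (fun _ G => ∀ m : ℕ, n ≤ m → ¬ Contains (SimpleGraph.cycleGraph m) G) := by
  intro α _ A hA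
  simp only [noLong_iff hn] at hA ⊢
  obtain ⟨A0, i0, hA0, hc⟩ := cone A hA
  obtain ⟨β, _, A', i, hA', hmany⟩ := exists_max hn A0 hA0 hc
  refine ⟨β, inferInstance, A', i.comp i0, hA', ?_⟩
  intro γ _ B hB δ _ C hC f g
  obtain ⟨ε, _, D, hD, f', g', h⟩ := pushout hn f g hB hC (hmany δ C hC g)
  exact ⟨ε, inferInstance, D, hD, f', g', fun a => h _⟩


end LCF

/-- For `n ≥ 3`, the class of all finite graphs containing no cycle of length at least `n`
has the weak amalgamation property. -/
theorem longCycleFree_wap (n : ℕ) (hn : 3 ≤ n) :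
    GraphWAP (fun _ G => ∀ m : ℕ, n ≤ m → ¬ Contains (SimpleGraph.cycleGraph m) G) := by
  exact LCF.main hn
end

section
/- Fix n ≥ 1 and let F = {C_3, C_5, ..., C_{2n+1}} be the family of all odd cycles of length at most 2n+1. The class K(F) of all finite graphs containing no odd cycle of length at most 2n+1 (equivalently, admitting no injective graph homomorphism from any C_{2k+1} with 1 ≤ k ≤ n) has the weak amalgamation property. -/
open SimpleGraph

/-- There is a walk of length `l` from `u` to `v`. -/
def HasWalk {V : Type} (G : SimpleGraph V) (u v : V) (l : ℕ) : Prop :=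
  ∃ p : G.Walk u v, p.length = l

lemma HasWalk.trans {V : Type} {G : SimpleGraph V} {u v w : V} {l m : ℕ}
    (h : HasWalk G u v l) (h' : HasWalk G v w m) : HasWalk G u w (l + m) := by
  obtain ⟨p, rfl⟩ := h
  obtain ⟨q, rfl⟩ := h'
  exact ⟨p.append q, by simp⟩

lemma HasWalk.of_adj {V : Type} {G : SimpleGraph V} {u v : V} (h : G.Adj u v) :
    HasWalk G u v 1 := ⟨h.toWalk, by simp⟩

lemma HasWalk.refl {V : Type} (G : SimpleGraph V) (u : V) : HasWalk G u u 0 :=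
  ⟨Walk.nil, rfl⟩

lemma HasWalk.map {V W : Type} {G : SimpleGraph V} {H : SimpleGraph W} (f : G →g H)
    {u v : V} {l : ℕ} (h : HasWalk G u v l) : HasWalk H (f u) (f v) l := by
  obtain ⟨p, rfl⟩ := h
  exact ⟨p.map f, by simp⟩

/-- A closed walk of odd length yields an odd cycle of at most that length. -/
lemma exists_cycle_of_odd_walk {V : Type} (G : SimpleGraph V) (k : ℕ) :
    ∀ v : V, HasWalk G v v (2 * k + 1) →
      ∃ k', 1 ≤ k' ∧ k' ≤ k ∧ Contains (cycleGraph (2 * k' + 1)) G := by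
  induction k using Nat.strong_induction_on with
  | _ k ih =>
    rintro v ⟨p, hp⟩
    have hk : 1 ≤ k := by
      rcases Nat.eq_zero_or_pos k with rfl | h
      · exact absurd (Walk.adj_of_length_eq_one (by simpa using hp)) (G.irrefl)
      · exact h
    by_cases hinj : ∀ i j, i < j → j < 2 * k + 1 → p.getVert i ≠ p.getVert j
    · refine ⟨k, hk, le_rfl, ?_⟩
      have hstep : ∀ a b : Fin (2 * k + 1), (b - a).val = 1 →
          G.Adj (p.getVert a) (p.getVert b) := by
        intro a b hab
        have ha := a.isLt
        have hb := b.isLt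
        have hs := p.adj_getVert_succ (i := a) (by omega)
        rw [Fin.val_sub] at hab
        by_cases hle : (a : ℕ) ≤ b
        · have : (2 * k + 1 - (a : ℕ) + b) = (b - a : ℕ) + (2 * k + 1) := by omega
          rw [this, Nat.add_mod_right, Nat.mod_eq_of_lt (by omega)] at hab
          have : (b : ℕ) = a + 1 := by omega
          rw [this]; exact hs
        · rw [Nat.mod_eq_of_lt (by omega)] at hab
          have h1 : (a : ℕ) + 1 = p.length := by omega
          have h2 : (b : ℕ) = 0 := by omega
          rw [h1, Walk.getVert_length] at hs
          rw [h2, Walk.getVert_zero]; exact hs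
      refine ⟨⟨fun i => p.getVert i, ?_⟩, ?_⟩
      · intro a b hab
        rw [cycleGraph_adj'] at hab
        rcases hab with h | h
        · exact (hstep _ _ h).symm
        · exact hstep _ _ h
      · intro a b hab
        by_contra hne
        rcases lt_or_gt_of_ne (fun h => hne (Fin.ext h) : (a : ℕ) ≠ b) with h | h
        · exact hinj _ _ h b.isLt hab
        · exact hinj _ _ h a.isLt hab.symm
    · push Not at hinj
      obtain ⟨i, j, hij, hj, heq⟩ := hinj
      have w1 : HasWalk G (p.getVert i) (p.getVert j) (j - i) := by
        have : (p.drop i).getVert (j - i) = p.getVert j := by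
          rw [Walk.drop_getVert]; congr 1; omega
        rw [← this]
        exact ⟨(p.drop i).take (j - i), by
          rw [Walk.take_length, Walk.drop_length]; omega⟩
      have w2 : HasWalk G v (p.getVert i) i := ⟨p.take i, by rw [Walk.take_length]; omega⟩
      have w3 : HasWalk G (p.getVert j) v (2 * k + 1 - j) :=
        ⟨p.drop j, by rw [Walk.drop_length]; omega⟩
      rw [← heq] at w1 w3
      have w4 := w2.trans w3
      rcases Nat.even_or_odd' (j - i) with ⟨c, hc | hc⟩
      · have : i + (2 * k + 1 - j) = 2 * (k - c) + 1 := by omega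
        rw [this] at w4
        obtain ⟨k', h1, h2, h3⟩ := ih (k - c) (by omega) v w4
        exact ⟨k', h1, by omega, h3⟩
      · rw [hc] at w1
        obtain ⟨k', h1, h2, h3⟩ := ih c (by omega) _ w1
        exact ⟨k', h1, by omega, h3⟩

open Fin.NatCast Fin.CommRing in
lemma cycleGraph_hasWalk (k : ℕ) (hk : 1 ≤ k) (v : Fin (2 * k + 1)) :
    HasWalk (cycleGraph (2 * k + 1)) v v (2 * k + 1) := by
  have h : ∀ m : ℕ, HasWalk (cycleGraph (2 * k + 1)) v (v + (m : Fin (2 * k + 1))) m := by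
    intro m
    induction m with
    | zero => simpa using HasWalk.refl _ v
    | succ m ih =>
      refine ih.trans (HasWalk.of_adj ?_)
      rw [cycleGraph_adj']
      right
      have : v + ((m + 1 : ℕ) : Fin (2 * k + 1)) - (v + (m : Fin (2 * k + 1))) = 1 := by
        push_cast; ring
      rw [this]
      rw [Fin.val_one', Nat.mod_eq_of_lt (by omega)]
  simpa using h (2 * k + 1)

/-- Free amalgamation when short walks between points of `α` agree. -/
lemma free_amalgam (n : ℕ) {α γ δ : Type} [Fintype γ] [Fintype δ]
    {A : SimpleGraph α} {B : SimpleGraph γ} {C : SimpleGraph δ}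
    (hB : ∀ k : ℕ, 1 ≤ k → k ≤ n → ¬ Contains (cycleGraph (2 * k + 1)) B)
    (hC : ∀ k : ℕ, 1 ≤ k → k ≤ n → ¬ Contains (cycleGraph (2 * k + 1)) C)
    (f : A ↪g B) (g : A ↪g C)
    (hfg : ∀ a a' l, l ≤ 2 * n + 1 → HasWalk C (g a) (g a') l → HasWalk B (f a) (f a') l) :
    ∃ (ε : Type) (_ : Fintype ε) (D : SimpleGraph ε),
      (∀ k : ℕ, 1 ≤ k → k ≤ n → ¬ Contains (cycleGraph (2 * k + 1)) D) ∧
      ∃ (f' : B ↪g D) (g' : C ↪g D), ∀ a : α, f' (f a) = g' (g a) := by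
  classical
  let ε := γ ⊕ {c : δ // c ∉ Set.range g}
  let φ : δ → ε := fun c =>
    if h : c ∈ Set.range g then Sum.inl (f h.choose) else Sum.inr ⟨c, h⟩
  have φg : ∀ a, φ (g a) = Sum.inl (f a) := by
    intro a
    have h : g a ∈ Set.range g := ⟨a, rfl⟩
    have h2 : h.choose = a := g.injective h.choose_spec
    simp only [φ, dif_pos h, h2]
  have φn : ∀ c (h : c ∉ Set.range g), φ c = Sum.inr ⟨c, h⟩ := by
    intro c h
    simp only [φ, dif_neg h]
  have φinl : ∀ c b, φ c = Sum.inl b → ∃ a, c = g a ∧ b = f a := by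
    intro c b h
    by_cases hc : c ∈ Set.range g
    · obtain ⟨a, rfl⟩ := hc
      rw [φg] at h
      exact ⟨a, rfl, (Sum.inl.inj h).symm⟩
    · rw [φn c hc] at h; cases h
  have φinr : ∀ c x, φ c = Sum.inr x → c = x.1 := by
    intro c b h
    by_cases hc : c ∈ Set.range g
    · obtain ⟨a, rfl⟩ := hc
      rw [φg] at h
      cases h
    · rw [φn c hc] at h; cases h; rfl
  have φinj : Function.Injective φ := by
    intro c c' h
    rcases h' : φ c' with b | x
    · obtain ⟨a, rfl, hb⟩ := φinl _ _ h'
      obtain ⟨a', rfl, hb'⟩ := φinl _ _ (h.trans h')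
      rw [f.injective (hb.symm.trans hb')]
    · rw [φinr _ _ h', φinr _ _ (h.trans h')]
  let D : SimpleGraph ε := B.map Sum.inl ⊔ C.map φ
  have Dadj : ∀ x y, D.Adj x y ↔ (∃ b b', B.Adj b b' ∧ x = Sum.inl b ∧ y = Sum.inl b') ∨
      (∃ c c', C.Adj c c' ∧ x = φ c ∧ y = φ c') := by
    intro x y
    have e1 := map_adj (⟨Sum.inl, Sum.inl_injective⟩ : γ ↪ ε) B x y
    have e2 := map_adj (⟨φ, φinj⟩ : δ ↪ ε) C x y
    simp only [Function.Embedding.coeFn_mk] at e1 e2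
    simp only [D, sup_adj, e1, e2, eq_comm]
  refine ⟨ε, inferInstance, D, ?_, ⟨⟨Sum.inl, Sum.inl_injective⟩, ?_⟩, ⟨⟨φ, φinj⟩, ?_⟩, ?_⟩
  · rintro k hk1 hkn ⟨F, hF⟩
    by_cases hex : ∃ v b, F v = Sum.inl b
    · obtain ⟨v, b, hv⟩ := hex
      have hw := (cycleGraph_hasWalk k hk1 v).map F
      rw [hv] at hw
      have key : ∀ l, l ≤ 2 * n + 1 → ∀ y, HasWalk D (Sum.inl b) y l →
          (∃ b', y = Sum.inl b' ∧ HasWalk B b b' l) ∨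
          (∃ a c l1 l2, l = l1 + l2 ∧ y = φ c ∧ HasWalk B b (f a) l1 ∧
            HasWalk C (g a) c l2) := by
        intro l
        induction l with
        | zero =>
          rintro _ y ⟨p, hp⟩
          obtain rfl := Walk.eq_of_length_eq_zero hp
          exact Or.inl ⟨b, rfl, HasWalk.refl _ _⟩
        | succ l ih =>
          rintro hl y ⟨p, hp⟩
          have hadj := p.adj_getVert_succ (i := l) (by omega)
          rw [← hp, Walk.getVert_length] at hadj
          have hpre : HasWalk D (Sum.inl b) (p.getVert l) l :=
            ⟨p.take l, by rw [Walk.take_length]; omega⟩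
          have IH := ih (by omega) _ hpre
          rcases (Dadj _ _).1 hadj with ⟨b1, b2, hb, hx, hy⟩ | ⟨c1, c2, hc, hx, hy⟩
          · left
            refine ⟨b2, hy, ?_⟩
            rcases IH with ⟨b', e, w⟩ | ⟨a, c, l1, l2, hl12, e, w1, w2⟩
            · obtain rfl := Sum.inl.inj (e.symm.trans hx)
              exact w.trans (HasWalk.of_adj hb)
            · obtain ⟨a', rfl, rfl⟩ := φinl _ _ (e.symm.trans hx)
              have := w1.trans (hfg _ _ _ (by omega) w2)
              rw [← hl12] at this
              exact this.trans (HasWalk.of_adj hb)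
          · right
            rcases IH with ⟨b', e, w⟩ | ⟨a, c, l1, l2, hl12, e, w1, w2⟩
            · obtain ⟨a', rfl, rfl⟩ := φinl _ _ (hx.symm.trans e)
              exact ⟨a', c2, l, 1, rfl, hy, w, HasWalk.of_adj hc⟩
            · obtain rfl := φinj (e.symm.trans hx)
              exact ⟨a, c2, l1, l2 + 1, by omega, hy, w1, w2.trans (HasWalk.of_adj hc)⟩
      have hBw : HasWalk B b b (2 * k + 1) := by
        rcases key _ (by omega) _ hw with ⟨b', e, w⟩ | ⟨a, c, l1, l2, hl12, e, w1, w2⟩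
        · obtain rfl := Sum.inl.inj e
          exact w
        · obtain ⟨a', rfl, rfl⟩ := φinl _ _ e.symm
          rw [hl12]
          exact w1.trans (hfg _ _ _ (by omega) w2)
      obtain ⟨k', h1, h2, h3⟩ := exists_cycle_of_odd_walk B k b hBw
      exact hB k' h1 (by omega) h3
    · push Not at hex
      have hr : ∀ v, ∃ c, F v = φ c := by
        intro v
        rcases h : F v with b | x
        · exact absurd h (hex v b)
        · exact ⟨x.1, (φn x.1 x.2).symm⟩
      choose F' hF' using hr
      refine hC k hk1 hkn ⟨⟨F', ?_⟩, ?_⟩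
      · intro u v huv
        rcases (Dadj _ _).1 (F.map_adj huv) with ⟨b1, b2, hb, hx, hy⟩ | ⟨c1, c2, hc, hx, hy⟩
        · exact absurd hx (hex _ _)
        · rw [φinj ((hF' u).symm.trans hx), φinj ((hF' v).symm.trans hy)]
          exact hc
      · intro u v huv
        apply hF
        rw [hF', hF']
        exact congrArg φ huv
  · intro b b'
    change D.Adj (Sum.inl b) (Sum.inl b') ↔ _
    rw [Dadj]
    constructor
    · rintro (⟨b1, b2, hb, hx, hy⟩ | ⟨c1, c2, hc, hx, hy⟩)
      · rw [Sum.inl.inj hx, Sum.inl.inj hy]; exact hb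
      · obtain ⟨a, rfl, rfl⟩ := φinl _ _ hx.symm
        obtain ⟨a', rfl, rfl⟩ := φinl _ _ hy.symm
        exact f.map_adj_iff.2 (g.map_adj_iff.1 hc)
    · intro h
      exact Or.inl ⟨_, _, h, rfl, rfl⟩
  · intro c c'
    change D.Adj (φ c) (φ c') ↔ _
    rw [Dadj]
    constructor
    · rintro (⟨b1, b2, hb, hx, hy⟩ | ⟨c1, c2, hc, hx, hy⟩)
      · obtain ⟨a, rfl, rfl⟩ := φinl _ _ hx
        obtain ⟨a', rfl, rfl⟩ := φinl _ _ hy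
        exact g.map_adj_iff.2 (f.map_adj_iff.1 hb)
      · rw [φinj hx, φinj hy]; exact hc
    · intro h
      exact Or.inr ⟨_, _, h, rfl, rfl⟩
  · intro a
    exact (φg a).symm

/-- The short walks between points of `α` present in an extension. -/
def shortWalks (n : ℕ) {α β : Type} {A : SimpleGraph α} {A' : SimpleGraph β} (i : A ↪g A') :
    Set (α × α × Fin (2 * n + 2)) :=
  {t | HasWalk A' (i t.1) (i t.2.1) t.2.2}

/-- For `n ≥ 1`, the class of all finite graphs containing no odd cycle of length at most
`2n + 1` has the weak amalgamation property. -/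
theorem shortOddCycleFree_wap (n : ℕ) (hn : 1 ≤ n) :
    GraphWAP (fun _ G => ∀ k : ℕ, 1 ≤ k → k ≤ n →
      ¬ Contains (SimpleGraph.cycleGraph (2 * k + 1)) G) := by
  intro α _ A hA
  let S : Set (Set (α × α × Fin (2 * n + 2))) :=
    {T | ∃ (β : Type) (_ : Fintype β) (A' : SimpleGraph β) (i : A ↪g A'),
      (∀ k : ℕ, 1 ≤ k → k ≤ n → ¬ Contains (cycleGraph (2 * k + 1)) A') ∧
      T = shortWalks n i}
  have hS : S.Nonempty := ⟨_, α, inferInstance, A, Embedding.refl, hA, rfl⟩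
  obtain ⟨T, hT⟩ := (Set.toFinite S).exists_maximal hS
  obtain ⟨β, hβ, A', i, hA', rfl⟩ := hT.prop
  refine ⟨β, hβ, A', i, hA', ?_⟩
  intro γ _ B hB δ _ C hC f g
  have hmem : shortWalks n (g.comp i) ∈ S := ⟨δ, inferInstance, C, g.comp i, hC, rfl⟩
  have hle : shortWalks n i ≤ shortWalks n (g.comp i) := by
    intro t ht
    exact HasWalk.map g.toHom ht
  have hge := hT.le_of_ge hmem hle
  refine free_amalgam n hB hC (f.comp i) (g.comp i) ?_
  intro a a' l hl hw
  have h : (a, a', (⟨l, by omega⟩ : Fin (2 * n + 2))) ∈ shortWalks n i := hge hw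
  exact HasWalk.map f.toHom h
end
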